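/- arXiv:math/0611151 — 8 statements merged into one kernel-verified Lean document; each statement's English description precedes it below -/
import Mathlib

section
/- Let p be a prime with p ≡ 1 (mod 3). Then there exist positive integers L and M with 4p = L² + 27M², and the set of all integer pairs (x, y) satisfying 4p = x² + 27y² is exactly the four-element set {(L, M), (L, −M), (−L, M), (−L, −M)}. -/
lemma exists_sq_neg_three (p : ℕ) (hp : p.Prime) (hp3 : p % 3 = 1) :
    ∃ r : ℤ, (p : ℤ) ∣ r ^ 2 + 3 := by
  have := Fact.mk hp
  have : Fact (Nat.Prime 3) := ⟨Nat.prime_three⟩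
  have h3 : 3 ∣ Fintype.card (ZMod p)ˣ := by
    rw [ZMod.card_units]; omega
  obtain ⟨u, hu⟩ := exists_prime_orderOf_dvd_card 3 h3
  have h1 : (u : ZMod p) ≠ 1 := by
    intro h
    have : u = 1 := Units.ext h
    rw [this, orderOf_one] at hu
    omega
  have h2 : (u : ZMod p) ^ 3 = 1 := by
    have := pow_orderOf_eq_one u
    rw [hu] at this
    rw [← Units.val_pow_eq_pow_val, this, Units.val_one]
  have h4 : (u : ZMod p) ^ 2 + u + 1 = 0 := by
    have : ((u : ZMod p) - 1) * ((u : ZMod p) ^ 2 + u + 1) = 0 := by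
      linear_combination h2
    exact (mul_eq_zero.mp this).resolve_left (sub_ne_zero.mpr h1)
  refine ⟨2 * ((u : ZMod p).val : ℤ) + 1, ?_⟩
  rw [← ZMod.intCast_zmod_eq_zero_iff_dvd _ p]
  push_cast
  rw [ZMod.natCast_zmod_val]
  linear_combination 4 * h4

lemma exists_sq_add_three_sq (p : ℕ) (hp : p.Prime) (hp3 : p % 3 = 1) :
    ∃ a b : ℤ, (p : ℤ) = a ^ 2 + 3 * b ^ 2 := by
  obtain ⟨r, hr⟩ := exists_sq_neg_three p hp hp3
  have hpos := hp.pos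
  have hn : 0 < Nat.sqrt p := Nat.sqrt_pos.mpr hpos
  obtain ⟨j, k, hk, hkn, hjk⟩ := Real.exists_int_int_abs_mul_sub_le ((r : ℝ) / p) hn
  set n := Nat.sqrt p with hndef
  have hp0 : (0 : ℝ) < p := by exact_mod_cast hpos
  have hnp : n ^ 2 ≤ p := Nat.sqrt_le' p
  have hnp' : p < (n + 1) ^ 2 := Nat.lt_succ_sqrt' p
  have hA : |((k * r - j * p : ℤ) : ℝ)| * (n + 1) ≤ p := by
    have e : ((k * r - j * p : ℤ) : ℝ) = (k * ((r : ℝ) / p) - j) * p := by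
      push_cast; field_simp
    rw [e, abs_mul, abs_of_pos hp0]
    rw [le_div_iff₀ (by positivity)] at hjk
    nlinarith
  have hA' : |k * r - j * p| * ((n : ℤ) + 1) ≤ p := by exact_mod_cast hA
  set a := k * r - j * p with ha
  have ha2 : a ^ 2 < p := by
    have h1 : (a ^ 2) * ((n : ℤ) + 1) ^ 2 ≤ (p : ℤ) ^ 2 := by
      rw [← sq_abs a, ← mul_pow]
      exact pow_le_pow_left₀ (by positivity) hA' 2
    have h2 : (p : ℤ) < ((n : ℤ) + 1) ^ 2 := by exact_mod_cast hnp'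
    by_contra hc
    push Not at hc
    have : (0 : ℤ) < p := by exact_mod_cast hpos
    nlinarith
  have hk2 : k ^ 2 ≤ p := by
    have h1 : (n : ℤ) ^ 2 ≤ p := by exact_mod_cast hnp
    nlinarith
  obtain ⟨s, hs⟩ := hr
  obtain ⟨m, hm⟩ : (p : ℤ) ∣ a ^ 2 + 3 * k ^ 2 :=
    ⟨k ^ 2 * s - 2 * k * r * j + j ^ 2 * p, by rw [ha]; linear_combination k ^ 2 * hs⟩
  have hpz : (0 : ℤ) < p := by exact_mod_cast hpos
  have hm0 : 0 < m := by
    by_contra hc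
    push Not at hc
    nlinarith [sq_nonneg a]
  have hm4 : m < 4 := by
    by_contra hc
    push Not at hc
    nlinarith
  have hodd : p % 2 = 1 := by
    rcases hp.eq_two_or_odd with h | h
    · subst h; omega
    · exact h
  interval_cases m
  · exact ⟨a, k, by linarith⟩
  · exfalso
    rcases Int.even_or_odd' a with ⟨x, hx | hx⟩ <;> rcases Int.even_or_odd' k with ⟨y, hy | hy⟩ <;>
      rw [hx, hy] at hm <;> ring_nf at hm <;> omega
  · have h3 : (3 : ℤ) ∣ a := by
      apply Int.prime_three.dvd_of_dvd_pow (n := 2)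
      omega
    obtain ⟨c, hc⟩ := h3
    refine ⟨k, c, ?_⟩
    rw [hc] at hm
    linarith

lemma exists_rep (p : ℕ) (hp : p.Prime) (hp3 : p % 3 = 1) :
    ∃ x y : ℤ, (4 * p : ℤ) = x ^ 2 + 27 * y ^ 2 := by
  obtain ⟨a, b, h⟩ := exists_sq_add_three_sq p hp hp3
  have ha : a % 3 ≠ 0 := by
    intro h0
    obtain ⟨c, hc⟩ := Int.dvd_of_emod_eq_zero h0
    rw [hc] at h
    ring_nf at h
    omega
  have : 3 ∣ b ∨ 3 ∣ a - b ∨ 3 ∣ a + b := by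
    have h1 : a % 3 = 1 ∨ a % 3 = 2 := by omega
    have h2 : b % 3 = 0 ∨ b % 3 = 1 ∨ b % 3 = 2 := by omega
    rcases h1 with h1 | h1 <;> rcases h2 with h2 | h2 | h2 <;> omega
  rcases this with ⟨c, hc⟩ | ⟨c, hc⟩ | ⟨c, hc⟩
  · exact ⟨2 * a, 2 * c, by rw [h, hc]; ring⟩
  · exact ⟨a + 3 * b, c, by
      rw [h]; linear_combination (3 * (a - b) + 9 * c) * hc⟩
  · exact ⟨a - 3 * b, c, by
      rw [h]; linear_combination (3 * (a + b) + 9 * c) * hc⟩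

lemma rep_unique (p : ℕ) (hp : p.Prime) (L M x y : ℤ)
    (h : (4 * p : ℤ) = L ^ 2 + 27 * M ^ 2) (h' : (4 * p : ℤ) = x ^ 2 + 27 * y ^ 2) :
    x ^ 2 = L ^ 2 ∧ y ^ 2 = M ^ 2 := by
  have hpz : (0 : ℤ) < p := by exact_mod_cast hp.pos
  have key : (x * M - L * y) * (x * M + L * y) = p * (4 * (M ^ 2 - y ^ 2)) := by
    linear_combination y ^ 2 * h - M ^ 2 * h'
  have small : ∀ u k : ℤ, (16 * p ^ 2 : ℤ) = u ^ 2 + 27 * (p * k) ^ 2 → k = 0 := by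
    intro u k hu
    by_contra hk
    have h1 : 0 < k ^ 2 := by positivity
    have h2 : (0 : ℤ) < (p : ℤ) ^ 2 := by positivity
    nlinarith [sq_nonneg u]
  have hz : (x * M - L * y) * (x * M + L * y) = 0 := by
    rcases (Nat.prime_iff_prime_int.mp hp).dvd_or_dvd ⟨_, key⟩ with ⟨k, hk⟩ | ⟨k, hk⟩
    · have := small (x * L + 27 * y * M) k (by
        rw [← hk]; linear_combination (4 * p : ℤ) * h + (L ^ 2 + 27 * M ^ 2) * h')
      rw [hk, this]; ring
    · have := small (x * L - 27 * y * M) k (by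
        rw [← hk]; linear_combination (4 * p : ℤ) * h + (L ^ 2 + 27 * M ^ 2) * h')
      rw [hk, this]; ring
  rw [hz] at key
  have hy : y ^ 2 = M ^ 2 := by
    rcases mul_eq_zero.mp key.symm with h0 | h0 <;> omega
  exact ⟨by linarith, hy⟩

/-- For a prime `p ≡ 1 (mod 3)` there are positive integers `L, M` with `4p = L² + 27M²`,
and the representations of `4p` in this form are exactly `(±L, ±M)`. -/
theorem four_p_representations (p : ℕ) (hp : p.Prime) (hp3 : p % 3 = 1) :
    ∃ L M : ℤ, 0 < L ∧ 0 < M ∧ (4 * p : ℤ) = L ^ 2 + 27 * M ^ 2 ∧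
      {xy : ℤ × ℤ | (4 * p : ℤ) = xy.1 ^ 2 + 27 * xy.2 ^ 2} =
        {(L, M), (L, -M), (-L, M), (-L, -M)} := by
  obtain ⟨x, y, h⟩ := exists_rep p hp hp3
  have hx : x ≠ 0 := by
    rintro rfl
    ring_nf at h
    omega
  have hy : y ≠ 0 := by
    rintro rfl
    have h2 : (2 : ℤ) ∣ x := by
      apply Int.prime_two.dvd_of_dvd_pow (n := 2)
      omega
    obtain ⟨c, rfl⟩ := h2
    have hc : (p : ℤ) = c * c := by linarith
    exact (Nat.prime_iff_prime_int.mp hp).irreducible.not_isSquare ⟨c, hc⟩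
  have h0 : (4 * p : ℤ) = |x| ^ 2 + 27 * |y| ^ 2 := by rw [sq_abs, sq_abs]; exact h
  refine ⟨|x|, |y|, abs_pos.mpr hx, abs_pos.mpr hy, h0, ?_⟩
  generalize |x| = L at *
  generalize |y| = M at *
  ext ⟨u, v⟩
  simp only [Set.mem_ofPred_eq, Set.mem_insert_iff, Set.mem_singleton_iff, Prod.mk.injEq]
  constructor
  · intro h'
    obtain ⟨h1, h2⟩ := rep_unique p hp L M u v h0 h'
    rcases sq_eq_sq_iff_eq_or_eq_neg.mp h1 with h1 | h1 <;>
      rcases sq_eq_sq_iff_eq_or_eq_neg.mp h2 with h2 | h2 <;> simp [h1, h2]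
  · rintro (⟨rfl, rfl⟩ | ⟨rfl, rfl⟩ | ⟨rfl, rfl⟩ | ⟨rfl, rfl⟩) <;> rw [h0] <;> ring
end

section
/- Let p be a prime with p ≡ 1 (mod 3). Then 2 is a cubic residue modulo p if and only if there exist integers A and B with p = A² + 27B². -/
open QuadraticAlgebra

/-- The ring of Eisenstein integers. -/
abbrev Eis : Type := QuadraticAlgebra ℤ (-1) (-1)

lemma eis_norm (z : Eis) : norm z = z.re ^ 2 - z.re * z.im + z.im ^ 2 := by
  rw [norm_def]; ring

lemma eis_norm_eq_zero {z : Eis} (h : norm z = 0) : z = 0 := by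
  rw [eis_norm] at h
  have h1 : z.im = 0 := by
    have : z.im ^ 2 = 0 := by nlinarith [sq_nonneg (2 * z.re - z.im), sq_nonneg z.im]
    simpa using this
  have h2 : z.re = 0 := by simpa [h1] using h
  ext <;> simp [h1, h2]

instance eisNoZeroDivisors : NoZeroDivisors Eis where
  eq_zero_or_eq_zero_of_mul_eq_zero {z w} h := by
    have : norm z * norm w = 0 := by rw [← map_mul, h, QuadraticAlgebra.norm_zero]
    rcases mul_eq_zero.mp this with h | h
    · exact Or.inl (eis_norm_eq_zero h)
    · exact Or.inr (eis_norm_eq_zero h)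

instance eisIsDomain : IsDomain Eis := NoZeroDivisors.to_isDomain _

lemma eis_primitive : IsPrimitiveRoot (omega : Eis) 3 := by
  refine (IsPrimitiveRoot.orderOf (omega : Eis)) |> fun h => ?_
  have : orderOf (omega : Eis) = 3 := by
    have : Fact (Nat.Prime 3) := ⟨by norm_num⟩
    refine orderOf_eq_prime ?_ ?_
    · ext <;> simp [pow_succ]
    · intro h
      have := congrArg QuadraticAlgebra.im h
      simp at this
  rwa [this] at h

lemma eis_norm_of_cube {z : Eis} (h : z ^ 3 = 1) : norm z = 1 := by
  have h1 : norm z ^ 3 = 1 := by rw [← map_pow, h, QuadraticAlgebra.norm_one]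
  have h2 : (norm z - 1) * (norm z ^ 2 + norm z + 1) = 0 := by linear_combination h1
  rcases mul_eq_zero.mp h2 with h | h
  · linarith
  · nlinarith [sq_nonneg (2 * norm z + 1)]

lemma eis_mul_star_of_cube {z : Eis} (h : z ^ 3 = 1) : z * star z = 1 := by
  rw [← algebraMap_norm_eq_mul_star, eis_norm_of_cube h, map_one]

lemma eis_eq_one {z : Eis} (h : z ^ 3 = 1) (h2 : Even z.im) : z = 1 := by
  have hn := eis_norm_of_cube h
  rw [eis_norm] at hn
  obtain ⟨k, hk⟩ := h2
  have hk0 : k = 0 := by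
    have : k ^ 2 < 1 := by rw [hk] at hn; nlinarith [sq_nonneg (z.re - k)]
    nlinarith [sq_nonneg k, pow_eq_zero_iff (two_ne_zero) |>.mp (le_antisymm (by linarith) (sq_nonneg k))]
  have him : z.im = 0 := by omega
  have hz : z = ((z.re : ℤ) : Eis) := by ext <;> simp [him]
  have h3 : z.re ^ 3 = 1 := by
    rw [hz] at h
    exact_mod_cast h
  have h4 : z.re ^ 2 = 1 := by rw [him] at hn; linarith
  have h5 : z.re = 1 := by linear_combination h3 - z.re * h4
  rw [hz, h5]; simp

section field

variable {p : ℕ} [Fact p.Prime]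

lemma inv_eq_star (χ : MulChar (ZMod p) Eis) (h : χ ^ 3 = 1) :
    χ⁻¹ = χ.ringHomComp (starRingEnd Eis) := by
  rw [inv_eq_iff_mul_eq_one]
  ext1 x
  have hx : χ x ^ 3 = 1 := by rw [← MulChar.pow_apply_coe, h, MulChar.one_apply_coe]
  rw [MulChar.mul_apply, MulChar.ringHomComp_apply, MulChar.one_apply_coe]
  exact eis_mul_star_of_cube hx

lemma jacobi_norm (χ : MulChar (ZMod p) Eis) (h : orderOf χ = 3) :
    norm (jacobiSum χ χ) = p := by
  have h3 : χ ^ 3 = 1 := by rw [← h]; exact pow_orderOf_eq_one χ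
  have h1 : χ ≠ 1 := by rintro rfl; simp at h
  have h2 : χ * χ ≠ 1 := by
    intro h2
    apply h1
    calc χ = χ ^ 3 * (χ * χ)⁻¹ := by group
      _ = 1 := by rw [h3, h2]; simp
  let f : Eis →+* FractionRing Eis := algebraMap _ _
  have hf : Function.Injective f := IsFractionRing.injective _ _
  have key := jacobiSum_mul_jacobiSum_inv (F := ZMod p) (F' := FractionRing Eis)
    (χ := χ.ringHomComp f) (φ := χ.ringHomComp f) (by
      have : CharZero (FractionRing Eis) := charZero_of_injective_algebraMap hf
      rw [ringChar.eq_zero, ZMod.ringChar_zmod_n]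
      exact (Fact.out : p.Prime).ne_zero.symm)
    ((MulChar.ringHomComp_ne_one_iff hf).mpr h1) ((MulChar.ringHomComp_ne_one_iff hf).mpr h1)
    (by rw [← MulChar.ringHomComp_mul]; exact (MulChar.ringHomComp_ne_one_iff hf).mpr h2)
  rw [MulChar.ringHomComp_inv χ f, jacobiSum_ringHomComp, jacobiSum_ringHomComp, inv_eq_star χ h3,
    jacobiSum_ringHomComp, ← map_mul, ZMod.card, ← map_natCast f] at key
  have key2 := hf key
  rw [starRingEnd_apply, ← algebraMap_norm_eq_mul_star] at key2
  have := congrArg QuadraticAlgebra.re key2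
  simpa using this

lemma jacobi_im_three (hp3 : p % 3 = 1) (χ : MulChar (ZMod p) Eis) (h : χ ^ 3 = 1) :
    (3 : ℤ) ∣ (jacobiSum χ χ).im := by
  obtain ⟨z, -, hz⟩ := exists_jacobiSum_eq_neg_one_add (n := 3) (by norm_num) h h
    (by rw [ZMod.card]; omega) eis_primitive
  rw [hz]
  refine ⟨z.im - z.re, ?_⟩
  simp [pow_succ]
  ring

lemma jacobi_im_two (h20 : (2 : ZMod p) ≠ 0) (χ : MulChar (ZMod p) Eis) (h : χ ^ 3 = 1) :
    (((jacobiSum χ χ).im : ℤ) : ZMod 2) = ((χ 2).im : ℤ) := by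
  let g : Eis →+ ZMod 2 := (Int.castAddHom (ZMod 2)).comp
    (QuadraticAlgebra.imₗ (-1 : ℤ) (-1)).toAddMonoidHom
  have hg (z : Eis) : g z = ((z.im : ℤ) : ZMod 2) := rfl
  rw [← hg, ← hg, jacobiSum, map_sum]
  rw [← Finset.add_sum_erase _ _ (Finset.mem_univ (2⁻¹ : ZMod p))]
  have hs : ∑ x ∈ Finset.univ.erase (2⁻¹ : ZMod p), g (χ x * χ (1 - x)) = 0 := by
    refine Finset.sum_involution (fun x _ => 1 - x) ?_ ?_ ?_ ?_
    · intro x _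
      rw [sub_sub_cancel, mul_comm (χ (1 - x))]
      exact CharTwo.add_self_eq_zero _
    · intro x hx _ h
      apply (Finset.mem_erase.mp hx).1
      refine eq_inv_of_mul_eq_one_left ?_
      linear_combination -h
    · intro x hx
      refine Finset.mem_erase.mpr ⟨fun h => (Finset.mem_erase.mp hx).1 ?_, Finset.mem_univ _⟩
      have : x = 1 - 2⁻¹ := by linear_combination -h
      rw [this]; field_simp; norm_num
    · intro x _; exact sub_sub_cancel _ _
  rw [hs, add_zero]
  have h1 : (1 - 2⁻¹ : ZMod p) = 2⁻¹ := by field_simp; norm_num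
  rw [h1]
  congr 1
  have hx : χ 2 ^ 3 = 1 := by
    rw [← MulChar.pow_apply' _ (by norm_num), h, MulChar.one_apply (IsUnit.mk0 _ h20)]
  have hy : χ 2 * χ 2⁻¹ = 1 := by rw [← map_mul, mul_inv_cancel₀ h20, map_one]
  calc χ 2⁻¹ * χ 2⁻¹ = χ 2 ^ 3 * (χ 2⁻¹ * χ 2⁻¹) := by rw [hx, one_mul]
    _ = χ 2 * (χ 2 * χ 2⁻¹) ^ 2 := by ring
    _ = χ 2 := by rw [hy]; ring

lemma cube_of_char_one (χ : MulChar (ZMod p) Eis) (h : orderOf χ = 3) (u : (ZMod p)ˣ)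
    (hu : χ u = 1) : ∃ v : (ZMod p)ˣ, v ^ 3 = u := by
  have h3 : χ ^ 3 = 1 := by rw [← h]; exact pow_orderOf_eq_one χ
  have h1 : χ ≠ 1 := by rintro rfl; simp at h
  obtain ⟨g, hg⟩ := IsCyclic.exists_generator (α := (ZMod p)ˣ)
  have hg1 : χ g ≠ 1 := fun h' => h1 ((MulChar.eq_iff hg χ 1).mpr (by rw [h', MulChar.one_apply_coe]))
  have hg3 : χ g ^ 3 = 1 := by rw [← MulChar.pow_apply_coe, h3, MulChar.one_apply_coe]
  have : Fact (Nat.Prime 3) := ⟨by norm_num⟩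
  have ho := orderOf_eq_prime hg3 hg1
  obtain ⟨k, rfl⟩ := mem_powers_iff_mem_zpowers.mpr (hg u)
  have hk : χ g ^ k = 1 := by rw [← map_pow]; simpa using hu
  obtain ⟨m, rfl⟩ := ho ▸ orderOf_dvd_of_pow_eq_one hk
  exact ⟨g ^ m, by simp only [← pow_mul, mul_comm]⟩

end field

lemma repr_unique {p : ℕ} (hp : p.Prime) {L M L' M' : ℤ} (h : 4 * (p : ℤ) = L ^ 2 + 27 * M ^ 2)
    (h' : 4 * (p : ℤ) = L' ^ 2 + 27 * M' ^ 2) : M ^ 2 = M' ^ 2 := by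
  have hpz : Prime (p : ℤ) := Nat.prime_iff_prime_int.mp hp
  have hp0 : (0 : ℤ) < p := by exact_mod_cast hp.pos
  have hd : (p : ℤ) ∣ (L * M' - L' * M) * (L * M' + L' * M) :=
    ⟨4 * (M' ^ 2 - M ^ 2), by linear_combination (-M' ^ 2) * h + M ^ 2 * h'⟩
  have aux : ∀ L' : ℤ, 4 * (p : ℤ) = L' ^ 2 + 27 * M' ^ 2 → (p : ℤ) ∣ L * M' - L' * M →
      M ^ 2 = M' ^ 2 := by
    rintro L' h' ⟨k, hk⟩
    have e : (L * L' + 27 * M * M') ^ 2 + 27 * (p * k) ^ 2 = 16 * (p : ℤ) ^ 2 := by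
      rw [← hk]
      linear_combination (-(L' ^ 2 + 27 * M' ^ 2)) * h - 4 * p * h'
    have hk0 : k ^ 2 < 1 := by
      by_contra hc
      push Not at hc
      have : (p : ℤ) ^ 2 * 1 ≤ p ^ 2 * k ^ 2 := by gcongr
      nlinarith [sq_nonneg (L * L' + 27 * M * M'), pow_pos hp0 2]
    have hk00 : k = 0 := by
      have : k ^ 2 = 0 := le_antisymm (by omega) (sq_nonneg k)
      simpa using this
    rw [hk00, mul_zero] at hk
    have : 4 * (p : ℤ) * (M ^ 2 - M' ^ 2) = 0 := by
      linear_combination M ^ 2 * h' - M' ^ 2 * h - (L * M' + L' * M) * hk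
    rcases mul_eq_zero.mp this with h | h
    · omega
    · linarith
  rcases hpz.dvd_or_dvd hd with hd | hd
  · exact aux L' h' hd
  · exact aux (-L') (by rw [h']; ring) (by simpa using hd)

/-- Euler's conjecture (proved by Gauss): for a prime `p ≡ 1 (mod 3)`,
`2` is a cubic residue mod `p` iff `p = A² + 27B²` for some integers `A, B`. -/
theorem two_cubic_residue_iff (p : ℕ) (hp : p.Prime) (hp3 : p % 3 = 1) :
    (∃ x : ℤ, x ^ 3 ≡ 2 [ZMOD (p : ℤ)]) ↔ ∃ A B : ℤ, (p : ℤ) = A ^ 2 + 27 * B ^ 2 := by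
  have : Fact p.Prime := ⟨hp⟩
  have hp2 : p ≠ 2 := by rintro rfl; omega
  have h20 : (2 : ZMod p) ≠ 0 := by
    intro h
    have h' : ((2 : ℕ) : ZMod p) = 0 := by exact_mod_cast h
    rw [ZMod.natCast_eq_zero_iff] at h'
    exact hp2 ((Nat.prime_dvd_prime_iff_eq hp Nat.prime_two).mp h')
  obtain ⟨χ, hχ⟩ := MulChar.exists_mulChar_orderOf (ZMod p) (n := 3)
    (by rw [ZMod.card]; omega) eis_primitive
  have h3 : χ ^ 3 = 1 := by rw [← hχ]; exact pow_orderOf_eq_one χ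
  have hx : χ 2 ^ 3 = 1 := by
    rw [← MulChar.pow_apply' _ (by norm_num), h3, MulChar.one_apply (IsUnit.mk0 _ h20)]
  have hn := jacobi_norm χ hχ
  have hi2 := jacobi_im_two h20 χ h3
  obtain ⟨b, hb⟩ := jacobi_im_three hp3 χ h3
  rw [eis_norm, hb] at hn
  rw [hb] at hi2
  generalize (jacobiSum χ χ).re = a at hn
  constructor
  · rintro ⟨x, hx'⟩
    have e : (x : ZMod p) ^ 3 = 2 := by
      have := (ZMod.intCast_eq_intCast_iff _ _ _).mpr hx'
      exact_mod_cast this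
    have hx0 : (x : ZMod p) ≠ 0 := by
      intro h0; rw [h0] at e; exact h20 (by rw [← e]; simp)
    have h1 : χ 2 = 1 := by
      rw [← e, map_pow, ← MulChar.pow_apply' _ (by norm_num), h3,
        MulChar.one_apply (IsUnit.mk0 _ hx0)]
    rw [h1, im_one, ZMod.intCast_eq_intCast_iff_dvd_sub] at hi2
    obtain ⟨c, hc⟩ : ∃ c, b = 2 * c := ⟨b / 2, by push_cast at hi2; omega⟩
    exact ⟨a - 3 * c, c, by rw [← hn, hc]; ring⟩
  · rintro ⟨A, B, hAB⟩
    have hu := repr_unique hp (L := 2 * A) (M := 2 * B) (L' := 2 * a - 3 * b) (M' := b)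
      (by rw [hAB]; ring) (by rw [← hn]; ring)
    have hbe : Even b := by
      have : Even (b ^ 2) := ⟨2 * B ^ 2, by rw [← hu]; ring⟩
      exact (Int.even_pow.mp this).1
    have hev : Even (χ 2).im := by
      rw [ZMod.intCast_eq_intCast_iff_dvd_sub] at hi2
      rw [Int.even_iff] at *
      push_cast at hi2
      omega
    have h1 := eis_eq_one hx hev
    obtain ⟨v, hv⟩ := cube_of_char_one χ hχ (Units.mk0 2 h20) (by simpa using h1)
    refine ⟨((v : ZMod p).val : ℤ), ?_⟩
    rw [← ZMod.intCast_eq_intCast_iff]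
    have := congrArg Units.val hv
    simpa using this
end

section
/- Let p be a prime with p ≡ 1 (mod 3) and let L, M be integers with 4p = L² + 27M². Then p does not divide 6M, and the element r := −(L + 3M)·(6M)⁻¹ of ℤ/pℤ satisfies r² + r + 1 = 0; in particular r is a primitive cube root of unity modulo p. -/
/-- For a prime `p ≡ 1 (mod 3)` with `4p = L² + 27M²`, `p ∤ 6M`, and
`r := −(L+3M)·(6M)⁻¹` in `ZMod p` satisfies `r² + r + 1 = 0`; in particular
`r` is a primitive cube root of unity modulo `p`. -/
theorem primitive_cube_root_formula (p : ℕ) (hp : p.Prime) (hp3 : p % 3 = 1)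
    (L M : ℤ) (h : (4 * p : ℤ) = L ^ 2 + 27 * M ^ 2) :
    ¬ ((p : ℤ) ∣ 6 * M) ∧
      ∀ r : ZMod p, r = ((-(L + 3 * M) : ℤ) : ZMod p) * (((6 * M : ℤ) : ZMod p))⁻¹ →
        r ^ 2 + r + 1 = 0 ∧ r ^ 3 = 1 ∧ r ≠ 1 := by
  haveI : Fact p.Prime := ⟨hp⟩
  have hP : Prime (p : ℤ) := Nat.prime_iff_prime_int.mp hp
  have h2 := hp.two_le
  have h7 : 7 ≤ p := by
    by_contra hlt
    have : p = 4 := by omega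
    subst this
    exact absurd hp (by norm_num)
  have h6 : ¬ ((p : ℤ) ∣ 6 * M) := by
    intro hd
    have hM : (p : ℤ) ∣ M := by
      rcases hP.dvd_or_dvd hd with h6 | hM
      · have := Int.le_of_dvd (by norm_num) h6
        omega
      · exact hM
    have hL : (p : ℤ) ∣ L := by
      apply hP.dvd_of_dvd_pow (n := 2)
      have e : L ^ 2 = 4 * p - 27 * M ^ 2 := by linarith
      rw [e]
      exact dvd_sub (dvd_mul_left _ _) ((dvd_pow hM two_ne_zero).mul_left _)
    obtain ⟨m, rfl⟩ := hM
    obtain ⟨l, rfl⟩ := hL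
    have h4 : (p : ℤ) ∣ 4 := by
      refine ⟨l ^ 2 + 27 * m ^ 2, ?_⟩
      apply mul_right_cancel₀ hP.ne_zero
      linear_combination h
    have := Int.le_of_dvd (by norm_num) h4
    omega
  refine ⟨h6, ?_⟩
  intro r hr
  have hne : ((6 * M : ℤ) : ZMod p) ≠ 0 := by
    rwa [Ne, ZMod.intCast_zmod_eq_zero_iff_dvd]
  have hz : (L : ZMod p) ^ 2 + 27 * (M : ZMod p) ^ 2 = 0 := by
    have := congrArg (Int.cast : ℤ → ZMod p) h
    push_cast at this
    rw [← this]
    simp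
  have hrm : r * ((6 * M : ℤ) : ZMod p) = ((-(L + 3 * M) : ℤ) : ZMod p) := by
    rw [hr, mul_assoc, inv_mul_cancel₀ hne, mul_one]
  have hq : r ^ 2 + r + 1 = 0 := by
    have : (r ^ 2 + r + 1) * ((6 * M : ℤ) : ZMod p) ^ 2 = 0 := by
      push_cast at hrm ⊢
      linear_combination (r * (6 * M) - (L + 3 * M) + 6 * M) * hrm + hz
    exact (mul_eq_zero.mp this).resolve_right (pow_ne_zero _ hne)
  refine ⟨hq, by linear_combination (r - 1) * hq, ?_⟩
  rintro rfl
  have h3 : ((3 : ℕ) : ZMod p) = 0 := by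
    push_cast
    linear_combination hq
  rw [ZMod.natCast_eq_zero_iff] at h3
  have := Nat.le_of_dvd (by norm_num) h3
  omega
end

section
/- Let p be a prime with p ≡ 1 (mod 3) and let L, M be integers with 4p = L² + 27M². Then 2^{(p−1)/3} ≡ −(L + 3M)·(6M)⁻¹ (mod p) if and only if L ≡ M (mod 4). -/
/-- indicator of `y ^ k = s` away from `0` -/
noncomputable def cubInd (p k : ℕ) (s y : ZMod p) : ℤ := by
  classical exact if y ≠ 0 ∧ y ^ k = s then 1 else 0

/-- count of `x` with `(x(1-x))^k = s` -/
noncomputable def cubCount (p k : ℕ) [Fact p.Prime] (s : ZMod p) : ℤ :=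
  ∑ x : ZMod p, cubInd p k s (x * (1 - x))

lemma cub_cases {F : Type*} [Field F] {r t : F} (hr : r ^ 2 + r + 1 = 0) (ht : t ^ 3 = 1) :
    t = 1 ∨ t = r ∨ t = r ^ 2 := by
  have h3 : (t - 1) * ((t - r) * (t - r ^ 2)) = 0 := by
    linear_combination ht + (t ^ 2 * (-1) + t + t * (r - 1) - (r - 1)) * hr
  rcases mul_eq_zero.1 h3 with h | h
  · left; exact sub_eq_zero.1 h
  rcases mul_eq_zero.1 h with h | h
  · right; left; exact sub_eq_zero.1 h
  · right; right; exact sub_eq_zero.1 h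

lemma cub_sum_zero (p k : ℕ) [Fact p.Prime] (hk : p = 3 * k + 1) (hk0 : 0 < k) :
    ∑ x : ZMod p, (x * (1 - x)) ^ k = 0 := by
  let P : Polynomial (ZMod p) := (Polynomial.X * (1 - Polynomial.X)) ^ k
  have hP : ∀ x : ZMod p, (x * (1 - x)) ^ k = P.eval x := by intro x; simp [P]
  have hdeg : P.natDegree < 2 * k + 1 := by
    have : P.natDegree ≤ k * 2 := by
      refine Polynomial.natDegree_pow_le_of_le k ?_
      compute_degree
    omega
  simp_rw [hP, Polynomial.eval_eq_sum_range' hdeg]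
  rw [Finset.sum_comm]
  refine Finset.sum_eq_zero fun i hi => ?_
  rw [← Finset.mul_sum, FiniteField.sum_pow_lt_card_sub_one, mul_zero]
  rw [ZMod.card]
  have := Finset.mem_range.1 hi
  omega

lemma cub_parity (p k : ℕ) [Fact p.Prime] (hp2 : p ≠ 2) (s : ZMod p) :
    (2 : ℤ) ∣ cubCount p k s - cubInd p k s (2⁻¹ * 2⁻¹) := by
  classical
  have h2 : (2 : ZMod p) ≠ 0 := by
    intro h
    have : ((2 : ℕ) : ZMod p) = 0 := by exact_mod_cast h
    rw [ZMod.natCast_eq_zero_iff] at this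
    exact hp2 ((Nat.prime_dvd_prime_iff_eq Fact.out Nat.prime_two).1 this)
  have hh : (1 : ZMod p) - 2⁻¹ = 2⁻¹ := by field_simp; ring
  unfold cubCount
  rw [← Finset.add_sum_erase _ _ (Finset.mem_univ (2⁻¹ : ZMod p)), hh, add_sub_cancel_left]
  have := (ZMod.intCast_zmod_eq_zero_iff_dvd
    (∑ x ∈ Finset.univ.erase (2⁻¹ : ZMod p), cubInd p k s (x * (1 - x))) 2).1 ?_
  · exact_mod_cast this
  push_cast
  refine Finset.sum_involution (fun x _ => 1 - x) ?_ ?_ ?_ ?_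
  · intro x _
    rw [show (1 - x) * (1 - (1 - x)) = x * (1 - x) by ring]
    exact CharTwo.add_self_eq_zero _
  · intro x hx _ he
    apply Finset.ne_of_mem_erase hx
    field_simp
    linear_combination -he
  · intro x hx
    refine Finset.mem_erase.2 ⟨fun he => ?_, Finset.mem_univ _⟩
    apply Finset.ne_of_mem_erase hx
    rw [← hh, ← he]; ring
  · intro x _; ring

lemma cub_adjoin {w : ℂ} (hw : w ^ 2 + w + 1 = 0) {z : ℂ} (hz : z ∈ Algebra.adjoin ℤ {w}) :
    ∃ c d : ℤ, z = c + d * w := by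
  induction hz using Algebra.adjoin_induction with
  | mem x hx => exact ⟨0, 1, by simpa using hx⟩
  | algebraMap n => exact ⟨n, 0, by simp⟩
  | add x y _ _ hx hy =>
    obtain ⟨a, b, rfl⟩ := hx
    obtain ⟨c, d, rfl⟩ := hy
    exact ⟨a + c, b + d, by push_cast; ring⟩
  | mul x y _ _ hx hy =>
    obtain ⟨a, b, rfl⟩ := hx
    obtain ⟨c, d, rfl⟩ := hy
    exact ⟨a * c - b * d, a * d + b * c - b * d, by
      push_cast; linear_combination (b * d : ℂ) * hw⟩

lemma cub_indep {w : ℂ} (hw : w ^ 2 + w + 1 = 0) {a b : ℤ} (h : (a : ℂ) + b * w = 0) :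
    a = 0 ∧ b = 0 := by
  have h1 : ((a ^ 2 - a * b + b ^ 2 : ℤ) : ℂ) = 0 := by
    push_cast
    linear_combination (a + b * (-1 - w)) * h + (b ^ 2 : ℂ) * hw
  have h2 : a ^ 2 - a * b + b ^ 2 = 0 := by exact_mod_cast h1
  have hb : b = 0 := by
    have : b ^ 2 ≤ 0 := by nlinarith [sq_nonneg (2 * a - b)]
    nlinarith [pow_eq_zero_iff (two_ne_zero) |>.1 (le_antisymm this (sq_nonneg b))]
  subst hb
  refine ⟨?_, rfl⟩
  simpa using h2

lemma cub_jacobi (p k : ℕ) [Fact p.Prime] (hk : p = 3 * k + 1) (hk0 : 0 < k)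
    {r : ZMod p} (hr : r ^ 2 + r + 1 = 0) (hr1 : r ≠ 1) :
    ∃ A B : ℤ, A = cubCount p k 1 - cubCount p k (r ^ 2) ∧
      B = cubCount p k r - cubCount p k (r ^ 2) ∧ (3 : ℤ) ∣ B ∧ A ^ 2 - A * B + B ^ 2 = p := by
  classical
  refine ⟨_, _, rfl, rfl, ?_⟩
  obtain ⟨w, hwp⟩ : ∃ w : ℂ, IsPrimitiveRoot w 3 := ⟨_, Complex.isPrimitiveRoot_exp 3 (by norm_num)⟩
  have hw3 : w ^ 3 = 1 := hwp.pow_eq_one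
  have hw1 : w ≠ 1 := hwp.ne_one (by norm_num)
  have hw : w ^ 2 + w + 1 = 0 := by
    have : (w - 1) * (w ^ 2 + w + 1) = 0 := by linear_combination hw3
    exact (mul_eq_zero.1 this).resolve_left (sub_ne_zero.2 hw1)
  have hr3 : r ^ 3 = 1 := by linear_combination (r - 1) * hr
  have hr0 : r ≠ 0 := by rintro rfl; simp at hr3
  have hrr : r ^ 2 ≠ r := fun h => hr1 (mul_left_cancel₀ hr0 (by linear_combination h))
  have hr21 : r ^ 2 ≠ 1 := fun h => hr1 (by linear_combination hr3 - r * h)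
  have hy : ∀ y : ZMod p, y ≠ 0 → y ^ k = 1 ∨ y ^ k = r ∨ y ^ k = r ^ 2 := by
    intro y hy
    apply cub_cases hr
    rw [← pow_mul, ← ZMod.pow_card_sub_one_eq_one hy]
    congr 1; omega
  let f : ZMod p → ℂ := fun y =>
    cubInd p k 1 y + cubInd p k r y * w + cubInd p k (r ^ 2) y * w ^ 2
  have f0 : f 0 = 0 := by simp [f, cubInd]
  have f1 : ∀ y : ZMod p, y ≠ 0 → y ^ k = 1 → f y = 1 := by
    intro y h0 h; simp [f, cubInd, h0, h, hr1.symm, hr21.symm]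
  have f2 : ∀ y : ZMod p, y ≠ 0 → y ^ k = r → f y = w := by
    intro y h0 h; simp [f, cubInd, h0, h, hr1, hrr.symm]
  have f3 : ∀ y : ZMod p, y ≠ 0 → y ^ k = r ^ 2 → f y = w ^ 2 := by
    intro y h0 h; simp [f, cubInd, h0, h, hr21, hrr]
  have hmul : ∀ x y, f (x * y) = f x * f y := by
    intro x y
    by_cases hx0 : x = 0
    · simp [hx0, f0]
    by_cases hy0 : y = 0
    · simp [hy0, f0]
    have h0 := mul_ne_zero hx0 hy0
    rcases hy x hx0 with h | h | h <;> rcases hy y hy0 with h' | h' | h' <;>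
      simp only [f1 _ hx0, f2 _ hx0, f3 _ hx0, f1 _ hy0, f2 _ hy0, f3 _ hy0, h, h'] 
    · rw [f1 _ h0 (by rw [mul_pow, h, h', one_mul])]; ring
    · rw [f2 _ h0 (by rw [mul_pow, h, h', one_mul])]; ring
    · rw [f3 _ h0 (by rw [mul_pow, h, h', one_mul])]; ring
    · rw [f2 _ h0 (by rw [mul_pow, h, h', mul_one])]; ring
    · rw [f3 _ h0 (by rw [mul_pow, h, h']; ring)]; ring
    · rw [f1 _ h0 (by rw [mul_pow, h, h']; linear_combination hr3)]; linear_combination -hw3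
    · rw [f3 _ h0 (by rw [mul_pow, h, h']; ring)]; ring
    · rw [f1 _ h0 (by rw [mul_pow, h, h']; linear_combination hr3)]; linear_combination -hw3
    · rw [f2 _ h0 (by rw [mul_pow, h, h']; linear_combination r * hr3)]
      linear_combination -w * hw3
  let χ : MulChar (ZMod p) ℂ :=
    { toFun := f
      map_one' := f1 1 one_ne_zero (one_pow _)
      map_mul' := hmul
      map_nonunit' := by
        intro a ha
        have : a = 0 := by simpa using ha
        rw [this]; exact f0 }
  have hχ : ∀ y, χ y = f y := fun y => rfl
  have hχ3 : χ ^ 3 = 1 := by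
    ext y
    have hy0 := y.ne_zero
    rw [MulChar.pow_apply_coe, MulChar.one_apply_coe, hχ]
    rcases hy y hy0 with h | h | h
    · rw [f1 _ hy0 h]; ring
    · rw [f2 _ hy0 h, hw3]
    · rw [f3 _ hy0 h]; linear_combination (w ^ 3 + 1) * hw3
  have hw21 : w ^ 2 ≠ 1 := fun h => hw1 (by linear_combination hw3 - w * h)
  have hχ1 : χ ≠ 1 := by
    intro he
    have hall : ∀ y : ZMod p, y ≠ 0 → y ^ k = 1 := by
      intro y hy0
      have h1 : f y = 1 := by
        rw [← hχ, he, MulChar.one_apply (isUnit_iff_ne_zero.2 hy0)]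
      rcases hy y hy0 with h | h | h
      · exact h
      · rw [f2 _ hy0 h] at h1; exact absurd h1 hw1
      · rw [f3 _ hy0 h] at h1; exact absurd h1 hw21
    have hs := FiniteField.sum_pow_lt_card_sub_one (ZMod p) k (by rw [ZMod.card]; omega)
    rw [← Finset.add_sum_erase _ _ (Finset.mem_univ (0 : ZMod p)), zero_pow hk0.ne',
      Finset.sum_congr rfl (fun y hy' => hall y (Finset.ne_of_mem_erase hy'))] at hs
    rw [Finset.sum_const, Finset.card_erase_of_mem (Finset.mem_univ _), Finset.card_univ,
      ZMod.card, nsmul_eq_mul, zero_add, mul_one, ZMod.natCast_eq_zero_iff] at hs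
    have := Nat.le_of_dvd (by omega) hs
    omega
  have hχχ : χ * χ ≠ 1 := by
    intro he
    apply hχ1
    have : χ ^ 3 = χ := by rw [pow_succ, sq, he, one_mul]
    rw [← this, hχ3]
  have hinv : χ⁻¹ = χ ^ 2 := by
    rw [inv_eq_iff_mul_eq_one]
    rw [← hχ3, pow_succ' χ 2]
  have hJ : jacobiSum χ χ = ((cubCount p k 1 - cubCount p k (r ^ 2) : ℤ) : ℂ)
      + ((cubCount p k r - cubCount p k (r ^ 2) : ℤ) : ℂ) * w := by
    have : jacobiSum χ χ = cubCount p k 1 + cubCount p k r * w + cubCount p k (r ^ 2) * w ^ 2 := by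
      unfold jacobiSum cubCount
      push_cast
      rw [Finset.sum_mul, Finset.sum_mul, ← Finset.sum_add_distrib, ← Finset.sum_add_distrib]
      refine Finset.sum_congr rfl fun x _ => ?_
      rw [← map_mul, hχ]
    rw [this]; push_cast
    linear_combination (cubCount p k (r ^ 2) : ℂ) * hw
  have hJ' : jacobiSum χ⁻¹ χ⁻¹ = ((cubCount p k 1 - cubCount p k (r ^ 2) : ℤ) : ℂ)
      + ((cubCount p k r - cubCount p k (r ^ 2) : ℤ) : ℂ) * w ^ 2 := by
    have : jacobiSum χ⁻¹ χ⁻¹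
        = cubCount p k 1 + cubCount p k r * w ^ 2 + cubCount p k (r ^ 2) * w := by
      unfold jacobiSum cubCount
      push_cast
      rw [Finset.sum_mul, Finset.sum_mul, ← Finset.sum_add_distrib, ← Finset.sum_add_distrib]
      refine Finset.sum_congr rfl fun x _ => ?_
      rw [← map_mul, hinv, MulChar.pow_apply' _ two_ne_zero, hχ]
      generalize x * (1 - x) = y
      by_cases hy0 : y = 0
      · subst hy0; rw [f0]; simp [cubInd]
      rcases hy y hy0 with h | h | h
      · rw [f1 _ hy0 h]; simp [cubInd, hy0, h, hr1.symm, hr21.symm]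
      · rw [f2 _ hy0 h]; simp [cubInd, hy0, h, hr1, hrr.symm]
      · rw [f3 _ hy0 h]; simp [cubInd, hy0, h, hr21, hrr]; linear_combination w * hw3
    rw [this]; push_cast
    linear_combination (cubCount p k (r ^ 2) : ℂ) * hw
  generalize cubCount p k 1 - cubCount p k (r ^ 2) = A at *
  generalize cubCount p k r - cubCount p k (r ^ 2) = B at *
  constructor
  · obtain ⟨z, hz, hz'⟩ := exists_jacobiSum_eq_neg_one_add (by norm_num : 2 < 3) hχ3 hχ3
      (by rw [ZMod.card]; omega) hwp
    obtain ⟨c, d, rfl⟩ := cub_adjoin hw hz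
    have := cub_indep hw (a := A - (3 * d - 1)) (b := B - 3 * (d - c)) (by
      rw [hJ] at hz'
      push_cast
      linear_combination hz' + (c + d * w - 3 * d) * hw)
    exact ⟨d - c, by linarith [this.2]⟩
  · have hn := jacobiSum_mul_jacobiSum_inv (F := ZMod p) (F' := ℂ) (by
      rw [ringChar.eq_zero, ZMod.ringChar_zmod_n]; omega) hχ1 hχ1 hχχ
    rw [hJ, hJ', ZMod.card] at hn
    have : ((A ^ 2 - A * B + B ^ 2 : ℤ) : ℂ) = ((p : ℤ) : ℂ) := by
      push_cast
      linear_combination hn - (A * B + B ^ 2 * (w - 1) : ℂ) * hw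
    exact_mod_cast this

/-- uniqueness up to sign -/
lemma cub_unique {p A B a b : ℤ} (hp : Prime p) (hp0 : 0 < p) (hp3 : ¬ p ∣ 3)
    (hA : A ^ 2 - A * B + B ^ 2 = p) (ha : a ^ 2 - a * b + b ^ 2 = p)
    (hB : 3 ∣ B) (hb : 3 ∣ b) (hd : p ∣ A * b - a * B) :
    (A = a ∧ B = b) ∨ (A = -a ∧ B = -b) := by
  obtain ⟨B, rfl⟩ := hB
  obtain ⟨b, rfl⟩ := hb
  have hd' : p ∣ 3 * (A * b - a * B) := by convert hd using 1; ring
  obtain ⟨y, hy⟩ := (hp.dvd_or_dvd hd').resolve_left hp3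
  -- X = A a + 9 B b - (3/2)(...) : use the doubled form
  have hX : (2 * A * a - 3 * A * b - 3 * a * B + 18 * B * b) ^ 2
      + 27 * (A * b - a * B) ^ 2 = 4 * p ^ 2 := by
    have h : (A ^ 2 - A * (3 * B) + (3 * B) ^ 2) * (a ^ 2 - a * (3 * b) + (3 * b) ^ 2)
        = p * p := by rw [hA, ha]
    linear_combination 4 * h
  rw [hy] at hX
  have hpX : p ^ 2 ∣ (2 * A * a - 3 * A * b - 3 * a * B + 18 * B * b) ^ 2 :=
    ⟨4 - 27 * y ^ 2, by linear_combination hX⟩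
  rw [Int.pow_dvd_pow_iff two_ne_zero] at hpX
  obtain ⟨x, hx⟩ := hpX
  rw [hx] at hX
  have h4 : x ^ 2 + 27 * y ^ 2 = 4 := by
    have : p ^ 2 * (x ^ 2 + 27 * y ^ 2) = p ^ 2 * 4 := by linear_combination hX
    exact mul_left_cancel₀ (pow_ne_zero 2 hp0.ne') this
  have hy0 : y = 0 := by
    have : y ^ 2 < 1 := by nlinarith [sq_nonneg x]
    have := pow_eq_zero_iff (two_ne_zero) |>.1 (le_antisymm (by omega) (sq_nonneg y))
    exact this
  have hx2 : x = 2 ∨ x = -2 := by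
    have : (x - 2) * (x + 2) = 0 := by subst hy0; linear_combination h4
    rcases mul_eq_zero.1 this with h | h
    · left; linarith
    · right; linarith
  subst hy0
  -- A p = A (a² - 3ab + 9b²), using A b = a B
  have e1 : 2 * A * p = a * (2 * A * a - 3 * A * b - 3 * a * B + 18 * B * b) := by
    linear_combination (-2 * A) * ha + (18 * b - 3 * a) * hy
  have e2 : 2 * B * p = b * (2 * A * a - 3 * A * b - 3 * a * B + 18 * B * b) := by
    linear_combination (-2 * B) * ha + (3 * b - 2 * a) * hy
  rw [hx] at e1 e2
  rcases hx2 with rfl | rfl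
  · left
    have : A = a := mul_left_cancel₀ hp0.ne' (by linarith)
    have : B = b := mul_left_cancel₀ hp0.ne' (by linarith)
    constructor <;> simp [*]
  · right
    have : A = -a := mul_left_cancel₀ hp0.ne' (by linarith)
    have : B = -b := mul_left_cancel₀ hp0.ne' (by linarith)
    constructor <;> simp [*]

/-- For a prime `p ≡ 1 (mod 3)` with `4p = L² + 27M²`,
`2^{(p−1)/3} ≡ −(L+3M)(6M)⁻¹ (mod p)` iff `L ≡ M (mod 4)`. -/
theorem two_character_omega_iff (p : ℕ) (hp : p.Prime) (hp3 : p % 3 = 1)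
    (L M : ℤ) (h : (4 * p : ℤ) = L ^ 2 + 27 * M ^ 2) :
    (2 : ZMod p) ^ ((p - 1) / 3) =
        ((-(L + 3 * M) : ℤ) : ZMod p) * (((6 * M : ℤ) : ZMod p))⁻¹ ↔
      L ≡ M [ZMOD 4] := by
  classical
  have : Fact p.Prime := ⟨hp⟩
  obtain ⟨k, hk⟩ : ∃ k, p = 3 * k + 1 := ⟨p / 3, by omega⟩
  have hp1 := hp.one_lt
  have hk0 : 0 < k := by omega
  rw [show (p - 1) / 3 = k by omega]
  have hp2 : p ≠ 2 := by omega
  have hp4 : 4 ≤ p := by omega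
  have hcast : ∀ n : ℕ, 0 < n → n < p → (n : ZMod p) ≠ 0 := by
    intro n h0 hn he
    rw [ZMod.natCast_eq_zero_iff] at he
    have := Nat.le_of_dvd h0 he
    omega
  have h2 : (2 : ZMod p) ≠ 0 := by exact_mod_cast hcast 2 (by omega) (by omega)
  have h3 : (3 : ZMod p) ≠ 0 := by exact_mod_cast hcast 3 (by omega) (by omega)
  obtain ⟨a, ha⟩ : ∃ a, L + 3 * M = 2 * a := by
    have : (2 : ℤ) ∣ (L + 3 * M) ^ 2 := ⟨2 * p + 3 * L * M - 9 * M ^ 2, by linear_combination -h⟩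
    exact Int.prime_two.dvd_of_dvd_pow this
  obtain rfl : L = 2 * a - 3 * M := by linarith
  have hna : a ^ 2 - a * (3 * M) + (3 * M) ^ 2 = p := by linarith
  have hM : (M : ZMod p) ≠ 0 := by
    intro hM0
    rw [ZMod.intCast_zmod_eq_zero_iff_dvd] at hM0
    obtain ⟨m, rfl⟩ := hM0
    have hpa : (p : ℤ) ∣ a := by
      apply (Nat.prime_iff_prime_int.1 hp).dvd_of_dvd_pow (n := 2)
      exact ⟨1 + 3 * a * m - 9 * p * m ^ 2, by linear_combination hna⟩
    obtain ⟨c, rfl⟩ := hpa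
    have : (p : ℤ) ∣ 1 := ⟨c ^ 2 - 3 * c * m + 9 * m ^ 2, by
      apply mul_left_cancel₀ (show (p : ℤ) ≠ 0 by positivity)
      linear_combination -hna⟩
    have := Int.le_of_dvd one_pos this
    omega
  set r : ZMod p := ((-(2 * a - 3 * M + 3 * M) : ℤ) : ZMod p) * (((6 * M : ℤ) : ZMod p))⁻¹ with hrdef
  have hra : (a : ZMod p) + 3 * M * r = 0 := by
    have h6 : (6 : ZMod p) ≠ 0 := by
      rw [show (6 : ZMod p) = 2 * 3 by norm_num]; exact mul_ne_zero h2 h3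
    rw [hrdef]; push_cast
    field_simp
    ring
  have hnF : (a : ZMod p) ^ 2 - a * (3 * M) + (3 * M) ^ 2 = 0 := by
    have := congrArg (Int.cast : ℤ → ZMod p) hna
    push_cast at this
    rw [this]; simp
  have hr : r ^ 2 + r + 1 = 0 := by
    have : (3 * (M : ZMod p)) ^ 2 * (r ^ 2 + r + 1) = 0 := by
      linear_combination hnF + (3 * M * r - a + 3 * M) * hra
    exact (mul_eq_zero.1 this).resolve_left (pow_ne_zero _ (mul_ne_zero h3 hM))
  have hr1 : r ≠ 1 := by
    intro h1; rw [h1] at hr; apply h3; linear_combination hr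
  have hr3 : r ^ 3 = 1 := by linear_combination (r - 1) * hr
  have hr0 : r ≠ 0 := by intro h0; rw [h0] at hr3; simp at hr3
  have hrr : r ^ 2 ≠ r := fun h => hr1 (mul_left_cancel₀ hr0 (by linear_combination h))
  have hr21 : r ^ 2 ≠ 1 := fun h => hr1 (by linear_combination hr3 - r * h)
  clear_value r
  obtain ⟨A, B, hA, hB, hB3, hN⟩ := cub_jacobi p k hk hk0 hr hr1
  have hAB : (A : ZMod p) + B * r = 0 := by
    rw [← cub_sum_zero p k hk hk0]
    have e : ∑ x : ZMod p, (x * (1 - x)) ^ k = (cubCount p k 1 : ZMod p) + cubCount p k r * r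
        + cubCount p k (r ^ 2) * r ^ 2 := by
      unfold cubCount
      push_cast
      rw [Finset.sum_mul, Finset.sum_mul, ← Finset.sum_add_distrib, ← Finset.sum_add_distrib]
      refine Finset.sum_congr rfl fun x _ => ?_
      generalize x * (1 - x) = y
      by_cases hy0 : y = 0
      · subst hy0; simp [cubInd, hk0.ne']
      have hy3 : (y ^ k) ^ 3 = 1 := by
        rw [← pow_mul, ← ZMod.pow_card_sub_one_eq_one hy0]
        congr 1; omega
      rcases cub_cases hr hy3 with h | h | h
      · simp [cubInd, hy0, h, hr1.symm, hr21.symm]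
      · simp [cubInd, hy0, h, hr1, hrr.symm]
      · simp [cubInd, hy0, h, hr21, hrr]
    rw [e, hA, hB]; push_cast
    linear_combination -(cubCount p k (r ^ 2) : ZMod p) * hr
  have hu := cub_unique (p := p) (A := A) (B := B) (a := a) (b := 3 * M)
    (Nat.prime_iff_prime_int.1 hp) (by omega) (by
      intro hd; have := Int.le_of_dvd (by norm_num) hd; omega) hN hna hB3 ⟨M, rfl⟩ (by
      rw [← ZMod.intCast_zmod_eq_zero_iff_dvd]
      push_cast
      linear_combination (3 * M : ZMod p) * hAB - (B : ZMod p) * hra)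
  have ht3 : ((2 : ZMod p) ^ k) ^ 3 = 1 := by
    rw [← pow_mul, ← ZMod.pow_card_sub_one_eq_one h2]
    congr 1; omega
  have hq : ((2 : ZMod p)⁻¹ * 2⁻¹) ^ k = 2 ^ k := by
    rw [mul_pow, inv_pow]
    have := pow_ne_zero k h2
    field_simp
    linear_combination -ht3
  have hq0 : (2 : ZMod p)⁻¹ * 2⁻¹ ≠ 0 := mul_ne_zero (inv_ne_zero h2) (inv_ne_zero h2)
  have p1 := cub_parity p k hp2 1
  have p2 := cub_parity p k hp2 r
  have p3 := cub_parity p k hp2 (r ^ 2)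
  have hMa : ¬ (a % 2 = 0 ∧ M % 2 = 0) := by
    rintro ⟨h1, h2⟩
    obtain ⟨a', rfl⟩ := Int.dvd_of_emod_eq_zero h1
    obtain ⟨m', rfl⟩ := Int.dvd_of_emod_eq_zero h2
    have : (2 : ℤ) ∣ p := ⟨2 * a' ^ 2 - 6 * a' * m' + 18 * m' ^ 2, by linear_combination -hna⟩
    have : 2 ∣ p := by exact_mod_cast this
    exact hp2 ((Nat.prime_dvd_prime_iff_eq Nat.prime_two hp).1 this).symm
  have key : (2 * a - 3 * M ≡ M [ZMOD 4]) ↔ (A % 2 = 0 ∧ B % 2 = 1) := by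
    rw [Int.ModEq]
    omega
  rw [key]
  have hinj : ∀ s : ZMod p, cubInd p k s ((2 : ZMod p)⁻¹ * 2⁻¹) = if (2 : ZMod p) ^ k = s then 1 else 0 := by
    intro s
    simp [cubInd, hq, h2]
  rw [hinj] at p1 p2 p3
  rcases cub_cases hr ht3 with h | h | h
  · rw [h] at p1 p2 p3 ⊢
    simp only [hr1.symm, hr21.symm, if_true, if_false, false_iff, true_iff] at p1 p2 p3 ⊢
    omega
  · rw [h] at p1 p2 p3 ⊢
    simp only [hr1, hrr.symm, if_true, if_false, false_iff, true_iff] at p1 p2 p3 ⊢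
    omega
  · rw [h] at p1 p2 p3 ⊢
    simp only [hr21, hrr, if_true, if_false, false_iff, true_iff] at p1 p2 p3 ⊢
    omega
end

section
/- Let p be a prime with p ≡ 1 (mod 3) and let L, M be integers with 4p = L² + 27M². Then 3 is a cubic residue modulo p if and only if 3 divides M. -/
/-- Uniqueness of the representation, in the form needed. -/
lemma rep_sq_unique (p : ℕ) (hp : p.Prime) (L M l v : ℤ) (h : (4 * p : ℤ) = L ^ 2 + 27 * M ^ 2)
    (h' : (4 * p : ℤ) = l ^ 2 + 27 * v ^ 2) : v ^ 2 = M ^ 2 := by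
  have hp0 : (0 : ℤ) < p := by exact_mod_cast hp.pos
  have hpp : Prime (p : ℤ) := Nat.prime_iff_prime_int.mp hp
  have hd : (p : ℤ) ∣ (L * v - M * l) * (L * v + M * l) :=
    ⟨4 * (v ^ 2 - M ^ 2), by linear_combination M ^ 2 * h' - v ^ 2 * h⟩
  have key : ∀ k : ℤ, ∀ w : ℤ, 16 * (p : ℤ) ^ 2 = w ^ 2 + 27 * (p * k) ^ 2 → k = 0 := by
    intro k w hw
    by_contra hk
    have h1 : 1 ≤ k ^ 2 := by
      have : 0 < k ^ 2 := by positivity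
      linarith
    nlinarith [sq_nonneg w, mul_pos hp0 hp0]
  have fin : (L * v - M * l) * (L * v + M * l) = 0 → v ^ 2 = M ^ 2 := by
    intro h0
    have : (4 * p : ℤ) * (v ^ 2 - M ^ 2) = 0 := by
      linear_combination h0 + v ^ 2 * h - M ^ 2 * h'
    rcases mul_eq_zero.mp this with h1 | h1
    · omega
    · linarith
  apply fin
  rcases hpp.dvd_or_dvd hd with ⟨k, hk⟩ | ⟨k, hk⟩
  · have := key k (L * l + 27 * M * v) (by rw [← hk]; linear_combination (4 * p : ℤ) * h + (L ^ 2 + 27 * M ^ 2) * h')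
    rw [hk, this]; simp
  · have := key k (L * l - 27 * M * v) (by rw [← hk]; linear_combination (4 * p : ℤ) * h + (L ^ 2 + 27 * M ^ 2) * h')
    rw [hk, this]; simp

/-- The sum of `s` over the fibre of `f` above `c`. -/
noncomputable def fibSum {F R : Type*} [Fintype F] [CommRing R] (f s : F → R) (c : R) : R :=
  open Classical in ∑ x, if f x = c then s x else 0

section
variable {F R : Type*} [Fintype F] [CommRing R] [IsDomain R]

lemma omega_rel {ω : R} (hω : IsPrimitiveRoot ω 3) : ω ^ 2 + ω + 1 = 0 := by
  have h1 : ω ^ 3 = 1 := hω.pow_eq_one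
  have h2 : ω ≠ 1 := hω.ne_one (by norm_num)
  have : (ω - 1) * (ω ^ 2 + ω + 1) = 0 := by linear_combination h1
  exact (mul_eq_zero.mp this).resolve_left (sub_ne_zero.mpr h2)

lemma omega_distinct {ω : R} (hω : IsPrimitiveRoot ω 3) :
    ω ≠ 1 ∧ ω ^ 2 ≠ 1 ∧ ω ^ 2 ≠ ω ∧ ω ≠ 0 := by
  have h2 : ω ≠ 1 := hω.ne_one (by norm_num)
  have h0 : ω ≠ 0 := hω.ne_zero (by norm_num)
  refine ⟨h2, hω.pow_ne_one_of_pos_of_lt (by norm_num) (by norm_num), ?_, h0⟩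
  intro h
  exact h2 (mul_left_cancel₀ h0 (by linear_combination h))

lemma fibSum_lin {ω : R} (hω : IsPrimitiveRoot ω 3) (f s : F → R) (a b c : R) (G : R → R)
    (hf : ∀ x, f x = 0 ∨ f x = 1 ∨ f x = ω ∨ f x = ω ^ 2) (h0 : G 0 = 0) (ha : G 1 = a)
    (hb : G ω = b) (hc : G (ω ^ 2) = c) :
    ∑ x, G (f x) * s x = a * fibSum f s 1 + b * fibSum f s ω + c * fibSum f s (ω ^ 2) := by
  classical
  obtain ⟨h1, h2, h3, h4⟩ := omega_distinct hω
  have h5 : ω ^ 2 ≠ 0 := pow_ne_zero 2 h4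
  simp only [fibSum, Finset.mul_sum, ← Finset.sum_add_distrib]
  refine Finset.sum_congr rfl fun x _ => ?_
  rcases hf x with h | h | h | h <;>
    simp [h, h0, ha, hb, hc, h1, h2, h3, h1.symm, h2.symm, h3.symm, h4.symm, h5.symm]

end

lemma alg_case {K : Type*} [Field K] [CharP K 3] (e0 e1 e2 : K) (hs : e0 + e1 + e2 = -1) :
    (e0 ^ 3 = e0 → e1 ^ 3 = e1 → e2 ^ 3 = e2 → (e1 - e2) * (e0 - e1) * (e0 - e2) = 0) ∧
    (e0 ^ 3 = e1 → e1 ^ 3 = e2 → e2 ^ 3 = e0 → (e1 - e2) * (e0 - e1) * (e0 - e2) ≠ 0) := by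
  have h3 : (3 : K) = 0 := by exact_mod_cast CharP.cast_eq_zero K 3
  constructor
  · have key : ∀ e : K, e ^ 3 = e → e = 0 ∨ e = 1 ∨ e = -1 := by
      intro e he
      have : e * ((e - 1) * (e + 1)) = 0 := by linear_combination he
      rcases mul_eq_zero.mp this with h | h
      · exact Or.inl h
      · rcases mul_eq_zero.mp h with h | h
        · exact Or.inr (Or.inl (sub_eq_zero.mp h))
        · exact Or.inr (Or.inr (eq_neg_of_add_eq_zero_left h))
    intro h0 h1 h2
    have one : (1 : K) ≠ 0 := one_ne_zero
    rcases key _ h0 with rfl | rfl | rfl <;> rcases key _ h1 with rfl | rfl | rfl <;>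
      rcases key _ h2 with rfl | rfl | rfl <;> first
        | (simp; done)
        | (exfalso; apply one; simp at hs)
  · intro h0 h1 h2 hD
    have : e0 = e1 ∧ e1 = e2 := by
      rcases mul_eq_zero.mp hD with hD | hD
      · rcases mul_eq_zero.mp hD with hD | hD
        · have h : e1 = e2 := sub_eq_zero.mp hD
          subst h
          exact ⟨h2.symm.trans h1, rfl⟩
        · have h : e0 = e1 := sub_eq_zero.mp hD
          subst h
          exact ⟨rfl, h0.symm.trans h1⟩
      · have h : e0 = e2 := sub_eq_zero.mp hD
        subst h
        exact ⟨h2.symm.trans h0, h0.symm.trans h2⟩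
    obtain ⟨rfl, rfl⟩ := this
    have : (1 : K) = 0 := by linear_combination hs - e0 * h3
    exact one_ne_zero this

lemma cube_iff_char {F R : Type*} [Field F] [Fintype F] [CommRing R] [IsDomain R]
    (χ : MulChar F R) (hχ : orderOf χ = 3) (y : F) (hy : y ≠ 0) :
    (∃ x, x ^ 3 = y) ↔ χ y = 1 := by
  classical
  have h3 : χ ^ 3 = 1 := by rw [← hχ]; exact pow_orderOf_eq_one χ
  have hval : ∀ x : Fˣ, χ x ^ 3 = 1 := by
    intro x
    rw [← MulChar.pow_apply_coe, h3, MulChar.one_apply_coe]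
  constructor
  · rintro ⟨x, rfl⟩
    have hx : x ≠ 0 := by rintro rfl; simp at hy
    rw [map_pow]
    exact hval (Units.mk0 x hx)
  · intro h
    obtain ⟨g, hg⟩ := IsCyclic.exists_generator (α := Fˣ)
    have hg1 : χ g ≠ 1 := by
      intro hg1
      have : χ = 1 := by
        ext u
        obtain ⟨n, rfl⟩ := (mem_powers_iff_mem_zpowers (x := g)).mpr (hg u)
        simp [hg1]
      rw [this, orderOf_one] at hχ
      omega
    have ho : orderOf (χ g) = 3 := orderOf_eq_prime (hval g) hg1
    obtain ⟨n, hn⟩ := (mem_powers_iff_mem_zpowers (x := g)).mpr (hg (Units.mk0 y hy))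
    have hn' : (g : F) ^ n = y := by
      have := congrArg (Units.val) hn
      simpa using this
    have : χ g ^ n = 1 := by rw [← map_pow, hn', h]
    obtain ⟨k, rfl⟩ := ho ▸ orderOf_dvd_of_pow_eq_one this
    exact ⟨(g : F) ^ k, by rw [← hn', ← pow_mul, mul_comm]⟩

lemma fibSum_one_int {F R : Type*} [Fintype F] [CommRing R] (f : F → R) (c : R) :
    ∃ n : ℤ, fibSum f (fun _ => 1) c = n := by
  classical
  refine ⟨∑ x, if f x = c then 1 else 0, ?_⟩
  simp [fibSum]

lemma main_aux (p : ℕ) [Fact p.Prime] (hp3 : p % 3 = 1) {R K : Type*} [CommRing R] [IsDomain R]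
    [CharZero R] [Field K] [CharP K 3] (φ : R →+* K) (ω : R) (hω : IsPrimitiveRoot ω 3)
    (ψ : AddChar (ZMod p) R) (hψ : ψ.IsPrimitive) :
    ∃ l v : ℤ, (4 * p : ℤ) = l ^ 2 + 27 * v ^ 2 ∧
      ((∃ x : ZMod p, x ^ 3 = 3) ↔ (3 : ℤ) ∣ v) := by
  classical
  have hpp : p.Prime := Fact.out
  obtain ⟨hω1, hω2, hω3, hω0⟩ := omega_distinct hω
  have hr := omega_rel hω
  have hcard : Fintype.card (ZMod p) = p := ZMod.card p
  obtain ⟨χ, hχ⟩ := MulChar.exists_mulChar_orderOf (ZMod p) (n := 3) (by rw [hcard]; omega) hω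
  have hχ3 : χ ^ 3 = 1 := by rw [← hχ]; exact pow_orderOf_eq_one χ
  have hχ1 : χ ≠ 1 := by rintro rfl; simp at hχ
  have hχ2 : χ * χ ≠ 1 := by
    intro h
    have : orderOf χ ∣ 2 := orderOf_dvd_of_pow_eq_one (by rw [pow_two, h])
    rw [hχ] at this; omega
  have hvals : ∀ x : ZMod p, x ≠ 0 → χ x = 1 ∨ χ x = ω ∨ χ x = ω ^ 2 := by
    intro x hx
    obtain ⟨k, hk, h⟩ := MulChar.exists_apply_eq_pow hχ3 hω hx
    interval_cases k <;> simp [h]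
  have hvals0 : ∀ x : ZMod p, χ x = 0 ∨ χ x = 1 ∨ χ x = ω ∨ χ x = ω ^ 2 := by
    intro x
    by_cases hx : x = 0
    · left; rw [hx]; exact MulChar.map_zero χ
    · right; exact hvals x hx
  have hw3 : ω ^ 3 = 1 := hω.pow_eq_one
  have hw4 : (ω ^ 2) ^ 2 = ω := by linear_combination ω * hw3
  have hvalsJ : ∀ x : ZMod p, χ x * χ (1 - x) = 0 ∨ χ x * χ (1 - x) = 1 ∨
      χ x * χ (1 - x) = ω ∨ χ x * χ (1 - x) = ω ^ 2 := by
    intro x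
    rcases hvals0 x with h | h | h | h <;> rcases hvals0 (1 - x) with h' | h' | h' | h' <;>
      rw [h, h'] <;> try (simp only [zero_mul, mul_zero, one_mul, mul_one, true_or, or_true]; done)
    · right; right; right; ring
    · right; left; linear_combination hw3
    · right; left; linear_combination hw3
    · right; right; left; linear_combination ω * hw3
  have hp0 : (p : R) ≠ 0 := by exact_mod_cast hpp.ne_zero
  -- Gauss periods
  set η : R → R := fibSum χ ψ with hη
  set g1 := gaussSum χ ψ with hg1
  set g2 := gaussSum (χ * χ) ψ with hg2
  have e1 : g1 = 1 * η 1 + ω * η ω + ω ^ 2 * η (ω ^ 2) :=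
    fibSum_lin hω χ ψ 1 ω (ω ^ 2) (fun x => x) hvals0 rfl rfl rfl rfl
  have e2 : g2 = 1 * η 1 + ω ^ 2 * η ω + ω * η (ω ^ 2) := by
    rw [← fibSum_lin hω χ ψ 1 (ω ^ 2) ω (fun x => x ^ 2) hvals0 (by simp) (by simp) rfl hw4]
    simp [hg2, gaussSum, pow_two]
  have e3 : ∑ x : ZMod p, χ x ^ 3 * ψ x = 1 * η 1 + 1 * η ω + 1 * η (ω ^ 2) :=
    fibSum_lin hω χ ψ 1 1 1 (fun x => x ^ 3) hvals0 (by simp) (by simp) hw3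
      (by linear_combination (ω ^ 3 + 1) * hw3)
  have hsumη : η 1 + η ω + η (ω ^ 2) = -1 := by
    have hψ1 : ψ ≠ 1 := by
      have := hψ (one_ne_zero)
      simpa using this
    have h0 : ∑ x : ZMod p, ψ x = 0 := AddChar.sum_eq_zero_of_ne_one hψ1
    have : ∑ x : ZMod p, χ x ^ 3 * ψ x = ∑ x : ZMod p, (ψ x - if x = 0 then 1 else 0) := by
      refine Finset.sum_congr rfl fun x _ => ?_
      by_cases hx : x = 0
      · simp [hx, MulChar.map_zero]
      · have : χ x ^ 3 = 1 := by
          have := MulChar.pow_apply_coe χ 3 (Units.mk0 x hx)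
          rw [hχ3, MulChar.one_apply_coe] at this
          exact this.symm
        simp [hx, this]
    rw [Finset.sum_sub_distrib, h0] at this
    simp at this
    linear_combination this - e3
  -- Jacobi sums
  obtain ⟨n0, hn0⟩ := fibSum_one_int (fun x : ZMod p => χ x * χ (1 - x)) 1
  obtain ⟨n1, hn1⟩ := fibSum_one_int (fun x : ZMod p => χ x * χ (1 - x)) ω
  obtain ⟨n2, hn2⟩ := fibSum_one_int (fun x : ZMod p => χ x * χ (1 - x)) (ω ^ 2)
  have j1 : jacobiSum χ χ = n0 + ω * n1 + ω ^ 2 * n2 := by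
    have := fibSum_lin hω (fun x : ZMod p => χ x * χ (1 - x)) (fun _ => 1) 1 ω (ω ^ 2)
      (fun x => x) hvalsJ rfl rfl rfl rfl
    rw [hn0, hn1, hn2] at this
    simpa [jacobiSum] using this
  have j2 : jacobiSum (χ * χ) (χ * χ) = n0 + ω ^ 2 * n1 + ω * n2 := by
    have := fibSum_lin hω (fun x : ZMod p => χ x * χ (1 - x)) (fun _ => 1) 1 (ω ^ 2) ω
      (fun x => x ^ 2) hvalsJ (by simp) (by simp) rfl hw4
    rw [hn0, hn1, hn2] at this
    simp only [mul_one, one_mul] at this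
    rw [← this, jacobiSum]
    refine Finset.sum_congr rfl fun x _ => ?_
    simp only [MulChar.coeToFun_mul, Pi.mul_apply]; ring
  have hχ4 : χ * χ * (χ * χ) = χ := by
    calc χ * χ * (χ * χ) = χ ^ 3 * χ := by simp only [pow_succ, pow_zero, one_mul, mul_assoc]
      _ = χ := by rw [hχ3, one_mul]
  have G1 : g2 * jacobiSum χ χ = g1 * g1 := jacobiSum_mul_nontrivial hχ2 ψ
  have G2 : g1 * jacobiSum (χ * χ) (χ * χ) = g2 * g2 := by
    have := jacobiSum_mul_nontrivial (χ := χ * χ) (φ := χ * χ) (by rw [hχ4]; exact hχ1) ψ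
    rwa [hχ4] at this
  have hneg : χ (-1) = 1 :=
    (cube_iff_char χ hχ (-1) (by simp)).mp ⟨-1, by ring⟩
  have G3 : g1 * g2 = p := by
    have := gaussSum_mul_gaussSum_pow_orderOf_sub_one hχ1 hψ
    rw [hχ, hneg, hcard, one_mul] at this
    rw [← this, hg2, hg1, ← pow_two]
  rw [j1] at G1
  rw [j2] at G2
  obtain ⟨a, ha⟩ : ∃ a : ℤ, a = n0 - n2 := ⟨_, rfl⟩
  obtain ⟨b, hb⟩ : ∃ b : ℤ, b = n1 - n2 := ⟨_, rfl⟩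
  have ha' : (a : R) = n0 - n2 := by rw [ha]; push_cast; ring
  have hb' : (b : R) = n1 - n2 := by rw [hb]; push_cast; ring
  have J1 : (n0 : R) + ω * n1 + ω ^ 2 * n2 = a + b * ω := by
    rw [ha', hb']; linear_combination (n2 : R) * hr
  have J2 : (n0 : R) + ω ^ 2 * n1 + ω * n2 = a + b * ω ^ 2 := by
    rw [ha', hb']; linear_combination (n2 : R) * hr
  rw [J1] at G1
  rw [J2] at G2
  have N : a ^ 2 - a * b + b ^ 2 = (p : ℤ) := by
    have : (p : R) * ((a : R) ^ 2 - a * b + b ^ 2) = p * p := by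
      have h1 : (a + b * ω) * (a + b * ω ^ 2) = (a : R) ^ 2 - a * b + b ^ 2 := by
        linear_combination (a * b : R) * hr + (b : R) ^ 2 * hw3
      rw [← h1]
      calc (p : R) * (((a : R) + b * ω) * (a + b * ω ^ 2))
          = (g2 * ((a : R) + b * ω)) * (g1 * (a + b * ω ^ 2)) := by rw [← G3]; ring
        _ = (p : R) * p := by rw [G1, G2, ← G3]; ring
    have := mul_left_cancel₀ hp0 this
    exact_mod_cast this
  set D := (η ω - η (ω ^ 2)) * (η 1 - η ω) * (η 1 - η (ω ^ 2)) with hD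
  have hDb : (p : R) * b = 3 * D := by
    have c1 : g1 ^ 3 = p * (a + b * ω) := by rw [← G3]; linear_combination (-g1) * G1
    have c2 : g2 ^ 3 = p * (a + b * ω ^ 2) := by rw [← G3]; linear_combination (-g2) * G2
    have c3 : g1 ^ 3 - g2 ^ 3 = 3 * (ω - ω ^ 2) * D := by
      have f1 : g1 - g2 = (ω - ω ^ 2) * (η ω - η (ω ^ 2)) := by rw [e1, e2]; ring
      have f2 : g1 - ω * g2 = (1 - ω) * (η 1 - η ω) := by
        rw [e1, e2]; linear_combination (-η ω) * hw3
      have f3 : g1 - ω ^ 2 * g2 = (1 - ω ^ 2) * (η 1 - η (ω ^ 2)) := by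
        rw [e1, e2]; linear_combination (-η ω * ω - η (ω ^ 2)) * hw3
      have f4 : g1 ^ 3 - g2 ^ 3 = (g1 - g2) * (g1 - ω * g2) * (g1 - ω ^ 2 * g2) := by
        linear_combination (g1 ^ 2 * g2 - ω * g1 * g2 ^ 2) * hr + g2 ^ 3 * hw3
      have f5 : (1 - ω) * (1 - ω ^ 2) = 3 := by linear_combination hw3 - hr
      rw [f4, f1, f2, f3, hD, ← f5]; ring
    have hne : ω - ω ^ 2 ≠ 0 := sub_ne_zero.mpr hω3.symm
    apply mul_left_cancel₀ hne
    linear_combination c3 - c1 + c2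
  have h3K : (3 : K) = 0 := by exact_mod_cast CharP.cast_eq_zero K 3
  have hpK : (p : K) = 1 := by
    have : p = 3 * (p / 3) + 1 := by omega
    rw [this]; push_cast; rw [h3K]; ring
  have hb3 : (3 : ℤ) ∣ b := by
    have := congrArg φ hDb
    have h3' : φ 3 = 0 := by rw [map_ofNat, h3K]
    simp only [map_mul, h3', zero_mul, map_natCast, map_intCast, hpK, one_mul] at this
    exact (CharP.intCast_eq_zero_iff K 3 b).mp this
  obtain ⟨v, rfl⟩ := hb3
  have h3R : (3 : R) ≠ 0 := by norm_num
  have hDv : D = p * v := by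
    apply mul_left_cancel₀ h3R
    push_cast at hDb
    linear_combination -hDb
  refine ⟨2 * a - 3 * v, v, by rw [← N]; ring, ?_⟩
  have h3F : (3 : ZMod p) ≠ 0 := by
    intro h
    have : ((3 : ℕ) : ZMod p) = 0 := by exact_mod_cast h
    rw [ZMod.natCast_eq_zero_iff] at this
    have := (Nat.prime_dvd_prime_iff_eq hpp Nat.prime_three).mp this
    omega
  rw [cube_iff_char χ hχ 3 h3F]
  have hvD : (3 : ℤ) ∣ v ↔ φ D = 0 := by
    rw [hDv, map_mul, map_natCast, map_intCast, hpK, one_mul]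
    exact (CharP.intCast_eq_zero_iff K 3 v).symm
  rw [hvD]
  -- Frobenius
  have hFr : ∀ c, φ (η c) ^ 3 = φ (η (c * χ 3)) := by
    intro c
    have : Fact (Nat.Prime 3) := ⟨Nat.prime_three⟩
    have hc3 : χ 3 ≠ 0 := by
      rcases hvals 3 h3F with h | h | h <;> rw [h]
      · exact one_ne_zero
      · exact hω0
      · exact pow_ne_zero 2 hω0
    have h1 : η (c * χ 3) = ∑ x : ZMod p, if χ x = c then ψ x ^ 3 else 0 := by
      simp only [hη, fibSum]
      rw [← Equiv.sum_comp (Equiv.mulRight₀ (3 : ZMod p) h3F)]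
      refine Finset.sum_congr rfl fun x _ => ?_
      have : ψ (x * 3) = ψ x ^ 3 := by
        rw [← AddChar.map_nsmul_eq_pow]; congr 1; rw [nsmul_eq_mul]; push_cast; ring
      simp only [Equiv.mulRight₀_apply, map_mul, this]
      simp only [mul_left_inj' hc3]
    rw [h1]
    simp only [hη, fibSum, map_sum]
    rw [sum_pow_char 3]
    refine Finset.sum_congr rfl fun x _ => ?_
    split_ifs <;> simp
  have hsK : φ (η 1) + φ (η ω) + φ (η (ω ^ 2)) = -1 := by
    rw [← map_add, ← map_add, hsumη]; simp
  have hDK : φ D = (φ (η ω) - φ (η (ω ^ 2))) * (φ (η 1) - φ (η ω)) * (φ (η 1) - φ (η (ω ^ 2))) := by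
    simp [hD]
  rcases hvals 3 h3F with h | h | h
  · simp only [h, mul_one] at hFr
    refine ⟨fun _ => ?_, fun _ => h⟩
    rw [hDK]
    exact (alg_case _ _ _ hsK).1 (hFr 1) (hFr ω) (hFr (ω ^ 2))
  · rw [h] at hFr ⊢
    have k1 := hFr 1
    have k2 := hFr ω
    have k3 := hFr (ω ^ 2)
    rw [one_mul] at k1
    rw [← pow_two] at k2
    rw [← pow_succ, hw3] at k3
    refine ⟨fun h' => absurd h' hω1, fun h' => ?_⟩
    rw [hDK] at h'
    exact absurd h' ((alg_case _ _ _ hsK).2 k1 k2 k3)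
  · rw [h] at hFr ⊢
    have k1 := hFr 1
    have k2 := hFr ω
    have k3 := hFr (ω ^ 2)
    rw [one_mul] at k1
    rw [← pow_succ', hw3] at k2
    rw [← pow_two, hw4] at k3
    refine ⟨fun h' => absurd h' hω2, fun h' => ?_⟩
    rw [hDK] at h'
    refine absurd ?_ ((alg_case (φ (η 1)) (φ (η (ω ^ 2))) (φ (η ω))
      (by linear_combination hsK)).2 k1 k3 k2)
    linear_combination -h'

lemma exists_root_integral (n : ℕ) (hn : n ≠ 0) :
    ∃ z : integralClosure ℤ ℂ, IsPrimitiveRoot z n := by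
  have h := Complex.isPrimitiveRoot_exp n hn
  have hi : IsIntegral ℤ (Complex.exp (2 * Real.pi * Complex.I / n)) :=
    h.isIntegral (Nat.pos_of_ne_zero hn)
  refine ⟨⟨_, hi⟩, ?_⟩
  exact IsPrimitiveRoot.of_map_of_injective (f := (integralClosure ℤ ℂ).subtype)
    h Subtype.val_injective

/-- For a prime `p ≡ 1 (mod 3)` with `4p = L² + 27M²`,
`3` is a cubic residue mod `p` iff `3 ∣ M`. -/
theorem three_cubic_residue_iff (p : ℕ) (hp : p.Prime) (hp3 : p % 3 = 1)
    (L M : ℤ) (h : (4 * p : ℤ) = L ^ 2 + 27 * M ^ 2) :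
    (∃ x : ℤ, x ^ 3 ≡ 3 [ZMOD (p : ℤ)]) ↔ (3 : ℤ) ∣ M := by
  haveI : Fact p.Prime := ⟨hp⟩
  obtain ⟨ω, hω⟩ := exists_root_integral 3 (by norm_num)
  obtain ⟨ζ, hζ⟩ := exists_root_integral p hp.ne_zero
  have hψ := AddChar.zmodChar_primitive_of_primitive_root p hζ
  have hmax : (Ideal.span {(3 : ℤ)}).IsMaximal :=
    PrincipalIdealRing.isMaximal_of_irreducible Int.prime_three.irreducible
  obtain ⟨Q, hQ, hQ'⟩ := Ideal.exists_ideal_over_maximal_of_isIntegral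
    (S := integralClosure ℤ ℂ) (Ideal.span {(3 : ℤ)})
    (fun x hx => by
      have : x = 0 := by simpa using hx
      simp [this])
  letI : Field (integralClosure ℤ ℂ ⧸ Q) := Ideal.Quotient.field Q
  have h3Q : ((3 : ℕ) : integralClosure ℤ ℂ ⧸ Q) = 0 := by
    have : (3 : ℤ) ∈ Q.comap (algebraMap ℤ (integralClosure ℤ ℂ)) := by
      rw [hQ']; exact Ideal.mem_span_singleton_self 3
    have := Ideal.Quotient.eq_zero_iff_mem.mpr (Ideal.mem_comap.mp this)
    rw [← map_natCast (Ideal.Quotient.mk Q)]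
    simpa using this
  haveI : CharP (integralClosure ℤ ℂ ⧸ Q) 3 := (CharP.ringChar_of_prime_eq_zero Nat.prime_three h3Q) ▸ ringChar.charP _
  obtain ⟨l, v, hlv, hiff⟩ := main_aux p hp3 (Ideal.Quotient.mk Q) ω hω _ hψ
  have hsq := rep_sq_unique p hp L M l v h hlv
  have hMv : (3 : ℤ) ∣ M ↔ (3 : ℤ) ∣ v := by
    rw [← Int.prime_three.dvd_pow_iff_dvd (n := 2) (by norm_num), ← hsq,
      Int.prime_three.dvd_pow_iff_dvd (by norm_num)]
  rw [hMv, ← hiff]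
  constructor
  · rintro ⟨x, hx⟩
    refine ⟨(x : ZMod p), ?_⟩
    have := (ZMod.intCast_eq_intCast_iff _ _ p).mpr hx
    exact_mod_cast this
  · rintro ⟨x, hx⟩
    obtain ⟨y, rfl⟩ := ZMod.intCast_surjective x
    refine ⟨y, (ZMod.intCast_eq_intCast_iff _ _ p).mp ?_⟩
    exact_mod_cast hx
end

section
/- Let p be a prime with p ≡ 1 (mod 3) and let L, M be integers with 4p = L² + 27M². Then 3^{(p−1)/3} ≡ −(L + 3M)·(6M)⁻¹ (mod p) if and only if L ≡ −M (mod 3). -/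
lemma cyc_aux (p : ℕ) [Fact p.Prime] (h3 : (3 : ZMod p) ≠ 0) (b : ZMod p → ℤ) :
    ((∑ x, ∑ y, b x * (b y * b (1 - x - y)) : ℤ) : ZMod 3) = ((b (3⁻¹) : ℤ) : ZMod 3) ^ 3 := by
  classical
  let P : AddMonoidAlgebra (ZMod 3) (ZMod p) := ∑ x, AddMonoidAlgebra.single x (b x : ZMod 3)
  have : Fact (Nat.Prime 3) := ⟨by norm_num⟩
  have : CharP (AddMonoidAlgebra (ZMod 3) (ZMod p)) 3 := charP_of_injective_algebraMap (R := ZMod 3) (FaithfulSMul.algebraMap_injective _ _) 3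
  have h1 : P ^ 3 = ∑ x, AddMonoidAlgebra.single (3 * x) ((b x : ZMod 3) ^ 3) := by
    simp only [P]
    rw [sum_pow_char]
    simp [AddMonoidAlgebra.single_pow]
  have h2 : P ^ 3 = ∑ x, ∑ y, ∑ z, AddMonoidAlgebra.single (x + (y + z)) ((b x : ZMod 3) * (b y * b z)) := by
    have : P ^ 3 = P * (P * P) := by ring
    rw [this]
    simp only [P]
    rw [Finset.sum_mul_sum, Finset.sum_mul_sum]
    refine Finset.sum_congr rfl fun x _ => ?_
    simp only [Finset.mul_sum, AddMonoidAlgebra.single_mul_single]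
  have h4 := congrArg (fun Q : AddMonoidAlgebra (ZMod 3) (ZMod p) => Q.coeff 1) (h2.symm.trans h1)
  simp only [AddMonoidAlgebra.coeff_sum, Finsupp.finsetSum_apply, AddMonoidAlgebra.coeff_single,
    Finsupp.single_apply] at h4
  have e1 : ∀ x y z : ZMod p, x + (y + z) = 1 ↔ z = 1 - x - y := fun x y z =>
    ⟨fun h => by linear_combination h, fun h => by linear_combination h⟩
  have e2 : ∀ x : ZMod p, 3 * x = 1 ↔ x = 3⁻¹ := fun x => by
    exact ⟨fun h => eq_inv_of_mul_eq_one_right h, fun h => by rw [h, mul_inv_cancel₀ h3]⟩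
  simp only [e1, e2, Finset.sum_ite_eq', Finset.mem_univ, if_true] at h4
  push_cast
  exact h4

lemma sum_zero_aux (p : ℕ) [Fact p.Prime] (m : ℕ) (h : 2 * m < p - 1)  :
    ∑ x : ZMod p, (x * (1 - x)) ^ m = 0 := by
  have : ∀ x : ZMod p, (x * (1 - x)) ^ m = ∑ k ∈ Finset.range (m+1), ((-1)^k * (m.choose k : ZMod p)) * x ^ (m + k) := by
    intro x
    rw [mul_pow, sub_eq_add_neg, add_comm, add_pow, Finset.mul_sum]
    refine Finset.sum_congr rfl fun k _ => ?_
    rw [neg_pow, pow_add]; simp; ring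
  simp only [this]
  rw [Finset.sum_comm]
  refine Finset.sum_eq_zero fun k hk => ?_
  rw [← Finset.mul_sum, FiniteField.sum_pow_lt_card_sub_one, mul_zero]
  rw [ZMod.card]
  simp at hk; omega

lemma uniq_aux (p A B A' B' : ℤ) (hp : Prime p) (hB : 3 ∣ B) (hB' : 3 ∣ B') (h1 : A^2-A*B+B^2 = p) (h2 : A'^2-A'*B'+B'^2 = p) (hp0 : 0 < p) (h3p : ¬ 3 ∣ p)
   (h : p ∣ A' * B - A * B') : ∃ e : ℤ, e^2 = 1 ∧ A = e * A' ∧ B = e * B' := by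
  obtain ⟨Y, hY⟩ := h
  set X0 := A*A'+B*B'-A*B' with hX0
  have hn : X0^2 - X0 * (p*Y) + (p*Y)^2 = p^2 := by
    rw [← hY, hX0]; linear_combination (A'^2-A'*B'+B'^2)*h1 + p * h2
  have : p ∣ X0 := by
    apply hp.dvd_of_dvd_pow (n := 2)
    exact ⟨p + X0 * Y - p * Y^2, by linear_combination hn⟩
  obtain ⟨X, hX⟩ := this
  have hY3 : 3 ∣ Y := by
    have : (3:ℤ) ∣ p * Y := by
      rw [← hY]; exact dvd_sub (Dvd.dvd.mul_left hB _) (Dvd.dvd.mul_left hB' _)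
    exact (Int.Prime.dvd_mul' (p := 3) (by norm_num) this).resolve_left h3p
  have hn2 : X^2 - X * Y + Y^2 = 1 := by
    have hpp : p^2 ≠ 0 := by positivity
    apply mul_left_cancel₀ hpp
    rw [hX] at hn; linear_combination hn
  have hY0 : Y = 0 := by
    obtain ⟨t, rfl⟩ := hY3
    by_contra hne
    have : t ≠ 0 := by rintro rfl; simp at hne
    have : 1 ≤ t^2 := by have := sq_nonneg t; have : t^2 ≠ 0 := by positivity
                         omega
    nlinarith [sq_nonneg (2*X-3*t)]
  subst hY0
  refine ⟨X, by linear_combination hn2, ?_, ?_⟩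
  · apply mul_left_cancel₀ hp0.ne'
    rw [hX] at hX0
    linear_combination -A' * hX0 - A * h2 - B' * hY
  · apply mul_left_cancel₀ hp0.ne'
    rw [hX] at hX0
    linear_combination -B' * hX0 - B * h2 +(A'-B')*hY

lemma char_aux (p m : ℕ) [Fact p.Prime] (hm : p = 3 * m + 1) (r : ZMod p) (hr : r ^ 2 + r + 1 = 0) (h3 : (3 : ZMod p) ≠ 0) :
    ∃ (χ : MulChar (ZMod p) ℂ) (w : ℂ) (a b : ZMod p → ℤ), orderOf χ = 3 ∧ w ^ 2 + w + 1 = 0 ∧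
      (∀ x, χ x = a x + b x * w) ∧ (∀ x, χ⁻¹ x = a x + b x * w ^ 2) ∧ (∀ x, x ^ m = a x + b x * r) ∧ (a 0 = 0 ∧ b 0 = 0) ∧
      ∀ x, x ≠ 0 → (a x = 1 ∧ b x = 0) ∨ (a x = 0 ∧ b x = 1) ∨ (a x = -1 ∧ b x = -1) := by
  have hp := (Fact.out : p.Prime)
  have hm0 : m ≠ 0 := by rintro rfl; simp at hm; subst hm; exact Nat.not_prime_one hp
  have hz := Complex.isPrimitiveRoot_exp 3 (by norm_num)
  obtain ⟨χ, hχ⟩ := MulChar.exists_mulChar_orderOf (ZMod p) (n := 3) (by rw [ZMod.card]; exact ⟨m, by omega⟩) hz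
  have hχ3 : χ ^ 3 = 1 := by rw [← hχ]; exact pow_orderOf_eq_one χ
  have hχx : ∀ x : ZMod p, x ≠ 0 → χ x ^ 3 = 1 := by
    intro x hx
    rw [← MulChar.pow_apply' _ (by norm_num), hχ3, MulChar.one_apply (isUnit_iff_ne_zero.mpr hx)]
  obtain ⟨u, hu⟩ := IsCyclic.exists_generator (α := (ZMod p)ˣ)
  have hgen : ∀ x : ZMod p, x ≠ 0 → ∃ n : ℕ, x = (u : ZMod p) ^ n := by
    intro x hx
    obtain ⟨n, hn⟩ := (mem_powers_iff_mem_zpowers).mpr (hu (Units.mk0 x hx))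
    exact ⟨n, by rw [← Units.val_pow_eq_pow_val]; simp at hn; rw [hn]; rfl⟩
  set z := χ (u : ZMod p) with hzdef
  have hz3 : z ^ 3 = 1 := hχx _ u.ne_zero
  have hz1 : z ≠ 1 := by
    intro h
    have : χ = 1 := by
      ext x
      obtain ⟨n, hn⟩ := hgen x x.ne_zero
      rw [hn, map_pow, ← hzdef, h, one_pow, MulChar.one_apply]
      exact (u ^ n).isUnit
    rw [this, orderOf_one] at hχ; norm_num at hχ
  have hzq : z ^ 2 + z + 1 = 0 := by
    have : (z - 1) * (z ^ 2 + z + 1) = 0 := by linear_combination hz3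
    exact (mul_eq_zero.mp this).resolve_left (sub_ne_zero.mpr hz1)
  have hr3 : r ^ 3 = 1 := by linear_combination (r - 1) * hr
  -- s = u^m
  set s := (u : ZMod p) ^ m with hs
  have hs3 : s ^ 3 = 1 := by
    rw [hs, ← pow_mul, mul_comm, ← ZMod.pow_card_sub_one_eq_one u.ne_zero]
    congr 1; omega
  have hs1 : s ≠ 1 := by
    intro h
    have h1 : u ^ m = 1 := by ext; simpa using h
    have h2 := orderOf_dvd_of_pow_eq_one h1
    rw [orderOf_eq_card_of_forall_mem_zpowers hu, Nat.card_eq_fintype_card, ZMod.card_units_eq_totient, Nat.totient_prime hp] at h2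
    have := Nat.le_of_dvd (by omega) h2
    omega
  have hsq : s ^ 2 + s + 1 = 0 := by
    have : (s - 1) * (s ^ 2 + s + 1) = 0 := by linear_combination hs3
    exact (mul_eq_zero.mp this).resolve_left (sub_ne_zero.mpr hs1)
  have hsr : s = r ∨ s = r ^ 2 := by
    have : (s - r) * (s - r ^ 2) = 0 := by linear_combination hsq - s * hr + hr3
    rcases mul_eq_zero.mp this with h | h
    · exact Or.inl (sub_eq_zero.mp h)
    · exact Or.inr (sub_eq_zero.mp h)
  have hw : ∃ w : ℂ, w ^ 2 + w + 1 = 0 ∧ ((s = r ∧ z = w) ∨ (s = r ^ 2 ∧ z = w ^ 2)) := by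
    rcases hsr with h | h
    · exact ⟨z, hzq, Or.inl ⟨h, rfl⟩⟩
    · exact ⟨z ^ 2, by linear_combination hzq + z * hz3, Or.inr ⟨h, by linear_combination -z * hz3⟩⟩
  obtain ⟨w, hwq, hw⟩ := hw
  have hw3 : w ^ 3 = 1 := by linear_combination (w - 1) * hwq
  have key : ∀ x : ZMod p, x ≠ 0 → ∃ n : ℕ, n < 3 ∧ χ x = w ^ n ∧ x ^ m = r ^ n := by
    intro x hx
    obtain ⟨n, hn⟩ := hgen x hx
    have red : ∀ k : ℕ, w ^ k = w ^ (k % 3) ∧ r ^ k = r ^ (k % 3) := fun k =>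
      ⟨pow_eq_pow_mod k hw3, pow_eq_pow_mod k hr3⟩
    have e1 : χ x = z ^ n := by rw [hn, map_pow]
    have e2 : x ^ m = s ^ n := by rw [hn, hs, ← pow_mul, ← pow_mul, mul_comm]
    rcases hw with ⟨h1, h2⟩ | ⟨h1, h2⟩
    · exact ⟨n % 3, Nat.mod_lt _ (by norm_num), by rw [e1, h2, ← (red n).1], by rw [e2, h1, ← (red n).2]⟩
    · refine ⟨(2 * n) % 3, Nat.mod_lt _ (by norm_num), ?_, ?_⟩
      · rw [e1, h2, ← (red _).1, pow_mul]
      · rw [e2, h1, ← (red _).2, pow_mul]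
  have inv : ∀ x : ZMod p, χ⁻¹ x = χ x ^ 2 := by
    intro x
    have : χ⁻¹ = χ ^ 2 := by
      rw [inv_eq_iff_mul_eq_one, ← pow_succ', hχ3]
    rw [this, MulChar.pow_apply' _ (by norm_num)]
  have ex : ∀ x : ZMod p, ∃ ab : ℤ × ℤ, χ x = ab.1 + ab.2 * w ∧ χ⁻¹ x = ab.1 + ab.2 * w ^ 2 ∧ x ^ m = ab.1 + ab.2 * r ∧
      (x = 0 → ab.1 = 0 ∧ ab.2 = 0) ∧ (x ≠ 0 → (ab.1 = 1 ∧ ab.2 = 0) ∨ (ab.1 = 0 ∧ ab.2 = 1) ∨ (ab.1 = -1 ∧ ab.2 = -1)) := by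
    intro x
    by_cases hx : x = 0
    · exact ⟨(0, 0), by simp [hx, hm0, MulChar.map_zero]⟩
    obtain ⟨n, hn, h1, h2⟩ := key x hx
    rw [inv, h1, h2]
    interval_cases n
    · exact ⟨(1, 0), by simp [hx]⟩
    · exact ⟨(0, 1), by simp [hx]⟩
    · refine ⟨(-1, -1), ?_, ?_, ?_, by simp [hx], by simp⟩
      · push_cast; linear_combination hwq
      · push_cast; linear_combination hwq + w * hw3
      · push_cast; linear_combination hr
  choose ab H1 H2 H3 H4 H5 using ex
  exact ⟨χ, w, fun x => (ab x).1, fun x => (ab x).2, hχ, hwq, H1, H2, H3, H4 0 rfl, H5⟩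

lemma conv_aux (p : ℕ) [Fact p.Prime] (χ ψ : MulChar (ZMod p) ℂ) (d : ZMod p) (hd : d ≠ 0) :
    ∑ y, χ y * ψ (d - y) = χ d * ψ d * jacobiSum χ ψ := by
  rw [jacobiSum, Finset.mul_sum, ← Equiv.sum_comp (Equiv.mulLeft₀ d hd)]
  refine Finset.sum_congr rfl fun y _ => ?_
  have : d - d * y = d * (1 - y) := by ring
  simp [this]; ring

lemma triple_aux (p : ℕ) [Fact p.Prime] (χ : MulChar (ZMod p) ℂ) (hχ : orderOf χ = 3) :
    ∑ x, ∑ y, (χ x - χ⁻¹ x) * ((χ y - χ⁻¹ y) * (χ (1 - x - y) - χ⁻¹ (1 - x - y)))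
      = jacobiSum χ⁻¹ χ⁻¹ - jacobiSum χ χ ∧ jacobiSum χ χ * jacobiSum χ⁻¹ χ⁻¹ = p := by
  have hχ3 : χ ^ 3 = 1 := by rw [← hχ]; exact pow_orderOf_eq_one χ
  have hne : χ ≠ 1 := by rintro rfl; simp at hχ
  have hi2 : χ * χ = χ⁻¹ := by rw [eq_comm, inv_eq_iff_mul_eq_one, ← hχ3, pow_succ, pow_two, mul_assoc]
  have hi2' : χ⁻¹ * χ⁻¹ = χ := by rw [← hi2]; calc _ = χ ^ 3 * χ := by rw [pow_succ, pow_two, mul_assoc (χ * χ)]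
    _ = χ := by rw [hχ3, one_mul]
  have hine : χ⁻¹ ≠ 1 := by simpa using hne
  have hJJ : jacobiSum χ χ * jacobiSum χ⁻¹ χ⁻¹ = p := by
    rw [jacobiSum_mul_jacobiSum_inv _ hne hne (by rw [hi2]; exact hine), ZMod.card]
    rw [ringChar.eq ℂ 0, ZMod.ringChar_zmod_n]
    exact (Fact.out : p.Prime).ne_zero.symm
  refine ⟨?_, hJJ⟩
  have hm1 : χ (-1) = 1 := by
    have h1 : χ (-1) ^ 3 = 1 := by
      rw [← MulChar.pow_apply' _ (by norm_num), hχ3, MulChar.one_apply (by simp)]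
    have h2 : χ (-1) ^ 2 = 1 := by rw [← map_pow]; simp
    linear_combination h1 - χ (-1) * h2
  have hm1' : χ⁻¹ (-1) = 1 := by rw [MulChar.inv_apply', inv_neg_one, hm1]
  have c1 : jacobiSum χ χ⁻¹ = -1 := by rw [jacobiSum_nontrivial_inv hne, hm1]
  have c2 : jacobiSum χ⁻¹ χ = -1 := by rw [jacobiSum_comm, c1]
  have s1 := MulChar.sum_eq_zero_of_ne_one hne
  have s2 := MulChar.sum_eq_zero_of_ne_one hine
  set J := jacobiSum χ χ
  set K := jacobiSum χ⁻¹ χ⁻¹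
  have v1 : ∀ x, χ x * χ x = χ⁻¹ x := fun x => by rw [← MulChar.mul_apply, hi2]
  have v2 : ∀ x, χ⁻¹ x * χ⁻¹ x = χ x := fun x => by rw [← MulChar.mul_apply, hi2']
  have v3 : ∀ x, x ≠ 0 → χ x * χ⁻¹ x = 1 := fun x hx => by
    rw [← MulChar.mul_apply, mul_inv_cancel, MulChar.one_apply (isUnit_iff_ne_zero.mpr hx)]
  have inner : ∀ d : ZMod p, ∑ y, (χ y - χ⁻¹ y) * (χ (d - y) - χ⁻¹ (d - y)) =
      χ⁻¹ d * J + χ d * K + 2 - (if d = 0 then 2 * (p : ℂ) else 0) := by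
    intro d
    by_cases hd : d = 0
    · subst hd
      have : ∀ y : ZMod p, (χ y - χ⁻¹ y) * (χ (0 - y) - χ⁻¹ (0 - y)) =
          χ⁻¹ y + χ y - 2 + (if y = 0 then 2 else 0) := by
        intro y
        by_cases hy : y = 0
        · simp [hy, MulChar.map_zero]
        have e1 : χ (0 - y) = χ y := by rw [zero_sub, neg_eq_neg_one_mul, map_mul, hm1, one_mul]
        have e2 : χ⁻¹ (0 - y) = χ⁻¹ y := by rw [zero_sub, neg_eq_neg_one_mul, map_mul, hm1', one_mul]
        rw [e1, e2, if_neg hy]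
        linear_combination v1 y + v2 y - 2 * v3 y hy
      simp only [this, Finset.sum_add_distrib, Finset.sum_sub_distrib, s1, s2]
      simp [MulChar.map_zero]
      ring
    · have e : ∀ y, (χ y - χ⁻¹ y) * (χ (d - y) - χ⁻¹ (d - y)) = χ y * χ (d - y) - χ y * χ⁻¹ (d - y) - χ⁻¹ y * χ (d - y) + χ⁻¹ y * χ⁻¹ (d - y) := by
        intro y; ring
      simp only [e, Finset.sum_add_distrib, Finset.sum_sub_distrib, conv_aux p _ _ d hd, c1, c2, if_neg hd]
      linear_combination J * v1 d + K * v2 d + 2 * v3 d hd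
  simp only [← Finset.mul_sum, inner]
  have e : ∀ x, (χ x - χ⁻¹ x) * (χ⁻¹ (1 - x) * J + χ (1 - x) * K + 2 - (if 1 - x = 0 then 2 * (p : ℂ) else 0)) =
     J * (χ x * χ⁻¹ (1 - x)) - J * (χ⁻¹ x * χ⁻¹ (1 - x)) + K * (χ x * χ (1 - x)) - K * (χ⁻¹ x * χ (1 - x)) + 2 * χ x - 2 * χ⁻¹ x := by
    intro x
    by_cases hx : 1 - x = 0
    · have : x = 1 := by linear_combination -hx
      subst this; simp
    · rw [if_neg hx]; ring
  simp only [e, Finset.sum_add_distrib, Finset.sum_sub_distrib, ← Finset.mul_sum, s1, s2]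
  have d1 : ∑ x, χ x * χ⁻¹ (1 - x) = -1 := c1
  have d2 : ∑ x, χ⁻¹ x * χ (1 - x) = -1 := c2
  have d3 : ∑ x, χ x * χ (1 - x) = J := rfl
  have d4 : ∑ x, χ⁻¹ x * χ⁻¹ (1 - x) = K := rfl
  rw [d1, d2, d3, d4]; ring

lemma main_aux_s7 (p m : ℕ) [Fact p.Prime] (hm : p = 3 * m + 1) (r : ZMod p)
    (hr : r ^ 2 + r + 1 = 0) (h3 : (3 : ZMod p) ≠ 0) :
    ∃ A B S : ℤ, A ^ 2 - A * B + B ^ 2 = p ∧ B = 3 * S ∧ (A : ZMod p) + B * r = 0 ∧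
      (A : ZMod 3) = -1 ∧ ((3 : ZMod p) ^ m = r ↔ (S : ZMod 3) = -1) := by
  have hp := (Fact.out : p.Prime)
  have hp2 := hp.two_le
  obtain ⟨χ, w, a, b, hχ, hw, H1, H2, H3, ⟨ha0, hb0⟩, H5⟩ := char_aux p m hm r hr h3
  obtain ⟨T1, T2⟩ := triple_aux p χ hχ
  have hJ : jacobiSum χ χ = ((∑ x, a (x * (1 - x)) : ℤ) : ℂ) + ((∑ x, b (x * (1 - x)) : ℤ) : ℂ) * w := by
    simp only [jacobiSum, ← map_mul]
    simp only [H1, Finset.sum_add_distrib, ← Finset.sum_mul]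
    push_cast; rfl
  have hK : jacobiSum χ⁻¹ χ⁻¹ = ((∑ x, a (x * (1 - x)) : ℤ) : ℂ) + ((∑ x, b (x * (1 - x)) : ℤ) : ℂ) * w ^ 2 := by
    simp only [jacobiSum, ← map_mul]
    simp only [H2, Finset.sum_add_distrib, ← Finset.sum_mul]
    push_cast; rfl
  have hF : ((∑ x, a (x * (1 - x)) : ℤ) : ZMod p) + ((∑ x, b (x * (1 - x)) : ℤ) : ZMod p) * r = 0 := by
    have := sum_zero_aux p m (by omega)
    simp only [H3, Finset.sum_add_distrib, ← Finset.sum_mul] at this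
    push_cast; exact this
  have hAB : ((∑ x, a (x * (1 - x)) : ℤ) : ZMod 3) + ((∑ x, b (x * (1 - x)) : ℤ) : ZMod 3) = -1 := by
    push_cast
    rw [← Finset.sum_add_distrib]
    have : ∀ x : ZMod p, ((a (x * (1 - x)) : ZMod 3) + (b (x * (1 - x)) : ZMod 3)) =
        1 - (if x = 0 then 1 else 0) - (if x = 1 then 1 else 0) := by
      intro x
      by_cases h0 : x = 0
      · simp [h0, ha0, hb0]
      by_cases h1 : x = 1
      · simp [h1, ha0, hb0]
      rw [if_neg h0, if_neg h1]
      rcases H5 (x * (1 - x)) (mul_ne_zero h0 (sub_ne_zero.mpr (Ne.symm h1))) with h | h | h <;>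
        rw [h.1, h.2] <;> decide
    simp only [this, Finset.sum_sub_distrib]
    simp [ZMod.card, hm]
    have : (3 : ZMod 3) = 0 := rfl
    rw [this]; simp
  have hS : (w - w ^ 2) ^ 3 * ((∑ x, ∑ y, b x * (b y * b (1 - x - y)) : ℤ) : ℂ) =
      jacobiSum χ⁻¹ χ⁻¹ - jacobiSum χ χ := by
    rw [← T1]
    push_cast
    simp only [Finset.mul_sum]
    refine Finset.sum_congr rfl fun x _ => Finset.sum_congr rfl fun y _ => ?_
    rw [H1, H2, H1, H2, H1, H2]; ring
  have hc := cyc_aux p h3 b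
  set A := ∑ x, a (x * (1 - x))
  set B := ∑ x, b (x * (1 - x))
  set S := ∑ x, ∑ y, b x * (b y * b (1 - x - y))
  have hB : B = 3 * S := by
    have hw0 : w - w ^ 2 ≠ 0 := by
      intro h
      have : (3 : ℂ) = 0 := by
        linear_combination (-(w - w ^ 2)) * h + (w ^ 2 - 3 * w + 3) * hw
      norm_num at this
    have : (w - w ^ 2) * ((B : ℂ) - 3 * S) = 0 := by
      rw [hJ, hK] at hS
      have hq : (w - w ^ 2) ^ 2 = -3 := by linear_combination (w ^ 2 - 3 * w + 3) * hw
      linear_combination hS - (w - w ^ 2) * S * hq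
    have := (mul_eq_zero.mp this).resolve_left hw0
    have := sub_eq_zero.mp this
    exact_mod_cast this
  have h3' : (3 : ZMod 3) = 0 := rfl
  refine ⟨A, B, S, ?_, hB, hF, ?_, ?_⟩
  · rw [hJ, hK] at T2
    have : (A : ℂ) ^ 2 - A * B + B ^ 2 = p := by
      rw [← T2]
      linear_combination (-(A : ℂ) * B - (w - 1) * B ^ 2) * hw
    exact_mod_cast this
  · rw [hB] at hAB; push_cast at hAB; rw [h3'] at hAB; simpa using hAB
  · rw [hc]
    have ht := H3 (3⁻¹)
    have hmul : (3 : ZMod p) ^ m * (3⁻¹) ^ m = 1 := by rw [← mul_pow, mul_inv_cancel₀ h3, one_pow]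
    rw [ht] at hmul
    rcases H5 (3⁻¹) (inv_ne_zero h3) with h | h | h <;> rw [h.1, h.2] at hmul <;> rw [h.2] <;> push_cast at hmul ⊢
    · refine iff_of_false (fun h' => h3 ?_) (by decide)
      rw [h'] at hmul
      have : r = 1 := by linear_combination hmul
      rw [this] at hr; linear_combination hr
    · refine iff_of_false (fun h' => h3 ?_) (by decide)
      rw [h'] at hmul
      linear_combination (2 - r) * hr + (r - 1) * hmul
    · refine iff_of_true ?_ (by decide)
      linear_combination -(3:ZMod p) ^ m * (r - 1) * hr + r * hmul + (3:ZMod p)^m * r * hr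

/-- For a prime `p ≡ 1 (mod 3)` with `4p = L² + 27M²`,
`3^{(p−1)/3} ≡ −(L+3M)(6M)⁻¹ (mod p)` iff `L ≡ −M (mod 3)`. -/
theorem three_character_omega_iff (p : ℕ) (hp : p.Prime) (hp3 : p % 3 = 1)
    (L M : ℤ) (h : (4 * p : ℤ) = L ^ 2 + 27 * M ^ 2) :
    (3 : ZMod p) ^ ((p - 1) / 3) =
        ((-(L + 3 * M) : ℤ) : ZMod p) * (((6 * M : ℤ) : ZMod p))⁻¹ ↔
      L ≡ -M [ZMOD 3] := by
  have : Fact p.Prime := ⟨hp⟩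
  have hp2 := hp.two_le
  obtain ⟨m, hm⟩ : ∃ m, p = 3 * m + 1 := ⟨p / 3, by omega⟩
  have hmm : (p - 1) / 3 = m := by omega
  rw [hmm]
  have h3 : (3 : ZMod p) ≠ 0 := by
    intro h'
    have h1 : ((3 : ℕ) : ZMod p) = 0 := by exact_mod_cast h'
    rw [ZMod.natCast_eq_zero_iff] at h1
    have := (Nat.prime_dvd_prime_iff_eq hp Nat.prime_three).mp h1
    omega
  have h2 : (2 : ZMod p) ≠ 0 := by
    intro h'
    have h1 : ((2 : ℕ) : ZMod p) = 0 := by exact_mod_cast h'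
    rw [ZMod.natCast_eq_zero_iff] at h1
    have := (Nat.prime_dvd_prime_iff_eq hp Nat.prime_two).mp h1
    omega
  have hpZ : Prime (p : ℤ) := Nat.prime_iff_prime_int.mp hp
  have hM : (M : ZMod p) ≠ 0 := by
    intro h'
    rw [ZMod.intCast_zmod_eq_zero_iff_dvd] at h'
    obtain ⟨k, rfl⟩ := h'
    have : (p : ℤ) ∣ L := hpZ.dvd_of_dvd_pow (n := 2) ⟨4 - 27 * p * k ^ 2, by linear_combination -h⟩
    obtain ⟨l, rfl⟩ := this
    have h4 : (p : ℤ) * (l ^ 2 + 27 * k ^ 2) = 4 := by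
      apply mul_left_cancel₀ hpZ.ne_zero
      linear_combination -h
    have h5 : (p : ℤ) ∣ 2 := hpZ.dvd_of_dvd_pow (n := 2) ⟨_, by rw [h4]; norm_num⟩
    have h6 : p ∣ 2 := by exact_mod_cast h5
    have := (Nat.prime_dvd_prime_iff_eq hp Nat.prime_two).mp h6
    omega
  have h6 : ((6 * M : ℤ) : ZMod p) ≠ 0 := by
    push_cast
    have : (6 : ZMod p) = 2 * 3 := by norm_num
    rw [this]; exact mul_ne_zero (mul_ne_zero h2 h3) hM
  set r := ((-(L + 3 * M) : ℤ) : ZMod p) * (((6 * M : ℤ) : ZMod p))⁻¹ with hrdef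
  have hr6 : r * (6 * M) = -(L + 3 * M) := by
    have : r * ((6 * M : ℤ) : ZMod p) = ((-(L + 3 * M) : ℤ) : ZMod p) := by
      rw [hrdef, mul_assoc, inv_mul_cancel₀ h6, mul_one]
    push_cast at this; exact this
  have hp0 : (L : ZMod p) ^ 2 + 27 * M ^ 2 = 0 := by
    have := congrArg (fun x : ℤ => (x : ZMod p)) h
    push_cast at this
    rw [← this]; simp
  have hr : r ^ 2 + r + 1 = 0 := by
    push_cast at h6
    apply (mul_eq_zero.mp (?_ : (6 * (M : ZMod p)) ^ 2 * (r ^ 2 + r + 1) = 0)).resolve_left (pow_ne_zero 2 h6)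
    linear_combination (r * (6 * M) - (L + 3 * M) + 6 * M) * hr6 + hp0
  obtain ⟨A, B, S, hN, hB, hF, hA, hiff⟩ := main_aux_s7 p m hm r hr h3
  rw [hiff]
  obtain ⟨A', hA'⟩ : ∃ A' : ℤ, L + 3 * M = 2 * A' := by
    have : (2 : ℤ) ∣ (L + 3 * M) := by
      apply Int.prime_two.dvd_of_dvd_pow (n := 2)
      exact ⟨2 * p + 3 * L * M - 9 * M ^ 2, by linear_combination -h⟩
    exact this
  have hN' : A' ^ 2 - A' * (3 * M) + (3 * M) ^ 2 = p := by
    have hL : L = 2 * A' - 3 * M := by linear_combination hA'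
    subst hL
    linarith
  have hF' : (A' : ZMod p) + 3 * M * r = 0 := by
    have := congrArg (fun x : ℤ => (x : ZMod p)) hA'
    push_cast at this
    apply mul_left_cancel₀ h2
    linear_combination hr6 - this
  have hdvd : (p : ℤ) ∣ A' * B - A * (3 * M) := by
    rw [← ZMod.intCast_zmod_eq_zero_iff_dvd]
    push_cast
    linear_combination B * hF' - 3 * M * hF
  obtain ⟨e, he, hAe, hBe⟩ := uniq_aux p A B A' (3 * M) hpZ ⟨S, hB⟩ ⟨M, rfl⟩ hN hN' (by omega) (by omega) hdvd
  have hSe : S = e * M := by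
    have : 3 * S = 3 * (e * M) := by linear_combination hBe - hB
    omega
  have hc : L ≡ -M [ZMOD 3] ↔ (L : ZMod 3) = -(M : ZMod 3) := by
    rw [← Int.cast_neg]; exact (ZMod.intCast_eq_intCast_iff L (-M) 3).symm
  rw [hc, hSe]
  have h3' : (3 : ZMod 3) = 0 := rfl
  have q1 := congrArg (fun x : ℤ => (x : ZMod 3)) hA'
  have q2 := congrArg (fun x : ℤ => (x : ZMod 3)) he
  have q3 := congrArg (fun x : ℤ => (x : ZMod 3)) hAe
  push_cast at q1 q2 q3 ⊢
  rw [h3', zero_mul, add_zero] at q1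
  rw [hA] at q3
  clear_value r
  generalize (L : ZMod 3) = l at *
  generalize (M : ZMod 3) = k at *
  generalize (A' : ZMod 3) = a at *
  generalize (e : ZMod 3) = e at *
  clear * - q1 q2 q3
  revert l k a e
  decide
end

section
/- Let q ≥ 5 be prime, let p and p′ be primes with p ≡ p′ ≡ 1 (mod 3), p ≠ q, p′ ≠ q, and let L, M, L′, M′ be integers with 4p = L² + 27M² and 4p′ = L′² + 27M′². Suppose there is an integer k not divisible by q with L′ ≡ kL (mod q) and M′ ≡ kM (mod q). Then q^{(p−1)/3} ≡ −(L + 3M)·(6M)⁻¹ (mod p) if and only if q^{(p′−1)/3} ≡ −(L′ + 3M′)·(6M′)⁻¹ (mod p′). -/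
abbrev EisInt := QuadraticAlgebra ℤ (-1) (-1)

theorem EisInt.re1 : (1 : EisInt).re = 1 := rfl
theorem EisInt.im1 : (1 : EisInt).im = 0 := rfl
theorem EisInt.re3 : (3 : EisInt).re = 3 := rfl
theorem EisInt.im3 : (3 : EisInt).im = 0 := rfl

theorem EisInt.exists_lift {R : Type*} [CommRing R] (w : R) (hw : w ^ 2 + w + 1 = 0) :
    ∃ f : EisInt →+* R, ∀ z : EisInt, f z = (z.re : R) + (z.im : R) * w := by
  refine ⟨(QuadraticAlgebra.lift (R := ℤ) (a := -1) (b := -1) (A := R)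
    ⟨w, ?_⟩).toRingHom, ?_⟩
  · simp only [neg_smul, one_smul]
    linear_combination hw
  · intro z
    simp [QuadraticAlgebra.lift]

instance EisInt.isDomain : IsDomain EisInt := by
  have hn : ∀ z : EisInt, QuadraticAlgebra.norm z = 0 → z = 0 := by
    intro z hz
    rw [QuadraticAlgebra.norm_def] at hz
    have h1 : z.im = 0 := by nlinarith [sq_nonneg (2 * z.re - z.im), sq_nonneg z.im]
    have h2 : z.re = 0 := by
      rw [h1] at hz
      nlinarith
    exact QuadraticAlgebra.ext h2 h1
  have : NoZeroDivisors EisInt := ⟨by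
    intro a b hab
    have : QuadraticAlgebra.norm a * QuadraticAlgebra.norm b = 0 := by
      rw [← map_mul, hab]; simp
    rcases mul_eq_zero.mp this with h | h
    · exact Or.inl (hn _ h)
    · exact Or.inr (hn _ h)⟩
  have : Nontrivial EisInt := ⟨⟨0, 1, by
    intro h; have := congrArg QuadraticAlgebra.re h; simp [EisInt.re1] at this⟩⟩
  exact NoZeroDivisors.to_isDomain _

def EisInt.om : EisInt := ⟨0, 1⟩

theorem EisInt.om_sq : EisInt.om ^ 2 + EisInt.om + 1 = 0 := by
  rw [sq]; ext <;> simp [EisInt.om, EisInt.re1, EisInt.im1]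

theorem prim_of_sq {R : Type*} [CommRing R] [IsDomain R] (w : R) (hw : w ^ 2 + w + 1 = 0)
    (h3 : (3 : R) ≠ 0) : IsPrimitiveRoot w 3 := by
  have : w ^ 3 = 1 := by linear_combination (w - 1) * hw
  refine IsPrimitiveRoot.mk_of_lt _ (by norm_num) this ?_
  intro l hl hl3 h
  interval_cases l
  · simp at h; rw [h] at hw; apply h3; linear_combination hw
  · have : w = 1 := by calc w = w ^ 3 := by rw [pow_succ]; rw [h, one_mul]
                          _ = 1 := this
    rw [this] at hw; apply h3; linear_combination hw

theorem exists_gen (p : ℕ) [Fact p.Prime] (hp3 : p % 3 = 1) (r : ZMod p)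
    (hr : r ^ 2 + r + 1 = 0) :
    ∃ g : (ZMod p)ˣ, (∀ x, x ∈ Subgroup.zpowers g) ∧ (g : ZMod p) ^ ((p - 1) / 3) = r := by
  obtain ⟨g, hg⟩ := IsCyclic.exists_generator (α := (ZMod p)ˣ)
  have hp := (Fact.out : p.Prime).two_le
  have ho : orderOf g = p - 1 := by
    rw [orderOf_eq_card_of_forall_mem_zpowers hg, Nat.card_eq_fintype_card, ZMod.card_units]
  set n := (p - 1) / 3 with hn
  have hn3 : n * 3 = p - 1 := by omega
  have h1 : (g ^ n) ^ 3 = 1 := by rw [← pow_mul, hn3, ← ho, pow_orderOf_eq_one]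
  have h2 : g ^ n ≠ 1 := by
    intro h
    have := orderOf_dvd_of_pow_eq_one h
    rw [ho] at this
    have := Nat.le_of_dvd (by omega) this
    omega
  set s : ZMod p := ((g ^ n : (ZMod p)ˣ) : ZMod p) with hs
  have h1' : s ^ 3 = 1 := by rw [hs, ← Units.val_pow_eq_pow_val, h1]; rfl
  have h2' : s - 1 ≠ 0 := by
    intro h; apply h2; ext; rw [← hs]; simpa [sub_eq_zero] using h
  have h3 : s ^ 2 + s + 1 = 0 := by
    apply mul_left_cancel₀ h2'
    linear_combination h1'
  have h4 : (s - r) * (s + r + 1) = 0 := by linear_combination h3 - hr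
  rcases mul_eq_zero.mp h4 with h | h
  · refine ⟨g, hg, ?_⟩
    rw [← Units.val_pow_eq_pow_val, ← hs]; linear_combination h
  · refine ⟨g⁻¹, by simpa using hg, ?_⟩
    rw [← Units.val_pow_eq_pow_val, inv_pow, Units.val_inv_eq_inv_val, ← hs]
    apply inv_eq_of_mul_eq_one_right
    linear_combination s * h - h3

theorem exists_char (p : ℕ) [Fact p.Prime] (hp3 : p % 3 = 1) (g : (ZMod p)ˣ)
    (hg : ∀ x, x ∈ Subgroup.zpowers g) : ∃ χ : MulChar (ZMod p) EisInt, χ g = EisInt.om := by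
  have hp := (Fact.out : p.Prime).two_le
  have h3 : EisInt.om ^ 3 = 1 := by linear_combination (EisInt.om - 1) * EisInt.om_sq
  let u : EisIntˣ := Units.ofPowEqOne EisInt.om 3 h3 (by norm_num)
  have hu : u ^ 3 = 1 := by ext1; simp [u]
  have hu' : u ∈ rootsOfUnity (Fintype.card (ZMod p)ˣ) EisInt := by
    rw [mem_rootsOfUnity, ZMod.card_units, show p - 1 = 3 * ((p - 1) / 3) by omega, pow_mul, hu,
      one_pow]
  exact ⟨MulChar.ofRootOfUnity hu' hg, by rw [MulChar.ofRootOfUnity_spec]; rfl⟩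

theorem jac_props (p : ℕ) [Fact p.Prime] (hp3 : p % 3 = 1) (r : ZMod p)
    (hr : r ^ 2 + r + 1 = 0) (g : (ZMod p)ˣ) (hg : ∀ x, x ∈ Subgroup.zpowers g)
    (hgr : (g : ZMod p) ^ ((p - 1) / 3) = r) (χ : MulChar (ZMod p) EisInt)
    (hχ : χ g = EisInt.om) (φ : EisInt →+* ZMod p)
    (hφ : ∀ z : EisInt, φ z = (z.re : ZMod p) + (z.im : ZMod p) * r) :
    χ ^ 3 = 1 ∧ (∀ x : ZMod p, φ (χ x) = x ^ ((p - 1) / 3)) ∧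
    (3 : ℤ) ∣ (jacobiSum χ χ).im ∧
    (jacobiSum χ χ).re ^ 2 - (jacobiSum χ χ).re * (jacobiSum χ χ).im
      + (jacobiSum χ χ).im ^ 2 = p ∧
    φ (jacobiSum χ χ) = 0 := by
  have hp := (Fact.out : p.Prime).two_le
  have h3 : EisInt.om ^ 3 = 1 := by linear_combination (EisInt.om - 1) * EisInt.om_sq
  have hom : EisInt.om ≠ 1 := by
    intro h; have := congrArg QuadraticAlgebra.re h; simp [EisInt.om, EisInt.re1] at this
  have hχ3 : χ ^ 3 = 1 := by
    rw [MulChar.eq_iff hg, MulChar.pow_apply_coe, hχ, h3, MulChar.one_apply_coe]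
  have hφχ : ∀ x : ZMod p, φ (χ x) = x ^ ((p - 1) / 3) := by
    intro x
    by_cases hx : x = 0
    · rw [hx, MulChar.map_zero, map_zero, zero_pow (by omega)]
    · obtain ⟨k, hk⟩ := (hg (Units.mk0 x hx))
      have : (Units.mk0 x hx : ZMod p) = x := rfl
      obtain ⟨m, hm⟩ : ∃ m : ℕ, g ^ m = Units.mk0 x hx := by
        have := hg (Units.mk0 x hx)
        rwa [← mem_powers_iff_mem_zpowers] at this
      rw [← this, ← hm, Units.val_pow_eq_pow_val, map_pow, map_pow, hχ, hφ, ← pow_mul, Nat.mul_comm,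
        pow_mul, hgr]
      simp [EisInt.om]
  refine ⟨hχ3, hφχ, ?_, ?_, ?_⟩
  · obtain ⟨z, -, hz⟩ := exists_jacobiSum_eq_neg_one_add (F := ZMod p) (n := 3) (by norm_num)
      hχ3 hχ3 (by rw [ZMod.card]; omega) (prim_of_sq EisInt.om EisInt.om_sq (by
        intro h; have := congrArg QuadraticAlgebra.re h; simp [EisInt.re3] at this))
    rw [hz]
    have : (EisInt.om - 1) ^ 2 = -3 * EisInt.om := by linear_combination EisInt.om_sq
    rw [this]
    simp [EisInt.om, EisInt.im1, EisInt.re3, EisInt.im3]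
  · obtain ⟨w, hw⟩ : ∃ w : ℂ, IsPrimitiveRoot w 3 := ⟨_, Complex.isPrimitiveRoot_exp 3 (by norm_num)⟩
    have hw3 := hw.pow_eq_one
    have hw1 : w - 1 ≠ 0 := sub_ne_zero.mpr (hw.ne_one (by norm_num))
    have hw2 : w ^ 2 + w + 1 = 0 := by
      apply mul_left_cancel₀ hw1; linear_combination hw3
    have hw2' : (w ^ 2) ^ 2 + w ^ 2 + 1 = 0 := by linear_combination hw2 + w * hw3
    obtain ⟨f, hf⟩ := EisInt.exists_lift w hw2
    obtain ⟨f', hf'⟩ := EisInt.exists_lift (w ^ 2) hw2'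
    have fom : f EisInt.om = w := by rw [hf]; simp [EisInt.om]
    have fom' : f' EisInt.om = w ^ 2 := by rw [hf']; simp [EisInt.om]
    have hinv : (χ.ringHomComp f)⁻¹ = χ.ringHomComp f' := by
      rw [MulChar.eq_iff hg, MulChar.inv_apply_eq_inv', MulChar.ringHomComp_apply,
        MulChar.ringHomComp_apply, hχ, fom, fom']
      apply inv_eq_of_mul_eq_one_right
      linear_combination hw3
    have hne : χ.ringHomComp f ≠ 1 := by
      rw [MulChar.ne_one_iff]
      refine ⟨g, ?_⟩
      rw [MulChar.ringHomComp_apply, hχ, fom]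
      exact sub_ne_zero.mp hw1
    have hne2 : χ.ringHomComp f * χ.ringHomComp f ≠ 1 := by
      rw [MulChar.ne_one_iff]
      refine ⟨g, ?_⟩
      rw [MulChar.mul_apply, MulChar.ringHomComp_apply, hχ, fom]
      intro h
      apply hw1
      linear_combination hw3 - w * h
    have key := jacobiSum_mul_jacobiSum_inv (F := ZMod p) (F' := ℂ) (by
      rw [ZMod.ringChar_zmod_n, ringChar.eq_zero]; omega) hne hne hne2
    rw [hinv, jacobiSum_ringHomComp, jacobiSum_ringHomComp, hf, hf', ZMod.card] at key
    have : ((((jacobiSum χ χ).re ^ 2 - (jacobiSum χ χ).re * (jacobiSum χ χ).im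
      + (jacobiSum χ χ).im ^ 2 : ℤ)) : ℂ) = ((p : ℤ) : ℂ) := by
      push_cast
      rw [← key]
      generalize ((jacobiSum χ χ).re : ℂ) = c
      generalize ((jacobiSum χ χ).im : ℂ) = d
      linear_combination -c * d * hw2 - d ^ 2 * hw3
    exact_mod_cast this
  · have : φ (jacobiSum χ χ) = ∑ x : ZMod p, x ^ ((p - 1) / 3) * (1 - x) ^ ((p - 1) / 3) := by
      simp [jacobiSum, hφχ]
    rw [this]
    have hexp : ∀ x : ZMod p, x ^ ((p - 1) / 3) * (1 - x) ^ ((p - 1) / 3) =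
      ∑ m ∈ Finset.range ((p - 1) / 3 + 1), ((-1) ^ m * (((p - 1) / 3).choose m : ZMod p))
        * x ^ ((p - 1) / 3 + m) := by
      intro x
      rw [show (1 - x) = (-x) + 1 by ring, add_pow, Finset.mul_sum]
      refine Finset.sum_congr rfl fun m _ => ?_
      rw [neg_pow, pow_add]; ring
    simp_rw [hexp]
    rw [Finset.sum_comm]
    refine Finset.sum_eq_zero fun m hm => ?_
    rw [← Finset.mul_sum, FiniteField.sum_pow_lt_card_sub_one, mul_zero]
    rw [ZMod.card]
    have := Finset.mem_range.mp hm
    omega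

theorem repr_unique_s8 (p : ℕ) (hp : p.Prime) (A B L M : ℤ) (h : (4 * p : ℤ) = L ^ 2 + 27 * M ^ 2)
    (h2 : (4 * p : ℤ) = A ^ 2 + 27 * B ^ 2) (hd : (p : ℤ) ∣ L * B - A * M) :
    (A = L ∧ B = M) ∨ (A = -L ∧ B = -M) := by
  obtain ⟨t, ht⟩ := hd
  have hp0 : (0 : ℤ) < p := by exact_mod_cast hp.pos
  have h16 : (16 : ℤ) * p ^ 2 = (A * L + 27 * B * M) ^ 2 + 27 * (p * t) ^ 2 := by
    rw [← ht]
    linear_combination 4 * p * h + (L ^ 2 + 27 * M ^ 2) * h2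
  have ht0 : t = 0 := by
    by_contra hne
    have : 1 ≤ t ^ 2 := by have := sq_pos_of_ne_zero hne; omega
    nlinarith [sq_nonneg (A * L + 27 * B * M), sq_pos_of_pos hp0]
  have hLB : L * B = A * M := by rw [ht0] at ht; linarith
  have hS : (0 : ℤ) < 4 * p := by omega
  have hA : (A - L) * (A + L) = 0 := by
    apply mul_left_cancel₀ hS.ne'
    rw [mul_zero]
    linear_combination A ^ 2 * h - L ^ 2 * h2 - 27 * (L * B + A * M) * hLB
  have hAL2 : A ^ 2 = L ^ 2 := by linear_combination hA
  have hB : (B - M) * (B + M) = 0 := by nlinarith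
  rcases mul_eq_zero.mp hA with h3 | h3 <;> rcases mul_eq_zero.mp hB with h4 | h4
  · left; constructor <;> linarith
  · have hA' : A = L := by linarith
    have hB' : B = -M := by linarith
    rw [hA', hB'] at hLB
    have : L * M = 0 := by linarith
    rcases mul_eq_zero.mp this with h5 | h5
    · right; constructor <;> linarith
    · left; constructor <;> linarith
  · have hA' : A = -L := by linarith
    have hB' : B = M := by linarith
    rw [hA', hB'] at hLB
    have : L * M = 0 := by linarith
    rcases mul_eq_zero.mp this with h5 | h5
    · left; constructor <;> linarith
    · right; constructor <;> linarith
  · right; constructor <;> linarith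

theorem gauss_recip (p q : ℕ) [Fact p.Prime] [Fact q.Prime] (hq2 : q % 2 = 1)
    (hpq : p ≠ q) {K : Type*} [Field K] [CharP K q]
    (χ : MulChar (ZMod p) K) (hχ3 : χ ^ 3 = 1) (hχ : χ ≠ 1) (ψ : AddChar (ZMod p) K)
    (hψ : ψ.IsPrimitive) :
    (q % 3 = 1 → (p * jacobiSum χ χ) ^ ((q - 1) / 3) * χ q = 1) ∧
    (q % 3 = 2 → (p * jacobiSum χ χ) ^ ((q + 1) / 3) = χ q * p) := by
  have hq : IsUnit (q : ZMod p) := by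
    rw [ZMod.isUnit_iff_coprime]
    exact (Nat.coprime_primes Fact.out Fact.out).mpr hpq.symm
  have hpK : (p : K) ≠ 0 := by
    rw [Ne, CharP.cast_eq_zero_iff K q]
    intro h
    exact hpq ((Nat.prime_dvd_prime_iff_eq Fact.out Fact.out).mp h).symm
  have hord : orderOf χ = 3 := orderOf_eq_prime hχ3 hχ
  have hm1 : χ (-1) = 1 := MulChar.val_neg_one_eq_one_of_odd_order (n := 3) (by decide) hχ3
  have hg3 : gaussSum χ ψ ^ 3 = p * jacobiSum χ χ := by
    have := gaussSum_pow_eq_prod_jacobiSum (by omega) hψ (χ := χ)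
    rw [hord, hm1, ZMod.card] at this
    simpa using this
  have hg0 : gaussSum χ ψ ≠ 0 := gaussSum_ne_zero_of_nontrivial (by rwa [ZMod.card]) hχ hψ
  have hfrob := gaussSum_frob q χ ψ
  rw [AddChar.pow_mulShift] at hfrob
  have hshift := gaussSum_mulShift (χ ^ q) ψ hq.unit
  rw [hq.unit_spec, ← hfrob] at hshift
  have hχq : χ q ^ 3 = 1 := by
    rw [← MulChar.pow_apply' _ (by norm_num), hχ3, MulChar.one_apply hq]
  constructor
  · intro h
    have : χ ^ q = χ := by
      rw [show q = 3 * ((q - 1) / 3) + 1 by omega, pow_succ, pow_mul, hχ3, one_pow, one_mul]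
    rw [this] at hshift
    apply mul_right_cancel₀ hg0
    rw [← hg3, ← pow_mul]
    have e : gaussSum χ ψ ^ q = gaussSum χ ψ ^ (3 * ((q - 1) / 3)) * gaussSum χ ψ := by
      rw [← pow_succ]; congr 1; omega
    rw [e] at hshift
    linear_combination hshift
  · intro h
    have : χ ^ q = χ ^ 2 := by
      rw [show q = 3 * ((q - 2) / 3) + 2 by omega, pow_add, pow_mul, hχ3, one_pow, one_mul]
    rw [this, MulChar.pow_apply' _ (by norm_num)] at hshift
    have hprod := gaussSum_mul_gaussSum_pow_orderOf_sub_one hχ hψ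
    rw [hord, hm1, ZMod.card, ← hshift] at hprod
    have e : gaussSum χ ψ ^ (3 * ((q + 1) / 3)) = gaussSum χ ψ ^ q * gaussSum χ ψ := by
      rw [← pow_succ]; congr 1; omega
    rw [← hg3, ← pow_mul, e]
    norm_num at hprod
    linear_combination χ q * hprod - gaussSum χ ψ ^ q * gaussSum χ ψ * hχq

theorem eq_om_iff {R : Type*} [CommRing R] [IsDomain R] (h3 : (3 : R) ≠ 0) (w : R)
    (hw : w ^ 2 + w + 1 = 0) (f : EisInt →+* R) (hf : f EisInt.om = w) (z : EisInt)
    (hz : z ^ 3 = 1) : f z = w ↔ z = EisInt.om := by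
  refine ⟨fun h => ?_, fun h => by rw [h, hf]⟩
  have h1 : (z - EisInt.om) * ((z - 1) * (z + 1 + EisInt.om)) = 0 := by
    linear_combination hz + (1 - z) * EisInt.om_sq
  have hw1 : w ≠ 1 := by
    intro h; rw [h] at hw; apply h3; linear_combination hw
  rcases mul_eq_zero.mp h1 with h2 | h2
  · exact sub_eq_zero.mp h2
  rcases mul_eq_zero.mp h2 with h4 | h4
  · exfalso
    rw [sub_eq_zero.mp h4, map_one] at h
    exact hw1 h.symm
  · exfalso
    have h5 := congrArg f h4
    simp only [map_add, map_one, map_zero, hf, h] at h5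
    -- 2 w + 1 = 0 and w² + w + 1 = 0 give 3 = 0
    apply h3
    linear_combination 4 * hw - (2 * w + 1) * h5

theorem main_iff (p q : ℕ) [Fact p.Prime] [Fact q.Prime] (hq5 : 5 ≤ q) (hp3 : p % 3 = 1)
    (hpq : p ≠ q) (L M : ℤ) (h : (4 * p : ℤ) = L ^ 2 + 27 * M ^ 2)
    {K : Type*} [Field K] [CharP K q] [IsAlgClosed K] (w : K) (hw : w ^ 2 + w + 1 = 0) :
    ((q : ZMod p) ^ ((p - 1) / 3) =
        ((-(L + 3 * M) : ℤ) : ZMod p) * (((6 * M : ℤ) : ZMod p))⁻¹) ↔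
    ((q % 3 = 1 → (p * ((L + 3 * M) / 2 + 3 * M * w) : K) ^ ((q - 1) / 3) * w = 1) ∧
     (q % 3 = 2 → (p * ((L + 3 * M) / 2 + 3 * M * w) : K) ^ ((q + 1) / 3) = w * p)) := by
  have hp : p.Prime := Fact.out
  have hq : q.Prime := Fact.out
  have hp7 : 5 ≤ p := by
    have := hp.two_le
    by_contra hlt
    interval_cases p <;> first | omega | (revert hp; decide)
  have hq2 : q % 2 = 1 := by
    rcases hq.eq_two_or_odd with h | h <;> omega
  have hq3 : q % 3 = 1 ∨ q % 3 = 2 := by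
    have : ¬ q % 3 = 0 := by
      intro h0
      have := (Nat.prime_dvd_prime_iff_eq Nat.prime_three hq).mp (Nat.dvd_of_mod_eq_zero h0)
      omega
    omega
  have small : ∀ (n : ℕ) (_ : 0 < n) (_ : n < 5), (n : ZMod p) ≠ 0 := by
    intro n h0 h5 hz
    rw [ZMod.natCast_eq_zero_iff] at hz
    have := Nat.le_of_dvd h0 hz
    omega
  have smallK : ∀ (n : ℕ) (_ : 0 < n) (_ : n < 5), (n : K) ≠ 0 := by
    intro n h0 h5 hz
    rw [CharP.cast_eq_zero_iff K q] at hz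
    have := Nat.le_of_dvd h0 hz
    omega
  have h2p : (2 : ZMod p) ≠ 0 := by exact_mod_cast small 2 (by norm_num) (by norm_num)
  have h3p : (3 : ZMod p) ≠ 0 := by exact_mod_cast small 3 (by norm_num) (by norm_num)
  have h2K : (2 : K) ≠ 0 := by exact_mod_cast smallK 2 (by norm_num) (by norm_num)
  have h3K : (3 : K) ≠ 0 := by exact_mod_cast smallK 3 (by norm_num) (by norm_num)
  have hpK : (p : K) ≠ 0 := by
    rw [Ne, CharP.cast_eq_zero_iff K q]
    intro h
    exact hpq ((Nat.prime_dvd_prime_iff_eq hq hp).mp h).symm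
  have hMp : (M : ZMod p) ≠ 0 := by
    intro hM
    have hz : (L : ZMod p) ^ 2 = 0 := by
      have := congrArg (Int.cast : ℤ → ZMod p) h
      push_cast at this
      rw [hM] at this
      simpa using this.symm
    have hL : (L : ZMod p) = 0 := by simpa using hz
    rw [ZMod.intCast_zmod_eq_zero_iff_dvd] at hL hM
    obtain ⟨a, ha⟩ := hL
    obtain ⟨b, hb⟩ := hM
    have hpz : (p : ℤ) ≠ 0 := by exact_mod_cast hp.ne_zero
    have : (4 : ℤ) = p * (a ^ 2 + 27 * b ^ 2) := by
      apply mul_left_cancel₀ hpz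
      rw [ha, hb] at h
      linear_combination h
    have h4 : (p : ℤ) ∣ 4 := ⟨_, this⟩
    have := Int.le_of_dvd (by norm_num) h4
    omega
  have h4p : (L : ZMod p) ^ 2 + 27 * (M : ZMod p) ^ 2 = 0 := by
    have := congrArg (Int.cast : ℤ → ZMod p) h
    push_cast at this
    rw [← this]; simp
  have h6 : ((6 * M : ℤ) : ZMod p) ≠ 0 := by
    push_cast
    rw [show (6 : ZMod p) = 2 * 3 by norm_num]
    exact mul_ne_zero (mul_ne_zero h2p h3p) hMp
  set r : ZMod p := ((-(L + 3 * M) : ℤ) : ZMod p) * (((6 * M : ℤ) : ZMod p))⁻¹ with hrdef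
  have hrM : 6 * (M : ZMod p) * r = -(L + 3 * M) := by
    rw [hrdef]
    field_simp
    push_cast
    ring
  have hr : r ^ 2 + r + 1 = 0 := by
    apply mul_left_cancel₀ (pow_ne_zero 2 h6)
    push_cast
    linear_combination (6 * (M : ZMod p) * r - (L + 3 * M) + 6 * M) * hrM + h4p
  obtain ⟨g, hg, hgr⟩ := exists_gen p hp3 r hr
  obtain ⟨χ, hχ⟩ := exists_char p hp3 g hg
  obtain ⟨φ, hφ⟩ := EisInt.exists_lift r hr
  obtain ⟨f, hf⟩ := EisInt.exists_lift w hw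
  obtain ⟨hχ3, hφχ, ⟨B, hB⟩, hnorm, hJ0⟩ := jac_props p hp3 r hr g hg hgr χ hχ φ hφ
  have fom : f EisInt.om = w := by rw [hf]; simp [EisInt.om]
  have φom : φ EisInt.om = r := by rw [hφ]; simp [EisInt.om]
  have hqu : IsUnit (q : ZMod p) := by
    rw [ZMod.isUnit_iff_coprime]
    exact (Nat.coprime_primes hq hp).mpr hpq.symm
  have hχq : χ q ^ 3 = 1 := by
    rw [← MulChar.pow_apply' _ (by norm_num), hχ3, MulChar.one_apply hqu]
  rw [← hφχ, eq_om_iff h3p r hr φ φom _ hχq, ← eq_om_iff h3K w hw f fom _ hχq]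
  -- identify the Jacobi sum
  have hJK : ∃ s : K, s ^ 2 = 1 ∧ f (jacobiSum χ χ) = s * ((L + 3 * M) / 2 + 3 * M * w) := by
    rw [hφ, hB] at hJ0
    rw [hf]
    rw [hB] at hnorm ⊢
    generalize (jacobiSum χ χ).re = c at *
    have hd : (p : ℤ) ∣ L * B - (2 * c - 3 * B) * M := by
      rw [← ZMod.intCast_zmod_eq_zero_iff_dvd]
      apply mul_left_cancel₀ h3p
      push_cast at hJ0 ⊢
      linear_combination -6 * (M : ZMod p) * hJ0 + 3 * B * hrM
    rcases repr_unique_s8 p hp (2 * c - 3 * B) B L M h (by rw [← hnorm]; ring) hd with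
      ⟨h1, h2⟩ | ⟨h1, h2⟩
    · refine ⟨1, by ring, ?_⟩
      have h1' := congrArg (Int.cast : ℤ → K) h1
      have h2' := congrArg (Int.cast : ℤ → K) h2
      push_cast at h1' h2' ⊢
      field_simp
      linear_combination h1' + (3 + 6 * w) * h2'
    · refine ⟨-1, by ring, ?_⟩
      have h1' := congrArg (Int.cast : ℤ → K) h1
      have h2' := congrArg (Int.cast : ℤ → K) h2
      push_cast at h1' h2' ⊢
      field_simp
      linear_combination h1' + (3 + 6 * w) * h2'
  obtain ⟨s, hs, hJK⟩ := hJK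
  have hw1 : w ≠ 1 := by
    intro h; rw [h] at hw; apply h3K; linear_combination hw
  have hne : χ.ringHomComp f ≠ 1 := by
    rw [MulChar.ne_one_iff]
    refine ⟨g, ?_⟩
    rw [MulChar.ringHomComp_apply, hχ, fom]
    exact hw1
  have hcube : (χ.ringHomComp f) ^ 3 = 1 := by
    rw [MulChar.ringHomComp_pow, hχ3, MulChar.ringHomComp_one]
  have : NeZero (p : K) := ⟨hpK⟩
  obtain ⟨ζ, hζ⟩ := HasEnoughRootsOfUnity.exists_primitiveRoot K p
  obtain ⟨g1, g2⟩ := gauss_recip p q hq2 hpq (χ.ringHomComp f) hcube hne _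
    (AddChar.zmodChar_primitive_of_primitive_root p hζ)
  rw [jacobiSum_ringHomComp, MulChar.ringHomComp_apply, hJK] at g1 g2
  set X : K := (L + 3 * M) / 2 + 3 * M * w with hX
  have hw0 : w ≠ 0 := by intro h0; rw [h0] at hw; simp at hw
  rcases hq3 with h3 | h3
  · have e : (p * (s * X)) ^ ((q - 1) / 3) = (p * X) ^ ((q - 1) / 3) := by
      rw [show p * (s * X) = s * (p * X) by ring, mul_pow,
        show (q - 1) / 3 = 2 * ((q - 1) / 6) by omega, pow_mul s, hs, one_pow, one_mul]
    have g1 := g1 h3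
    rw [e] at g1
    have h3' : ¬ q % 3 = 2 := by omega
    simp only [h3, forall_const, show ¬ ((1 : ℕ) = 2) by norm_num, false_imp_iff, and_true]
    constructor
    · intro hh; rw [← hh]; exact g1
    · intro hh
      have hne0 : (p * X) ^ ((q - 1) / 3) ≠ 0 := left_ne_zero_of_mul_eq_one g1
      exact mul_left_cancel₀ hne0 (g1.trans hh.symm)
  · have e : (p * (s * X)) ^ ((q + 1) / 3) = (p * X) ^ ((q + 1) / 3) := by
      rw [show p * (s * X) = s * (p * X) by ring, mul_pow,
        show (q + 1) / 3 = 2 * ((q + 1) / 6) by omega, pow_mul s, hs, one_pow, one_mul]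
    have g2 := g2 h3
    rw [e] at g2
    simp only [h3, forall_const, show ¬ ((2 : ℕ) = 1) by norm_num, false_imp_iff, true_and]
    rw [g2]
    exact ⟨fun hh => by rw [hh], fun hh => mul_right_cancel₀ hpK hh⟩

theorem cast_scale {K : Type*} [Field K] (p p' : ℕ) (L M L' M' k : ℤ)
    (h : (4 * p : ℤ) = L ^ 2 + 27 * M ^ 2)
    (h' : (4 * p' : ℤ) = L' ^ 2 + 27 * M' ^ 2)
    (hLK : (L' : K) = k * L) (hMK : (M' : K) = k * M) (h4K : (4 : K) ≠ 0) :
    (p' : K) = k ^ 2 * p := by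
  have e1 := congrArg (Int.cast : ℤ → K) h
  have e2 := congrArg (Int.cast : ℤ → K) h'
  push_cast at e1 e2
  rw [hLK, hMK] at e2
  apply mul_left_cancel₀ h4K
  linear_combination e2 - (k : K) ^ 2 * e1

/-- The value `F_q(L,M)` is constant along lines through the origin modulo `q`:
if `(L', M') ≡ (kL, kM) (mod q)` with `q ∤ k`, then the character condition
`q^{(p−1)/3} ≡ −(L+3M)(6M)⁻¹ (mod p)` holds for `(p, L, M)` iff it holds for `(p', L', M')`. -/
theorem character_constant_on_lines (q p p' : ℕ) (hq : q.Prime) (hq5 : 5 ≤ q)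
    (hp : p.Prime) (hp' : p'.Prime) (hp3 : p % 3 = 1) (hp'3 : p' % 3 = 1)
    (hpq : p ≠ q) (hp'q : p' ≠ q)
    (L M L' M' : ℤ)
    (h : (4 * p : ℤ) = L ^ 2 + 27 * M ^ 2)
    (h' : (4 * p' : ℤ) = L' ^ 2 + 27 * M' ^ 2)
    (k : ℤ) (hk : ¬ (q : ℤ) ∣ k)
    (hL : L' ≡ k * L [ZMOD (q : ℤ)]) (hM : M' ≡ k * M [ZMOD (q : ℤ)]) :
    ((q : ZMod p) ^ ((p - 1) / 3) =
        ((-(L + 3 * M) : ℤ) : ZMod p) * (((6 * M : ℤ) : ZMod p))⁻¹ ↔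
      (q : ZMod p') ^ ((p' - 1) / 3) =
        ((-(L' + 3 * M') : ℤ) : ZMod p') * (((6 * M' : ℤ) : ZMod p'))⁻¹) := by
  have : Fact q.Prime := ⟨hq⟩
  have : Fact p.Prime := ⟨hp⟩
  have : Fact p'.Prime := ⟨hp'⟩
  let K := AlgebraicClosure (ZMod q)
  have hcK : CharP K q := inferInstance
  have smallK : ∀ (n : ℕ) (_ : 0 < n) (_ : n < 5), (n : K) ≠ 0 := by
    intro n h0 h5 hz
    rw [CharP.cast_eq_zero_iff K q] at hz
    have := Nat.le_of_dvd h0 hz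
    omega
  have h2K : (2 : K) ≠ 0 := by exact_mod_cast smallK 2 (by norm_num) (by norm_num)
  have h3K : ((3 : ℕ) : K) ≠ 0 := smallK 3 (by norm_num) (by norm_num)
  have h4K : (4 : K) ≠ 0 := by exact_mod_cast smallK 4 (by norm_num) (by norm_num)
  obtain ⟨w, hw⟩ : ∃ w : K, w ^ 2 + w + 1 = 0 := by
    have : NeZero ((3 : ℕ) : K) := ⟨h3K⟩
    obtain ⟨w, hw⟩ := HasEnoughRootsOfUnity.exists_primitiveRoot K 3
    refine ⟨w, ?_⟩
    have hw1 : w - 1 ≠ 0 := sub_ne_zero.mpr (hw.ne_one (by norm_num))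
    apply mul_left_cancel₀ hw1
    linear_combination hw.pow_eq_one
  rw [main_iff p q hq5 hp3 hpq L M h w hw, main_iff p' q hq5 hp'3 hp'q L' M' h' w hw]
  have hLK : (L' : K) = k * L := by
    have := (ZMod.intCast_eq_intCast_iff _ _ q).mpr hL
    have := congrArg (algebraMap (ZMod q) K) this
    simpa using this
  have hMK : (M' : K) = k * M := by
    have := (ZMod.intCast_eq_intCast_iff _ _ q).mpr hM
    have := congrArg (algebraMap (ZMod q) K) this
    simpa using this
  have hk0' : (k : ZMod q) ≠ 0 := by
    rwa [Ne, ZMod.intCast_zmod_eq_zero_iff_dvd]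
  have hkq : (k : K) ^ (q - 1) = 1 := by
    have := congrArg (algebraMap (ZMod q) K) (ZMod.pow_card_sub_one_eq_one hk0')
    simpa using this
  have hk0 : (k : K) ≠ 0 := by
    intro h0
    rw [h0, zero_pow (by omega)] at hkq
    exact zero_ne_one hkq
  have hpp : (p' : K) = k ^ 2 * p := by
    exact cast_scale p p' L M L' M' k h h' hLK hMK h4K
  have hXX : (p' * ((L' + 3 * M') / 2 + 3 * M' * w) : K) =
      k ^ 3 * (p * ((L + 3 * M) / 2 + 3 * M * w)) := by
    rw [hLK, hMK, hpp]; ring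
  rw [hXX]
  generalize (p * ((L + 3 * M) / 2 + 3 * M * w) : K) = X
  rw [hpp]
  refine and_congr ?_ ?_
  · refine forall_congr' fun h1 => ?_
    rw [mul_pow, ← pow_mul, show 3 * ((q - 1) / 3) = q - 1 by omega, hkq, one_mul]
  · refine forall_congr' fun h1 => ?_
    rw [mul_pow, ← pow_mul, show 3 * ((q + 1) / 3) = (q - 1) + 2 by omega, pow_add, hkq, one_mul,
      mul_left_comm]
    exact (mul_right_inj' (pow_ne_zero 2 hk0)).symm
end

section
/- Let q > 3 be a prime with q ≡ 2 or 7 (mod 9), let p be a prime with p ≡ 1 (mod 3) and p ≠ q, and let L, M be integers with 4p = L² + 27M². Then q^{(p−1)/3} ≡ −(L + 3M)·(6M)⁻¹ (mod p) if and only if there exists an integer t such that (t³ − 3t² − 9t + 3)·L ≡ −3(t³ + 9t² − 9t − 9)·M (mod q). -/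
namespace CubicOmega

/-- The Eisenstein integers, with basis `1, ω`. -/
abbrev Eis := QuadraticAlgebra ℤ (-1) (-1)

/-- The cube root of unity. -/
def om : Eis := ⟨0, 1⟩

lemma om_rel : om ^ 2 + om + 1 = 0 := by
  rw [pow_two]; ext <;> simp [om, QuadraticAlgebra.re_one, QuadraticAlgebra.im_one]

/-- The ring homomorphism sending `om` to `w`. -/
noncomputable def ev {R : Type*} [CommRing R] (w : R) (hw : w ^ 2 + w + 1 = 0) : Eis →ₐ[ℤ] R :=
  QuadraticAlgebra.lift ⟨w, by
    simp only [neg_smul, one_smul]; linear_combination hw⟩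

lemma ev_apply {R : Type*} [CommRing R] (w : R) (hw : w ^ 2 + w + 1 = 0) (z : Eis) :
    ev w hw z = (z.re : R) + z.im * w := by
  simp [ev, QuadraticAlgebra.lift]

lemma ev_om {R : Type*} [CommRing R] (w : R) (hw : w ^ 2 + w + 1 = 0) :
    ev w hw om = w := by
  simp [ev_apply, om]

lemma cube_eq_one {R : Type*} [CommRing R] {w : R} (hw : w ^ 2 + w + 1 = 0) : w ^ 3 = 1 := by
  linear_combination (w - 1) * hw

section chi
variable {p : ℕ} [Fact p.Prime]

open Classical in
/-- value of the cubic character -/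
noncomputable def chiFun (r : ZMod p) (x : ZMod p) : Eis :=
  if x = 0 then 0 else
    if x ^ ((p - 1) / 3) = 1 then 1 else if x ^ ((p - 1) / 3) = r then om else om ^ 2

lemma tri (hp3 : p % 3 = 1) {r : ZMod p} (hr : r ^ 2 + r + 1 = 0) {x : ZMod p} (hx : x ≠ 0) :
    x ^ ((p - 1) / 3) = 1 ∨ x ^ ((p - 1) / 3) = r ∨ x ^ ((p - 1) / 3) = r ^ 2 := by
  have h1 : (x ^ ((p - 1) / 3)) ^ 3 = 1 := by
    rw [← pow_mul, Nat.div_mul_cancel (by omega)]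
    exact ZMod.pow_card_sub_one_eq_one hx
  set y := x ^ ((p - 1) / 3)
  have : (y - 1) * ((y - r) * (y - r ^ 2)) = 0 := by
    linear_combination h1 + (y - 1) * (-y + (r - 1)) * hr
  rcases mul_eq_zero.1 this with h | h
  · exact Or.inl (sub_eq_zero.1 h)
  rcases mul_eq_zero.1 h with h | h
  · exact Or.inr (Or.inl (sub_eq_zero.1 h))
  · exact Or.inr (Or.inr (sub_eq_zero.1 h))

lemma three_ne (hp3 : p % 3 = 1) : (3 : ZMod p) ≠ 0 := by
  intro h
  have h' : ((3 : ℕ) : ZMod p) = 0 := by exact_mod_cast h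
  rw [ZMod.natCast_eq_zero_iff] at h'
  have := (Nat.prime_dvd_prime_iff_eq Fact.out Nat.prime_three).1 h'
  omega

lemma r_ne_one {F : Type*} [Field F] (h3 : (3 : F) ≠ 0) {r : F} (hr : r ^ 2 + r + 1 = 0) :
    r ≠ 1 := by
  rintro rfl; apply h3; linear_combination hr

lemma r_sq_ne_one {F : Type*} [Field F] (h3 : (3 : F) ≠ 0) {r : F} (hr : r ^ 2 + r + 1 = 0) :
    r ^ 2 ≠ 1 := by
  intro h
  apply r_ne_one h3 hr
  linear_combination (r - 1) * hr - r * h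

lemma r_sq_ne {F : Type*} [Field F] (h3 : (3 : F) ≠ 0) {r : F} (hr : r ^ 2 + r + 1 = 0) :
    r ^ 2 ≠ r := by
  intro h
  apply r_sq_ne_one h3 hr
  linear_combination (r - 1) * hr - r * h

lemma chiFun_pow (hp3 : p % 3 = 1) {r : ZMod p} (hr : r ^ 2 + r + 1 = 0) {x : ZMod p}
    (hx : x ≠ 0) (i : ℕ) (h : x ^ ((p - 1) / 3) = r ^ i) : chiFun r x = om ^ i := by
  have h3 := three_ne hp3
  have e : ∀ {R : Type} [CommRing R] {w : R} (hw : w ^ 2 + w + 1 = 0), w ^ i = w ^ (i % 3) := by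
    intro R _ w hw
    conv_lhs => rw [← Nat.div_add_mod i 3, pow_add, pow_mul, cube_eq_one hw, one_pow, one_mul]
  rw [e hr] at h
  rw [e om_rel]
  have : i % 3 = 0 ∨ i % 3 = 1 ∨ i % 3 = 2 := by omega
  rcases this with h' | h' | h' <;> rw [h'] at h ⊢
  · simp [chiFun, hx, h]
  · simp [chiFun, hx, h, r_ne_one h3 hr]
  · simp [chiFun, hx, h, r_sq_ne h3 hr, r_sq_ne_one h3 hr]

lemma tri' (hp3 : p % 3 = 1) {r : ZMod p} (hr : r ^ 2 + r + 1 = 0) {x : ZMod p} (hx : x ≠ 0) :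
    ∃ i : ℕ, i < 3 ∧ x ^ ((p - 1) / 3) = r ^ i := by
  rcases tri hp3 hr hx with h | h | h
  · exact ⟨0, by simp [h]⟩
  · exact ⟨1, by simp [h]⟩
  · exact ⟨2, by simp [h]⟩

/-- The cubic residue character attached to `r`. -/
noncomputable def chi (hp3 : p % 3 = 1) {r : ZMod p} (hr : r ^ 2 + r + 1 = 0) :
    MulChar (ZMod p) Eis where
  toFun := chiFun r
  map_one' := by simp [chiFun]
  map_mul' x y := by
    by_cases hx : x = 0
    · simp [chiFun, hx]
    by_cases hy : y = 0
    · simp [chiFun, hy]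
    obtain ⟨i, -, hi⟩ := tri' hp3 hr hx
    obtain ⟨j, -, hj⟩ := tri' hp3 hr hy
    rw [chiFun_pow hp3 hr hx i hi, chiFun_pow hp3 hr hy j hj, ← pow_add]
    apply chiFun_pow hp3 hr (mul_ne_zero hx hy)
    rw [mul_pow, hi, hj, pow_add]
  map_nonunit' x hx := by
    have : x = 0 := by simpa using hx
    simp [chiFun, this]

/-- The character with values in `R`. -/
noncomputable def chiR (hp3 : p % 3 = 1) {r : ZMod p} (hr : r ^ 2 + r + 1 = 0)
    {R : Type*} [CommRing R] {w : R} (hw : w ^ 2 + w + 1 = 0) : MulChar (ZMod p) R :=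
  (chi hp3 hr).ringHomComp (ev w hw : Eis →+* R)

/-- The Jacobi sum as an Eisenstein integer. -/
noncomputable def Jz (hp3 : p % 3 = 1) {r : ZMod p} (hr : r ^ 2 + r + 1 = 0) : Eis :=
  jacobiSum (chi hp3 hr) (chi hp3 hr)

variable (hp3 : p % 3 = 1) {r : ZMod p} (hr : r ^ 2 + r + 1 = 0)
    {R : Type*} [CommRing R] {w : R} (hw : w ^ 2 + w + 1 = 0)

lemma jacobi_chiR : jacobiSum (chiR hp3 hr hw) (chiR hp3 hr hw) =
    ((Jz hp3 hr).re : R) + (Jz hp3 hr).im * w := by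
  rw [← ev_apply w hw, chiR, jacobiSum_ringHomComp]; rfl

lemma chiR_pow {x : ZMod p} (hx : x ≠ 0) (i : ℕ) (h : x ^ ((p - 1) / 3) = r ^ i) :
    chiR hp3 hr hw x = w ^ i := by
  have : chi hp3 hr x = om ^ i := chiFun_pow hp3 hr hx i h
  simp [chiR, MulChar.ringHomComp_apply, this, ev_om]

lemma chiR_cube : chiR hp3 hr hw ^ 3 = 1 := by
  ext x
  obtain ⟨i, -, hi⟩ := tri' hp3 hr x.ne_zero
  rw [MulChar.pow_apply_coe, chiR_pow hp3 hr hw x.ne_zero i hi, ← pow_mul, mul_comm, pow_mul,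
    cube_eq_one hw]
  simp

lemma chiR_neg_one : chiR hp3 hr hw (-1) = 1 := by
  have h : (-1 : ZMod p) ≠ 0 := neg_ne_zero.2 one_ne_zero
  obtain ⟨i, -, hi⟩ := tri' hp3 hr h
  have h1 := chiR_pow hp3 hr hw h i hi
  have h2 : (chiR hp3 hr hw (-1)) ^ 2 = 1 := by
    rw [← map_pow]; simp
  have h3 : (chiR hp3 hr hw (-1)) ^ 3 = 1 := by
    rw [h1, ← pow_mul, mul_comm, pow_mul, cube_eq_one hw, one_pow]
  linear_combination h3 - chiR hp3 hr hw (-1) * h2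

lemma w2_rel {R : Type*} [CommRing R] {w : R} (hw : w ^ 2 + w + 1 = 0) : (w ^ 2) ^ 2 + w ^ 2 + 1 = 0 := by
  linear_combination (w ^ 2 - w + 1) * hw

lemma chiR_inv : (chiR hp3 hr hw)⁻¹ = chiR hp3 hr (w2_rel hw) := by
  rw [inv_eq_iff_mul_eq_one]
  ext x
  obtain ⟨i, -, hi⟩ := tri' hp3 hr x.ne_zero
  rw [MulChar.mul_apply, chiR_pow hp3 hr hw x.ne_zero i hi,
    chiR_pow hp3 hr (w2_rel hw) x.ne_zero i hi, ← mul_pow]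
  have : w * w ^ 2 = 1 := by linear_combination cube_eq_one hw
  simp [this]

lemma exists_noncube {p : ℕ} [Fact p.Prime] (hp3 : p % 3 = 1) : ∃ x : ZMod p, x ≠ 0 ∧ x ^ ((p - 1) / 3) ≠ 1 := by
  by_contra! hc
  have hpp : p.Prime := Fact.out
  have := hpp.two_le
  obtain ⟨g, hg⟩ := IsCyclic.exists_generator (α := (ZMod p)ˣ)
  have h1 := orderOf_eq_card_of_forall_mem_zpowers hg
  rw [Nat.card_eq_fintype_card, ZMod.card_units] at h1
  have h2 : g ^ ((p - 1) / 3) = 1 := by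
    ext; push_cast; exact hc _ g.ne_zero
  have h3 := Nat.le_of_dvd (by omega) (orderOf_dvd_of_pow_eq_one h2)
  omega

end chi

section chiF
variable {p : ℕ} [Fact p.Prime] (hp3 : p % 3 = 1) {r : ZMod p} (hr : r ^ 2 + r + 1 = 0)
    {F : Type*} [Field F] {w : F} (hw : w ^ 2 + w + 1 = 0)

lemma chiR_ne_one (h3 : (3 : F) ≠ 0) : chiR hp3 hr hw ≠ 1 := by
  obtain ⟨x, hx, hx1⟩ := exists_noncube hp3
  intro h
  have h1 : chiR hp3 hr hw x = 1 := by rw [h]; exact MulChar.one_apply (isUnit_iff_ne_zero.2 hx)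
  obtain ⟨i, hi3, hi⟩ := tri' hp3 hr hx
  rw [chiR_pow hp3 hr hw hx i hi] at h1
  interval_cases i
  · simp [hi] at hx1
  · exact r_ne_one h3 hw (by simpa using h1)
  · exact r_sq_ne_one h3 hw h1

lemma chiR_mul_self : chiR hp3 hr hw * chiR hp3 hr hw = (chiR hp3 hr hw)⁻¹ := by
  rw [eq_inv_iff_mul_eq_one, ← chiR_cube hp3 hr hw]
  rw [pow_succ, pow_two]

lemma chiR_eq_iff (h3 : (3 : F) ≠ 0) {x : ZMod p} (hx : x ≠ 0) :
    chiR hp3 hr hw x = w ↔ x ^ ((p - 1) / 3) = r := by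
  constructor
  · intro h
    obtain ⟨i, hi3, hi⟩ := tri' hp3 hr hx
    rw [chiR_pow hp3 hr hw hx i hi] at h
    interval_cases i
    · exact absurd (by simpa using h.symm) (r_ne_one h3 hw)
    · simpa using hi
    · exact absurd h (r_sq_ne h3 hw)
  · intro h
    simpa using chiR_pow hp3 hr hw hx 1 (by simpa using h)

end chiF

section facts
variable {p : ℕ} [Fact p.Prime] (hp3 : p % 3 = 1) {r : ZMod p} (hr : r ^ 2 + r + 1 = 0)

/-- `a + b r = 0` mod `p`. -/
lemma Jz_mod : ((Jz hp3 hr).re : ZMod p) + (Jz hp3 hr).im * r = 0 := by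
  rw [← jacobi_chiR hp3 hr hr, jacobiSum]
  have hpp : p.Prime := Fact.out
  have h2 := hpp.two_le
  have hm : (p - 1) / 3 ≠ 0 := by omega
  have key : ∀ x : ZMod p, chiR hp3 hr hr x = x ^ ((p - 1) / 3) := by
    intro x
    by_cases hx : x = 0
    · subst hx; rw [MulChar.map_zero, zero_pow hm]
    · obtain ⟨i, -, hi⟩ := tri' hp3 hr hx
      rw [chiR_pow hp3 hr hr hx i hi, hi]
  simp only [key]
  set m := (p - 1) / 3
  have : ∀ x : ZMod p, x ^ m * (1 - x) ^ m =
      ∑ j ∈ Finset.range (m + 1), ((-1) ^ j * (m.choose j : ZMod p)) * x ^ (m + j) := by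
    intro x
    rw [show (1 - x) = -x + 1 by ring, add_pow, Finset.mul_sum]
    refine Finset.sum_congr rfl fun j _ => ?_
    rw [neg_pow]; ring
  simp only [this]
  rw [Finset.sum_comm]
  refine Finset.sum_eq_zero fun j hj => ?_
  rw [← Finset.mul_sum, FiniteField.sum_pow_lt_card_sub_one, mul_zero]
  rw [ZMod.card]
  have := Finset.mem_range.1 hj
  omega

lemma exists_w {K : Type*} [Field K] [IsAlgClosed K] : ∃ w : K, w ^ 2 + w + 1 = 0 := by
  open Polynomial in
  obtain ⟨w, hw⟩ := IsAlgClosed.exists_root (X ^ 2 + X + 1 : K[X]) (by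
    have : (X ^ 2 + X + 1 : K[X]).degree = 2 := by compute_degree!
    rw [this]; norm_num)
  exact ⟨w, by simpa using hw⟩

lemma Jz_norm : (Jz hp3 hr).re ^ 2 - (Jz hp3 hr).re * (Jz hp3 hr).im + (Jz hp3 hr).im ^ 2
    = (p : ℤ) := by
  obtain ⟨w, hw⟩ := exists_w (K := ℂ)
  have h3 : (3 : ℂ) ≠ 0 := by norm_num
  have hpp : p.Prime := Fact.out
  have h := jacobiSum_mul_jacobiSum_inv (F := ZMod p) (F' := ℂ) (χ := chiR hp3 hr hw)
    (φ := chiR hp3 hr hw) (by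
      rw [ringChar.eq_zero, ZMod.ringChar_zmod_n]; exact hpp.ne_zero.symm)
    (chiR_ne_one hp3 hr hw h3) (chiR_ne_one hp3 hr hw h3) (by
      rw [chiR_mul_self, chiR_inv]; exact chiR_ne_one hp3 hr _ h3)
  rw [chiR_inv, jacobi_chiR hp3 hr hw, jacobi_chiR hp3 hr (w2_rel hw), ZMod.card] at h
  have : (((Jz hp3 hr).re ^ 2 - (Jz hp3 hr).re * (Jz hp3 hr).im + (Jz hp3 hr).im ^ 2 : ℤ) : ℂ)
    = ((p : ℤ) : ℂ) := by
    push_cast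
    rw [← h]
    set a := ((Jz hp3 hr).re : ℂ)
    set b := ((Jz hp3 hr).im : ℂ)
    linear_combination (-a*b - b^2 * (w - 1)) * hw
  exact_mod_cast this

lemma ev_inj {w : ℂ} (hw : w ^ 2 + w + 1 = 0) : Function.Injective (ev w hw) := by
  rw [injective_iff_map_eq_zero]
  intro z hz
  rw [ev_apply] at hz
  have h1 : ((z.re ^ 2 - z.re * z.im + z.im ^ 2 : ℤ) : ℂ) = 0 := by
    push_cast
    linear_combination (z.re + z.im * w ^ 2) * hz - (z.re * z.im + z.im ^ 2 * (w - 1)) * hw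
  have h2 : z.re ^ 2 - z.re * z.im + z.im ^ 2 = 0 := by exact_mod_cast h1
  have h3 : z.im = 0 := by
    have : z.im ^ 2 ≤ 0 := by nlinarith [sq_nonneg (2 * z.re - z.im)]
    nlinarith [sq_nonneg z.im, pow_eq_zero_iff (two_ne_zero) |>.1 (le_antisymm this (sq_nonneg _))]
  have h4 : z.re = 0 := by
    rw [h3] at h2; simpa using h2
  ext <;> simp [h3, h4]

lemma Jz_three : (3 : ℤ) ∣ (Jz hp3 hr).im := by
  obtain ⟨w, hw⟩ := exists_w (K := ℂ)
  have h3 : (3 : ℂ) ≠ 0 := by norm_num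
  have hprim : IsPrimitiveRoot w 3 := by
    rw [IsPrimitiveRoot.iff_def]
    refine ⟨cube_eq_one hw, fun l hl => ?_⟩
    rw [← Nat.div_add_mod l 3, pow_add, pow_mul, cube_eq_one hw, one_pow, one_mul] at hl
    have : l % 3 = 0 ∨ l % 3 = 1 ∨ l % 3 = 2 := by omega
    rcases this with h' | h' | h' <;> rw [h'] at hl
    · omega
    · exact absurd (by simpa using hl) (r_ne_one h3 hw)
    · exact absurd hl (r_sq_ne_one h3 hw)
  obtain ⟨z, hz, h⟩ := exists_jacobiSum_eq_neg_one_add (F := ZMod p) (n := 3) (by norm_num)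
    (chiR_cube hp3 hr hw) (chiR_cube hp3 hr hw) (by rw [ZMod.card]; omega) hprim
  have hle : Algebra.adjoin ℤ {w} ≤ (ev w hw).range := by
    rw [Algebra.adjoin_le_iff]
    rintro _ rfl
    exact ⟨om, ev_om _ _⟩
  obtain ⟨y, rfl⟩ := hle hz
  rw [jacobi_chiR, ← ev_apply w hw] at h
  have h' : ev w hw (Jz hp3 hr) = ev w hw (-1 + y * (om - 1) ^ 2) := by
    rw [h]; simp [ev_om]
  have h'' := ev_inj hw h'
  have e : (om - 1) ^ 2 = (⟨0, -3⟩ : Eis) := by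
    rw [show (om - 1) ^ 2 = (om ^ 2 + om + 1) - (om + om + om) by ring, om_rel]
    ext <;> simp [om]
  rw [h'', e]
  simp only [QuadraticAlgebra.im_add, QuadraticAlgebra.im_neg, QuadraticAlgebra.im_one,
    QuadraticAlgebra.im_mul]
  omega
end facts

section core
variable {q : ℕ} [Fact q.Prime] {K : Type*} [Field K] [CharP K q]

lemma int_of_frob {x : K} (hx : x ^ q = x) : ∃ n : ℤ, (n : K) = x :=
  (_root_.mem_bot_iff_intCast q K).1 ((Subfield.mem_bot_iff_pow_eq_self K q).2 hx)

lemma ident {w t a M : K} (hw : w ^ 2 + w + 1 = 0) :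
    2 * ((t + (1 + 2 * w)) ^ 3 * (w * (a + 3 * M * w ^ 2))
      - (t - (1 + 2 * w)) ^ 3 * (w ^ 2 * (a + 3 * M * w))) =
    (1 + 2 * w) * ((t ^ 3 - 3 * t ^ 2 - 9 * t + 3) * (2 * a - 3 * M)
      + 3 * (t ^ 3 + 9 * t ^ 2 - 9 * t - 9) * M) := by
  grind

lemma core [IsAlgClosed K] {w a M : K} (hw : w ^ 2 + w + 1 = 0) (h2 : (2 : K) ≠ 0)
    (h3 : (3 : K) ≠ 0)
    (hJ : a + 3 * M * w ≠ 0) (hJ' : a + 3 * M * w ^ 2 ≠ 0) (k : ℕ)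
    (hk : (q = 3 * k + 1 ∧ w ^ q = w) ∨ (q + 1 = 3 * k ∧ w ^ q = w ^ 2)) :
    ((a + 3 * M * w ^ 2) / (a + 3 * M * w)) ^ k = w ^ k ↔
    ∃ t : ℤ, ((t : K) ^ 3 - 3 * t ^ 2 - 9 * t + 3) * (2 * a - 3 * M)
      + 3 * (t ^ 3 + 9 * t ^ 2 - 9 * t - 9) * M = 0 := by
  have hid := fun t : K => ident (t := t) (a := a) (M := M) hw
  set J := a + 3 * M * w
  set J' := a + 3 * M * w ^ 2
  set θ := 1 + 2 * w with hθ
  have hθ2 : θ ^ 2 = -3 := by rw [hθ]; linear_combination 4 * hw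
  have hθ0 : θ ≠ 0 := by
    intro h; apply h3; rw [h] at hθ2; linear_combination hθ2
  have hw0 : w ≠ 0 := by
    rintro rfl; simp at hw
  have hθq : (q = 3 * k + 1 ∧ θ ^ q = θ) ∨ (q + 1 = 3 * k ∧ θ ^ q = -θ) := by
    have e : θ ^ q = 1 + 2 * w ^ q := by
      rw [hθ, ← frobenius_def q, map_add, map_mul, map_one, map_ofNat, frobenius_def]
    rcases hk with ⟨h, h'⟩ | ⟨h, h'⟩
    · left; exact ⟨h, by rw [e, h']⟩
    · right; exact ⟨h, by rw [e, h', hθ]; linear_combination 2 * hw⟩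
  have hfix : ∀ t : ℤ, (t : K) ^ q = t := by
    intro t
    rw [← frobenius_def q]; simp
  constructor
  · intro h
    obtain ⟨s, hs3, hs1⟩ : ∃ s : K, s ^ 3 = J' / J / w ∧ s ≠ 1 := by
      obtain ⟨s, hs⟩ := IsAlgClosed.exists_pow_nat_eq (J' / J / w) (n := 3) (by norm_num)
      by_cases h1 : s = 1
      · refine ⟨w, ?_, r_ne_one h3 hw⟩
        rw [← hs, h1, cube_eq_one hw, one_pow]
      · exact ⟨s, hs, h1⟩
    have hs0 : s ≠ 0 := by
      rintro rfl
      have : J' / J / w ≠ 0 := div_ne_zero (div_ne_zero hJ' hJ) hw0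
      apply this; rw [← hs3]; simp
    have hsk : s ^ (3 * k) = 1 := by
      rw [pow_mul, hs3, div_pow, h, div_self (pow_ne_zero _ hw0)]
    have hs1' : 1 - s ≠ 0 := sub_ne_zero.2 hs1.symm
    have ht : (θ * (1 + s) / (1 - s)) ^ q = θ * (1 + s) / (1 - s) := by
      clear_value θ
      rw [div_pow, mul_pow, add_pow_char, sub_pow_char, one_pow]
      rcases hθq with ⟨h, h'⟩ | ⟨h, h'⟩
      · have : s ^ q = s := by rw [h, pow_succ, hsk, one_mul]
        rw [h', this]
      · have : s ^ q * s = 1 := by rw [← pow_succ, h, hsk]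
        have e : s ^ q = s⁻¹ := eq_inv_of_mul_eq_one_left this
        have h5 : s - 1 ≠ 0 := sub_ne_zero.2 hs1
        rw [h', e]
        field_simp
        grind
    obtain ⟨t, ht'⟩ := int_of_frob ht
    refine ⟨t, ?_⟩
    have h4 := hid t
    have e1 : (t : K) + θ = 2 * θ / (1 - s) := by rw [ht']; field_simp; ring
    have e2 : (t : K) - θ = 2 * θ * s / (1 - s) := by rw [ht']; field_simp; ring
    have e3 : J' = J * w * s ^ 3 := by rw [hs3]; field_simp
    have e4 : ((t : K) + θ) ^ 3 * (w * J') - (t - θ) ^ 3 * (w ^ 2 * J) = 0 := by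
      rw [e1, e2, e3]; field_simp; ring
    rw [e4, mul_zero] at h4
    exact (mul_eq_zero.1 h4.symm).resolve_left hθ0
  · rintro ⟨t, ht⟩
    have h4 := hid t
    rw [ht, mul_zero] at h4
    have h5 := (mul_eq_zero.1 h4).resolve_left h2
    have hp : (t : K) + θ ≠ 0 := by
      intro h
      have e : (t : K) - θ = -(2 * θ) := by linear_combination h
      rw [h, e] at h5
      have : (-(2 * θ)) ^ 3 * (w ^ 2 * J) ≠ 0 := by
        simp [h2, hθ0, hw0, hJ]
      apply this; linear_combination -h5
    have hm : (t : K) - θ ≠ 0 := by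
      intro h
      have e : (t : K) + θ = (2 * θ) := by linear_combination h
      rw [h, e] at h5
      have : ((2 * θ)) ^ 3 * (w * J') ≠ 0 := by
        simp [h2, hθ0, hw0, hJ']
      apply this; linear_combination h5
    have e : J' / J = w * ((t - θ) / (t + θ)) ^ 3 := by
      have : ((t : K) + θ) ^ 3 * J' = (t - θ) ^ 3 * (w * J) :=
        mul_left_cancel₀ hw0 (by linear_combination h5)
      field_simp
      linear_combination this
    rw [e, mul_pow, ← pow_mul]
    have : (((t : K) - θ) / (t + θ)) ^ (3 * k) = 1 := by
      rcases hθq with ⟨h, h'⟩ | ⟨h, h'⟩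
      · have : (((t : K) - θ) / (t + θ)) ^ q = ((t : K) - θ) / (t + θ) := by
          rw [div_pow, add_pow_char, sub_pow_char, hfix, h']
        rw [h, pow_succ] at this
        exact (mul_eq_right₀ (div_ne_zero hm hp)).1 this
      · have : (((t : K) - θ) / (t + θ)) ^ q = ((t : K) + θ) / (t - θ) := by
          rw [div_pow, add_pow_char, sub_pow_char, hfix, h', sub_neg_eq_add, ← sub_eq_add_neg]
        rw [← h, pow_succ, this]
        field_simp
    rw [this, mul_one]

end core

section gauss
variable {p : ℕ} [Fact p.Prime] (hp3 : p % 3 = 1) {r : ZMod p} (hr : r ^ 2 + r + 1 = 0)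
  {q : ℕ} [Fact q.Prime] {K : Type*} [Field K] [CharP K q] [IsAlgClosed K]
  {w : K} (hw : w ^ 2 + w + 1 = 0)

lemma gauss_ex (h3 : (3 : K) ≠ 0) (hpK : (p : K) ≠ 0) (hqp : (q : ZMod p) ≠ 0) :
    ∃ g : K, g ≠ 0 ∧ g ^ 3 = p * ((Jz hp3 hr).re + (Jz hp3 hr).im * w) ∧
      (q % 3 = 1 → chiR hp3 hr hw q * g ^ q = g) ∧
      (q % 3 = 2 → g ^ (q + 1) = chiR hp3 hr hw q * p) := by
  have : NeZero (p : K) := ⟨hpK⟩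
  obtain ⟨ζ, hζ⟩ := HasEnoughRootsOfUnity.exists_primitiveRoot K p
  let ψ : AddChar (ZMod p) K := AddChar.zmodChar p hζ.pow_eq_one
  have hψ : ψ.IsPrimitive := AddChar.zmodChar_primitive_of_primitive_root p hζ
  set χ := chiR hp3 hr hw with hχdef
  have hχ1 : χ ≠ 1 := chiR_ne_one hp3 hr hw h3
  have hχi : χ⁻¹ ≠ 1 := by simpa using hχ1
  have hχ3 : χ ^ 3 = 1 := chiR_cube hp3 hr hw
  have hneg : χ (-1) = 1 := chiR_neg_one hp3 hr hw
  have hnegi : χ⁻¹ (-1) = 1 := by rw [hχdef, chiR_inv]; exact chiR_neg_one hp3 hr _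
  have hmul : χ * χ = χ⁻¹ := chiR_mul_self hp3 hr hw
  have e1 : gaussSum χ ψ * gaussSum χ⁻¹ ψ = p := by
    have h1 := gaussSum_mul_gaussSum_eq_card hχ1 hψ
    have h2 := mul_gaussSum_inv_eq_gaussSum χ⁻¹ ψ
    rw [hnegi, one_mul] at h2
    rw [h2, ZMod.card] at h1
    exact h1
  have e2 : gaussSum χ⁻¹ ψ * jacobiSum χ χ = gaussSum χ ψ * gaussSum χ ψ := by
    have := jacobiSum_mul_nontrivial (χ := χ) (φ := χ) (by rw [hmul]; exact hχi) ψ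
    rwa [hmul] at this
  rw [hχdef, jacobi_chiR hp3 hr hw, ← hχdef] at e2
  have hu : IsUnit (q : ZMod p) := isUnit_iff_ne_zero.2 hqp
  have e3 : (χ ^ q) q * gaussSum χ ψ ^ q = gaussSum (χ ^ q) ψ := by
    rw [gaussSum_frob q, AddChar.pow_mulShift]
    have := gaussSum_mulShift (χ ^ q) ψ hu.unit
    simpa using this
  have hg0 : gaussSum χ ψ ≠ 0 := by
    intro h; rw [h, zero_mul] at e1; exact hpK e1.symm
  refine ⟨gaussSum χ ψ, hg0, ?_, ?_, ?_⟩
  · linear_combination -gaussSum χ ψ * e2 + ((Jz hp3 hr).re + (Jz hp3 hr).im * w) * e1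
  · intro h
    have : χ ^ q = χ := by
      conv_lhs => rw [← Nat.div_add_mod q 3, pow_add, pow_mul, hχ3, one_pow, one_mul, h, pow_one]
    rwa [this] at e3
  · intro h
    have : χ ^ q = χ⁻¹ := by
      conv_lhs => rw [← Nat.div_add_mod q 3, pow_add, pow_mul, hχ3, one_pow, one_mul, h, pow_two,
        hmul]
    rw [this] at e3
    have h6 : χ q * χ⁻¹ q = 1 := by
      rw [← MulChar.mul_apply, mul_inv_cancel, MulChar.one_apply hu]
    rw [pow_succ]
    linear_combination χ q * e1 + χ q * gaussSum χ ψ * e3 - gaussSum χ ψ ^ (q) * gaussSum χ ψ * h6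

lemma combine {p : ℕ} [Fact p.Prime] (hp3 : p % 3 = 1) {r : ZMod p} (hr : r ^ 2 + r + 1 = 0)
    {q : ℕ} [Fact q.Prime] {K : Type*} [Field K] [CharP K q] [IsAlgClosed K]
    {w : K} (hw : w ^ 2 + w + 1 = 0) (h3 : (3 : K) ≠ 0) (hpK : (p : K) ≠ 0) (hqp : (q : ZMod p) ≠ 0)
    (hq9 : q % 9 = 2 ∨ q % 9 = 7) :
    ∃ k : ℕ, ((q = 3 * k + 1 ∧ w ^ q = w) ∨ (q + 1 = 3 * k ∧ w ^ q = w ^ 2)) ∧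
      ((Jz hp3 hr).re + (Jz hp3 hr).im * w : K) ≠ 0 ∧
      ((Jz hp3 hr).re + (Jz hp3 hr).im * w ^ 2 : K) ≠ 0 ∧
      ((((Jz hp3 hr).re + (Jz hp3 hr).im * w ^ 2 : K) / ((Jz hp3 hr).re + (Jz hp3 hr).im * w)) ^ k
        = w ^ k ↔ (q : ZMod p) ^ ((p - 1) / 3) = r) := by
  obtain ⟨g, hg0, hg3, hA, hB⟩ := gauss_ex hp3 hr (q := q) hw h3 hpK hqp
  have hN : ((Jz hp3 hr).re + (Jz hp3 hr).im * w : K) *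
      ((Jz hp3 hr).re + (Jz hp3 hr).im * w ^ 2 : K) = p := by
    have h := congrArg (Int.cast : ℤ → K) (Jz_norm hp3 hr)
    push_cast at h
    rw [← h]
    set a := ((Jz hp3 hr).re : K)
    set b := ((Jz hp3 hr).im : K)
    linear_combination (a*b + b^2 * (w - 1)) * hw
  have hfr : ((Jz hp3 hr).re + (Jz hp3 hr).im * w : K) ^ q =
      (Jz hp3 hr).re + (Jz hp3 hr).im * w ^ q := by
    rw [← frobenius_def q, map_add, map_mul, map_intCast, map_intCast, frobenius_def]
  rw [← chiR_eq_iff hp3 hr hw h3 hqp]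
  set a := ((Jz hp3 hr).re : K)
  set b := ((Jz hp3 hr).im : K)
  have hJ : a + b * w ≠ 0 := by
    intro h; rw [h, zero_mul] at hN; exact hpK hN.symm
  have hJ' : a + b * w ^ 2 ≠ 0 := by
    intro h; rw [h, mul_zero] at hN; exact hpK hN.symm
  have hw0 : w ≠ 0 := by
    rintro rfl; simp at hw
  have hwpow : ∀ n, w ^ n = w ^ (n % 3) := by
    intro n
    conv_lhs => rw [← Nat.div_add_mod n 3, pow_add, pow_mul, cube_eq_one hw, one_pow, one_mul]
  have hg3' : ∀ k, g ^ (3 * k) =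
      (a + b * w) ^ (3 * k) * ((a + b * w ^ 2) / (a + b * w)) ^ k := by
    intro k
    rw [pow_mul, pow_mul, ← mul_pow, hg3, ← hN]
    congr 1
    field_simp
  set c := chiR hp3 hr hw q
  rcases hq9 with hq | hq
  · obtain ⟨k, hk⟩ : ∃ k, q + 1 = 3 * k := ⟨(q + 1) / 3, by omega⟩
    have hwq : w ^ q = w ^ 2 := by rw [hwpow q, show q % 3 = 2 by omega]
    refine ⟨k, Or.inr ⟨hk, hwq⟩, hJ, hJ', ?_⟩
    have h1 := hB (by omega)
    rw [hk, hg3' k, ← hk, pow_succ, hfr, hwq, mul_comm (a + b * w ^ 2), hN, mul_comm] at h1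
    rw [mul_right_cancel₀ hpK h1, hwpow k, show k % 3 = 1 by omega, pow_one]
  · obtain ⟨k, hk⟩ : ∃ k, q = 3 * k + 1 := ⟨q / 3, by omega⟩
    have hwq : w ^ q = w := by rw [hwpow q, show q % 3 = 1 by omega, pow_one]
    refine ⟨k, Or.inl ⟨hk, hwq⟩, hJ, hJ', ?_⟩
    have h1 := hA (by omega)
    rw [hwq] at hfr
    have h2 : (a + b * w) ^ (3 * k) = 1 := by
      rw [hk, pow_succ] at hfr
      exact (mul_eq_right₀ hJ).1 hfr
    have h4 : g ^ q = g ^ (3 * k) * g := by rw [← pow_succ, ← hk]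
    rw [h4, hg3' k, h2, one_mul, ← mul_assoc] at h1
    have h5 := (mul_eq_right₀ hg0).1 h1
    rw [hwpow k, show k % 3 = 2 by omega]
    have hwi : w * w ^ 2 = 1 := by linear_combination cube_eq_one hw
    constructor
    · intro h
      rw [h] at h5
      exact mul_right_cancel₀ (pow_ne_zero 2 hw0) (h5.trans hwi.symm)
    · intro h
      rw [h] at h5
      exact mul_left_cancel₀ hw0 (h5.trans hwi.symm)

end gauss

lemma uniq {p : ℕ} (hp : p.Prime) {L M L' M' : ℤ}
    (h : (4 * p : ℤ) = L ^ 2 + 27 * M ^ 2)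
    (h' : (4 * p : ℤ) = L' ^ 2 + 27 * M' ^ 2) (hd : (p : ℤ) ∣ L * M' - M * L') :
    (L' = L ∧ M' = M) ∨ (L' = -L ∧ M' = -M) := by
  have hpZ : Prime (p : ℤ) := Nat.prime_iff_prime_int.1 hp
  have hp0 : (p : ℤ) ≠ 0 := hpZ.ne_zero
  obtain ⟨D, hD⟩ := hd
  have hX : (p : ℤ) ∣ L * L' + 27 * M * M' := by
    apply hpZ.dvd_of_dvd_pow (n := 2)
    refine ⟨16 * p - 27 * p * D ^ 2, ?_⟩
    linear_combination (-4 * p) * h - (L ^ 2 + 27 * M ^ 2) * h' - 27 * (L * M' - M * L' + p * D) * hD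
  obtain ⟨X, hX⟩ := hX
  have h16 : X ^ 2 + 27 * D ^ 2 = 16 := by
    apply mul_left_cancel₀ (pow_ne_zero 2 hp0)
    linear_combination (-4 * p) * h - (L ^ 2 + 27 * M ^ 2) * h' - 27 * (L * M' - M * L' + p * D) * hD
      - (L * L' + 27 * M * M' + p * X) * hX
  have hD0 : D = 0 := by
    by_contra hne
    have : 1 ≤ D ^ 2 := Int.one_le_abs hne |> fun h => by nlinarith [sq_abs D]
    nlinarith [sq_nonneg X]
  have hX4 : X = 4 ∨ X = -4 := by
    rw [hD0] at h16
    have : (X - 4) * (X + 4) = 0 := by linear_combination h16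
    rcases mul_eq_zero.1 this with h | h
    · left; omega
    · right; omega
  rw [hD0, mul_zero] at hD
  have k1 : 4 * L' = X * L := by
    apply mul_left_cancel₀ hp0
    linear_combination L' * h + L * hX - 27 * M * hD
  have k2 : 4 * M' = X * M := by
    apply mul_left_cancel₀ hp0
    linear_combination M' * h + M * hX + L * hD
  rcases hX4 with rfl | rfl
  · left; constructor <;> omega
  · right; constructor <;> omega
end CubicOmega

/-- For a prime `q > 3` with `q ≡ ±2 (mod 9)` and a prime `p ≡ 1 (mod 3)`, `p ≠ q`,
with `4p = L² + 27M²`: `F_q(L,M) = ω` iff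
`(t³−3t²−9t+3)L ≡ −3(t³+9t²−9t−9)M (mod q)` for some integer `t`. -/
theorem omega_slopes_two_mod_nine (q p : ℕ) (hq : q.Prime) (hq3 : 3 < q)
    (hq9 : q % 9 = 2 ∨ q % 9 = 7)
    (hp : p.Prime) (hp3 : p % 3 = 1) (hpq : p ≠ q)
    (L M : ℤ) (h : (4 * p : ℤ) = L ^ 2 + 27 * M ^ 2) :
    ((q : ZMod p) ^ ((p - 1) / 3) =
        ((-(L + 3 * M) : ℤ) : ZMod p) * (((6 * M : ℤ) : ZMod p))⁻¹) ↔
      ∃ t : ℤ, (t ^ 3 - 3 * t ^ 2 - 9 * t + 3) * L ≡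
        -3 * (t ^ 3 + 9 * t ^ 2 - 9 * t - 9) * M [ZMOD (q : ℤ)] := by
  have := Fact.mk hp
  have := Fact.mk hq
  have hp2 := hp.two_le
  have hpZ : Prime (p : ℤ) := Nat.prime_iff_prime_int.1 hp
  have hp0 : ((p : ℤ) : ZMod p) = 0 := by simp
  have h3p : (3 : ZMod p) ≠ 0 := CubicOmega.three_ne hp3
  have h2p : (2 : ZMod p) ≠ 0 := by
    intro h0
    have h' : ((2 : ℕ) : ZMod p) = 0 := by exact_mod_cast h0
    rw [ZMod.natCast_eq_zero_iff] at h'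
    have := (Nat.prime_dvd_prime_iff_eq hp Nat.prime_two).1 h'
    omega
  have hMp : (M : ZMod p) ≠ 0 := by
    intro h0
    rw [ZMod.intCast_zmod_eq_zero_iff_dvd] at h0
    have hL : (p : ℤ) ∣ L := by
      apply hpZ.dvd_of_dvd_pow (n := 2)
      rw [show L ^ 2 = 4 * p - 27 * M ^ 2 by linarith]
      exact dvd_sub (Dvd.intro_left 4 rfl) (Dvd.dvd.mul_left (dvd_pow h0 two_ne_zero) _)
    obtain ⟨x, rfl⟩ := h0
    obtain ⟨y, rfl⟩ := hL
    have h4 : (4 : ℤ) = p * (y ^ 2 + 27 * x ^ 2) :=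
      mul_left_cancel₀ hpZ.ne_zero (by linear_combination h)
    have h5 : (p : ℤ) ∣ 2 := hpZ.dvd_of_dvd_pow (n := 2) ⟨_, by rw [← h4]; norm_num⟩
    have h6 : p ∣ 2 := by exact_mod_cast h5
    have := Nat.le_of_dvd (by norm_num) h6
    omega
  have hM6 : (((6 * M : ℤ) : ZMod p)) ≠ 0 := by
    push_cast
    rw [show (6 : ZMod p) = 2 * 3 by norm_num]
    exact mul_ne_zero (mul_ne_zero h2p h3p) hMp
  obtain ⟨r, hrdef⟩ : ∃ r, r = ((-(L + 3 * M) : ℤ) : ZMod p) * (((6 * M : ℤ) : ZMod p))⁻¹ := ⟨_, rfl⟩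
  rw [← hrdef]
  have hrM : r * (6 * M) = -(L + 3 * M) := by
    have : r * ((6 * M : ℤ) : ZMod p) = ((-(L + 3 * M) : ℤ) : ZMod p) := by
      rw [hrdef, mul_assoc, inv_mul_cancel₀ hM6, mul_one]
    push_cast at this
    exact this
  have hcast : (L : ZMod p) ^ 2 + 27 * (M : ZMod p) ^ 2 = 0 := by
    have := congrArg (Int.cast : ℤ → ZMod p) h
    push_cast at this
    rw [← this]; simp
  have hr : r ^ 2 + r + 1 = 0 := by
    push_cast at hM6
    have : (6 * (M : ZMod p)) ^ 2 * (r ^ 2 + r + 1) = 0 := by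
      linear_combination hcast + (r * (6 * M) - (L + 3 * M) + 6 * M) * hrM
    exact (mul_eq_zero.1 this).resolve_left (pow_ne_zero 2 hM6)
  obtain ⟨M', hM'⟩ := CubicOmega.Jz_three hp3 hr
  have hmod := CubicOmega.Jz_mod hp3 hr
  have hnorm := CubicOmega.Jz_norm hp3 hr
  have hqp : (q : ZMod p) ≠ 0 := by
    rw [Ne, ZMod.natCast_eq_zero_iff, Nat.prime_dvd_prime_iff_eq hp hq]; exact hpq
  have hcK : ∀ n : ℕ, n.Prime → n ≠ q → (n : AlgebraicClosure (ZMod q)) ≠ 0 := by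
    intro n hn hne h0
    rw [CharP.cast_eq_zero_iff _ q, Nat.prime_dvd_prime_iff_eq hq hn] at h0
    exact hne h0.symm
  have h3K : (3 : AlgebraicClosure (ZMod q)) ≠ 0 := by
    exact_mod_cast hcK 3 Nat.prime_three (by omega)
  have h2K : (2 : AlgebraicClosure (ZMod q)) ≠ 0 := by
    exact_mod_cast hcK 2 Nat.prime_two (by omega)
  obtain ⟨w, hw⟩ := CubicOmega.exists_w (K := AlgebraicClosure (ZMod q))
  obtain ⟨k, hk, hJ, hJ', hiff⟩ :=
    CubicOmega.combine hp3 hr (q := q) hw h3K (hcK p hp hpq) hqp hq9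
  rw [← hiff]
  generalize CubicOmega.Jz hp3 hr = Z at *
  obtain ⟨a, b⟩ := Z
  simp only at hM' hmod hnorm hJ hJ' hiff ⊢
  subst hM'
  push_cast at hJ hJ' hmod ⊢
  rw [CubicOmega.core hw h2K h3K hJ hJ' k hk]
  have hu := CubicOmega.uniq hp (L' := 2 * a - 3 * M') (M' := M') h
    (by linear_combination -4 * hnorm) (by
      rw [← ZMod.intCast_zmod_eq_zero_iff_dvd]
      push_cast
      apply mul_left_cancel₀ h3p
      linear_combination (-6 * (M : ZMod p)) * hmod + 3 * M' * hrM)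
  refine exists_congr fun t => ?_
  have key : ((t : AlgebraicClosure (ZMod q)) ^ 3 - 3 * t ^ 2 - 9 * t + 3) * (2 * a - 3 * M')
      + 3 * (t ^ 3 + 9 * t ^ 2 - 9 * t - 9) * M' = (((t ^ 3 - 3 * t ^ 2 - 9 * t + 3) *
      (2 * a - 3 * M') + 3 * (t ^ 3 + 9 * t ^ 2 - 9 * t - 9) * M' : ℤ) :
        AlgebraicClosure (ZMod q)) := by
    push_cast; ring
  rw [key, CharP.intCast_eq_zero_iff _ q, Int.modEq_comm, Int.modEq_iff_dvd]
  rcases hu with ⟨h1, h2⟩ | ⟨h1, h2⟩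
  · rw [h1, h2]
    ring_nf
  · rw [h1, h2, ← dvd_neg]
    ring_nf
end
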